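/- arXiv:2211.08515 — 10 statements merged into one kernel-verified Lean document; each statement's English description precedes it below -/
import Mathlib

section
/- Let p be a prime and let k be an integer with 1 ≤ k ≤ p−1. Integers x₁,…,x_k satisfy the system of k congruences C(2p−2+k, t) + C(2k−2, t)·x₁ + C(2k−3, t)·x₂ + ⋯ + C(k−1, t)·x_k ≡ 0 (mod p) for every t ∈ [0, k−1] if and only if x_s ≡ (−1)^{k−s+1}·C(k, k−s+1) (mod p) for every s ∈ [1, k]. In particular, the solution of this system modulo p is unique. -/
open Polynomial in
theorem aux_R {F : Type*} [Field F] (k : ℕ) (x : Fin k → F) :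
    (X - 1 : F[X]) ^ k ∣ (1 + ∑ i : Fin k, C (x i) * X ^ (k - (i : ℕ))) ↔
    (∀ i : Fin k, x i = (-1) ^ (k - (i : ℕ)) * ((k.choose (k - (i : ℕ))) : F)) := by
  set R : F[X] := 1 + ∑ i : Fin k, C (x i) * X ^ (k - (i : ℕ)) with hR
  have hc : ∀ i : Fin k, R.coeff (k - (i : ℕ)) = x i := by
    intro i
    have h1 : k - (i : ℕ) ≠ 0 := by omega
    rw [hR, coeff_add, finsetSum_coeff, Finset.sum_eq_single i]
    · simp [coeff_one, h1]
    · intro j _ hj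
      have : k - (i : ℕ) ≠ k - (j : ℕ) := by
        intro h; apply hj; ext; omega
      simp [coeff_X_pow, this]
    · simp
  have h0 : R.coeff 0 = 1 := by
    rw [hR, coeff_add, finsetSum_coeff, Finset.sum_eq_zero]
    · simp
    · intro j _
      have : 0 ≠ k - (j : ℕ) := by omega
      simp [coeff_X_pow, this]
  have hd : R.natDegree ≤ k := by
    apply (natDegree_add_le _ _).trans
    simp only [natDegree_one, zero_le, max_eq_right]
    apply natDegree_sum_le_of_forall_le
    intro i _
    exact (natDegree_C_mul_X_pow_le _ _).trans (by omega)
  have e : (1 - X : F[X]) ^ k = ((1 + X : F[X]) ^ k).comp (C (-1) * X) := by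
    simp [sub_eq_add_neg]
  have hb : ∀ n, ((1 - X : F[X]) ^ k).coeff n = (-1) ^ n * (k.choose n : F) := by
    intro n
    rw [e, comp_C_mul_X_coeff, coeff_one_add_X_pow, mul_comm]
  have hbd : ((1 - X : F[X]) ^ k).natDegree ≤ k := by
    rw [natDegree_le_iff_coeff_eq_zero]
    intro n hn
    rw [hb, Nat.choose_eq_zero_of_lt hn]; simp
  have hdv : (X - 1 : F[X]) ^ k ∣ (1 - X) ^ k := by
    apply pow_dvd_pow_of_dvd
    exact ⟨-1, by ring⟩
  have key : (X - 1 : F[X]) ^ k ∣ R ↔ R = (1 - X) ^ k := by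
    constructor
    · intro h
      rw [← sub_eq_zero]
      have h1 : (X - 1 : F[X]) ^ k ∣ R - (1 - X) ^ k := dvd_sub h hdv
      have h2 : (X : F[X]) ∣ R - (1 - X) ^ k := by
        rw [X_dvd_iff, coeff_sub, h0, hb]; simp
      have hcop : IsCoprime (X : F[X]) ((X - 1) ^ k) := by
        apply IsCoprime.pow_right
        exact ⟨1, -1, by ring⟩
      have h3 := hcop.mul_dvd h2 h1
      apply eq_zero_of_dvd_of_natDegree_lt h3
      have hm : (X - 1 : F[X]).Monic := by simpa using monic_X_sub_C (1 : F)
      have hm1 : (X - 1 : F[X]).natDegree = 1 := by simpa using natDegree_X_sub_C (1 : F)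
      rw [monic_X.natDegree_mul (hm.pow k), hm.natDegree_pow, hm1, natDegree_X]
      have := natDegree_sub_le_of_le hd hbd
      simp at this
      omega
    · intro h; rw [h]; exact hdv
  rw [key]
  constructor
  · intro h i
    rw [← hc, h, hb]
  · intro h
    ext n
    rcases Nat.eq_zero_or_pos n with rfl | hn
    · rw [h0, hb]; simp
    · by_cases hnk : n ≤ k
      · have := hc ⟨k - n, by omega⟩
        have h' := h ⟨k - n, by omega⟩
        simp only [Nat.sub_sub_self hnk] at this h'
        rw [this, hb, h']
      · rw [coeff_eq_zero_of_natDegree_lt (by omega), coeff_eq_zero_of_natDegree_lt (by omega)]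

/-- Lemma on the system of linear congruences: `x₁,…,x_k` (indexed here by `i : Fin k`
with `x_s = x ⟨s-1⟩`) satisfy
`C(2p-2+k, t) + ∑_{s=1}^{k} C(2k-1-s, t)·x_s ≡ 0 (mod p)` for all `t ∈ [0, k-1]`
iff `x_s ≡ (-1)^{k-s+1}·C(k, k-s+1) (mod p)` for all `s ∈ [1, k]`. -/
theorem stmt_2 (p k : ℕ) (hp : p.Prime) (hk1 : 1 ≤ k) (hk2 : k ≤ p - 1)
    (x : Fin k → ZMod p) :
    (∀ t : ℕ, t ≤ k - 1 →
        ((2 * p - 2 + k).choose t : ZMod p) +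
          ∑ i : Fin k, ((2 * k - 2 - (i : ℕ)).choose t : ZMod p) * x i = 0) ↔
    (∀ i : Fin k, x i = (-1) ^ (k - (i : ℕ)) * ((k.choose (k - (i : ℕ))) : ZMod p)) := by
  have : Fact p.Prime := ⟨hp⟩
  rw [← aux_R]
  open Polynomial in
  set R : (ZMod p)[X] := 1 + ∑ i : Fin k, C (x i) * X ^ (k - (i : ℕ)) with hR
  open Polynomial in
  let A : (ZMod p)[X] := (1 + X) ^ (2 * p - 2 + k) +
    ∑ i : Fin k, C (x i) * (1 + X) ^ (2 * k - 2 - (i : ℕ))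
  open Polynomial in
  have hA : (∀ t : ℕ, t ≤ k - 1 →
        ((2 * p - 2 + k).choose t : ZMod p) +
          ∑ i : Fin k, ((2 * k - 2 - (i : ℕ)).choose t : ZMod p) * x i = 0) ↔
      (X : (ZMod p)[X]) ^ k ∣ A := by
    rw [X_pow_dvd_iff]
    apply forall_congr'
    intro t
    have : t ≤ k - 1 ↔ t < k := by omega
    rw [this]
    simp only [A, coeff_add, finsetSum_coeff, coeff_C_mul, coeff_one_add_X_pow]
    simp only [mul_comm (x _)]
  open Polynomial in
  have hcop : ∀ m, IsCoprime ((X : (ZMod p)[X]) ^ k) ((1 + X) ^ m) := by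
    intro m
    apply IsCoprime.pow
    exact ⟨-1, 1, by ring⟩
  open Polynomial in
  have hcomp : (X - 1 : (ZMod p)[X]) ^ k ∣ R ↔ (X : (ZMod p)[X]) ^ k ∣ R.comp (1 + X) := by
    constructor
    · rintro ⟨D, hD⟩
      refine ⟨D.comp (1 + X), ?_⟩
      rw [hD]; simp
    · rintro ⟨D, hD⟩
      refine ⟨D.comp (X - 1), ?_⟩
      have := congrArg (fun q => q.comp (X - 1)) hD
      simpa [comp_assoc] using this
  open Polynomial in
  have hRc : R.comp (1 + X) = 1 + ∑ i : Fin k, C (x i) * (1 + X) ^ (k - (i : ℕ)) := by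
    simp [hR, Polynomial.sum_comp]
  open Polynomial in
  have hfrob : (1 + X : (ZMod p)[X]) ^ (2 * p) = (1 + X ^ p) ^ 2 := by
    rw [mul_comm, pow_mul, add_pow_char, one_pow]
  open Polynomial in
  have hmul : (1 + X) ^ 1 * A = (1 + X) ^ (k - 1) * R.comp (1 + X) +
      X ^ p * ((1 + X) ^ (k - 1) * (2 + X ^ p)) := by
    have e1 : (1 + X : (ZMod p)[X]) ^ 1 * (1 + X) ^ (2 * p - 2 + k)
        = (1 + X ^ p) ^ 2 * (1 + X) ^ (k - 1) := by
      rw [← hfrob, ← pow_add, ← pow_add]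
      congr 1
      have := hp.two_le
      omega
    have e2 : (1 + X : (ZMod p)[X]) ^ 1 * ∑ i : Fin k, C (x i) * (1 + X) ^ (2 * k - 2 - (i : ℕ))
        = (1 + X) ^ (k - 1) * ∑ i : Fin k, C (x i) * (1 + X) ^ (k - (i : ℕ)) := by
      rw [Finset.mul_sum, Finset.mul_sum]
      apply Finset.sum_congr rfl
      intro i _
      rw [mul_left_comm, mul_left_comm _ (C (x i)), ← pow_add, ← pow_add]
      congr 2
      omega
    rw [hRc]
    simp only [A]
    rw [mul_add, e1, e2]
    ring
  open Polynomial in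
  have hdm : ∀ m (B : (ZMod p)[X]), X ^ k ∣ (1 + X) ^ m * B ↔ X ^ k ∣ B := fun m B =>
    ⟨fun h => (hcop m).dvd_of_dvd_mul_left h, fun h => Dvd.dvd.mul_left h _⟩
  rw [hA, hcomp, ← hdm 1 A, hmul, dvd_add_left, hdm (k - 1)]
  exact Dvd.dvd.mul_right (pow_dvd_pow _ (by omega)) _
end

section
/- Let p be a prime, let k be an integer with 1 ≤ k ≤ p−1, let G = (ℤ/pℤ) ⊕ (ℤ/pℤ), and let S be a sequence over G of length |S| = 2p−2+k such that S has no nonempty zero-sum subsequence of length at most 2p−1−k. Then S has no zero-sum subsequence whose length lies in [1, 2p−1−k] ∪ [2p, 4p−2k−1]; equivalently, every nonempty zero-sum subsequence of S has length in [2p−k, 2p−1] ∪ [4p−2k, 2p−2+k]. -/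
open MvPolynomial in
theorem davenport_fintype {ι : Type*} [Fintype ι] {p : ℕ} [Fact p.Prime]
    (a : ι → ZMod p × ZMod p) (hs : 2 * p - 1 ≤ Fintype.card ι) :
    ∃ t : Finset ι, t.Nonempty ∧ ∑ i ∈ t, a i = 0 := by
  classical
  have hp : p.Prime := Fact.out
  have hp2 := hp.two_le
  have h1 : p - 1 ≠ 0 := by omega
  let f (b : ι → ZMod p) : MvPolynomial ι (ZMod p) := ∑ i, b i • X i ^ (p - 1)
  have hdeg (b : ι → ZMod p) : (f b).totalDegree ≤ p - 1 := by
    apply totalDegree_finsetSum_le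
    rintro i _
    exact (totalDegree_smul_le ..).trans (totalDegree_X_pow ..).le
  have hev (b : ι → ZMod p) (x : ι → ZMod p) :
      eval x (f b) = ∑ i with x i ≠ 0, b i := by
    simp [f, ZMod.pow_card_sub_one, Finset.sum_filter]
  let f₁ := f fun i => (a i).1
  let f₂ := f fun i => (a i).2
  have hpN : p ∣ Fintype.card {x : ι → ZMod p // eval x f₁ = 0 ∧ eval x f₂ = 0} := by
    apply char_dvd_card_solutions_of_add_lt p
    have := hdeg fun i => (a i).1
    have := hdeg fun i => (a i).2
    simp only [f₁, f₂]
    omega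
  let z : {x : ι → ZMod p // eval x f₁ = 0 ∧ eval x f₂ = 0} :=
    ⟨0, by simp only [f₁, f₂, hev]; simp⟩
  obtain ⟨x, hx⟩ := Fintype.exists_ne_of_one_lt_card (hp.one_lt.trans_le <|
    Nat.le_of_dvd (@Fintype.card_pos _ _ ⟨z⟩) hpN) z
  refine ⟨({i | x.1 i ≠ 0} : Finset ι), ?_, ?_⟩
  · rw [← Subtype.coe_ne_coe, Function.ne_iff] at hx
    obtain ⟨i, hi⟩ := hx
    exact ⟨i, by simpa [z] using hi⟩
  · have e1 := x.2.1
    have e2 := x.2.2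
    simp only [f₁, f₂, hev] at e1 e2
    ext
    · rw [Prod.fst_sum]; exact e1
    · rw [Prod.snd_sum]; exact e2

theorem davenport_multiset {p : ℕ} (hp : p.Prime) (T : Multiset (ZMod p × ZMod p))
    (hT : 2 * p - 1 ≤ Multiset.card T) : ∃ U ≤ T, U ≠ 0 ∧ U.sum = 0 := by
  classical
  have := Fact.mk hp
  obtain ⟨t, ht, h0⟩ := davenport_fintype (fun x : T => (x : ZMod p × ZMod p))
    (by simpa using hT)
  refine ⟨t.val.map (fun x : T => (x : ZMod p × ZMod p)), ?_, ?_, h0⟩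
  · conv_rhs => rw [← Multiset.map_univ_coe T]
    exact Multiset.map_le_map (Finset.val_le_iff.2 (Finset.subset_univ t))
  · simpa using ht.ne_empty

/-- If `S` over `(ℤ/pℤ)²` has length `2p-2+k` and no nonempty zero-sum subsequence of
length at most `2p-1-k`, then every nonempty zero-sum subsequence of `S` has length in
`[2p-k, 2p-1] ∪ [4p-2k, 2p-2+k]` (equivalently, no zero-sum subsequence has length in
`[1, 2p-1-k] ∪ [2p, 4p-2k-1]`). -/
theorem stmt_3 (p : ℕ) (hp : p.Prime) (k : ℕ) (hk1 : 1 ≤ k) (hk2 : k ≤ p - 1)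
    (S : Multiset (ZMod p × ZMod p)) (hlen : Multiset.card S = 2 * p - 2 + k)
    (hzs : ∀ T ≤ S, T ≠ 0 → Multiset.card T ≤ 2 * p - 1 - k → T.sum ≠ 0) :
    ∀ T ≤ S, T ≠ 0 → T.sum = 0 →
      (2 * p - k ≤ Multiset.card T ∧ Multiset.card T ≤ 2 * p - 1) ∨
      (4 * p - 2 * k ≤ Multiset.card T ∧ Multiset.card T ≤ 2 * p - 2 + k) := by
  intro T hT hT0 hTs
  have hc := Multiset.card_le_card hT
  have key : ∀ U ≤ T, U ≠ 0 → U.sum = 0 → 2 * p - k ≤ Multiset.card U := by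
    intro U hU hU0 hUs
    by_contra h
    exact hzs U (hU.trans hT) hU0 (by omega) hUs
  by_cases h : Multiset.card T ≤ 2 * p - 1
  · exact Or.inl ⟨key T le_rfl hT0 hTs, h⟩
  · right
    refine ⟨?_, by omega⟩
    obtain ⟨g, hg⟩ := Multiset.exists_mem_of_ne_zero hT0
    obtain ⟨R, rfl⟩ := Multiset.exists_cons_of_mem hg
    rw [Multiset.card_cons] at h
    obtain ⟨U, hU, hU0, hUs⟩ := davenport_multiset hp R (by omega)
    obtain ⟨V, rfl⟩ := Multiset.le_iff_exists_add.1 hU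
    have hV : (g ::ₘ V).sum = 0 := by
      simpa [Multiset.sum_cons, Multiset.sum_add, hUs] using hTs
    have k1 := key U (hU.trans (Multiset.le_cons_self _ _)) hU0 hUs
    have k2 := key (g ::ₘ V) (Multiset.cons_le_cons g (Multiset.le_add_left _ _))
      (Multiset.cons_ne_zero) hV
    simp only [Multiset.card_cons, Multiset.card_add] at k2 ⊢
    omega
end

section
/- Let p be a prime, let k be an integer with 1 ≤ k ≤ p−1, let G = (ℤ/pℤ) ⊕ (ℤ/pℤ), let ℓ = 2p−2+k, and let g : Fin ℓ → G be a sequence such that there is no subset I ⊆ Fin ℓ with 1 ≤ |I| ≤ 2p−1−k and ∑_{i∈I} g(i) = 0. Then the number of subsets I ⊆ Fin ℓ with |I| = 2p−1 and ∑_{i∈I} g(i) = 0 is congruent to k modulo p; in particular there are at least k such subsets, and for each such subset I the sequence (g(i))_{i∈I} is a minimal zero-sum sequence (it has no proper nonempty subset J ⊊ I with ∑_{i∈J} g(i) = 0). -/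
theorem aux_list {ι R : Type*} [DecidableEq ι] [CommRing R] (L : List (R × (ι → R))) :
    ∀ T : Finset ι, L.length < T.card →
    ∑ I ∈ T.powerset, (-1 : R) ^ I.card * (L.map (fun x => x.1 + ∑ i ∈ I, x.2 i)).prod = 0 := by
  induction hn : L.length generalizing L with
  | zero =>
    intro T hT
    have hL : L = [] := List.length_eq_zero_iff.mp hn
    subst hL
    have h := Finset.sum_powerset_neg_one_pow_card_of_nonempty (x := T)
      (Finset.card_pos.mp hT)
    have h2 := congrArg (Int.cast : ℤ → R) h
    simpa using h2
  | succ d ih =>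
    intro T hT
    obtain ⟨x, L, rfl⟩ : ∃ x L', L = x :: L' := by
      cases L with
      | nil => simp at hn
      | cons x L => exact ⟨x, L, rfl⟩
    simp only [List.length_cons, Nat.add_right_cancel_iff] at hn
    have e1 : ∀ I ∈ T.powerset, (-1 : R) ^ I.card *
        ((x :: L).map (fun x => x.1 + ∑ i ∈ I, x.2 i)).prod =
        x.1 * ((-1 : R) ^ I.card * (L.map (fun x => x.1 + ∑ i ∈ I, x.2 i)).prod) +
        ∑ i ∈ T, if i ∈ I then x.2 i *
          ((-1 : R) ^ I.card * (L.map (fun x => x.1 + ∑ i ∈ I, x.2 i)).prod) else 0 := by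
      intro I hI
      rw [← Finset.sum_filter, Finset.filter_mem_eq_inter,
        Finset.inter_eq_right.mpr (Finset.mem_powerset.mp hI), ← Finset.sum_mul]
      simp only [List.map_cons, List.prod_cons]
      ring
    rw [Finset.sum_congr rfl e1, Finset.sum_add_distrib, ← Finset.mul_sum,
      ih L hn T (by omega), mul_zero, zero_add, Finset.sum_comm]
    apply Finset.sum_eq_zero
    intro i hi
    conv_lhs => rw [← Finset.insert_erase hi]
    rw [Finset.sum_powerset_insert (Finset.notMem_erase i T)]
    have z : ∀ I ∈ (T.erase i).powerset, i ∉ I := by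
      intro I hI h
      exact Finset.notMem_erase i T (Finset.mem_powerset.mp hI h)
    rw [Finset.sum_eq_zero (fun I hI => if_neg (z I hI)), zero_add]
    have e2 : ∀ I ∈ (T.erase i).powerset,
        (if i ∈ insert i I then x.2 i * ((-1 : R) ^ (insert i I).card *
          (L.map (fun x => x.1 + ∑ j ∈ insert i I, x.2 j)).prod) else 0) =
        (-x.2 i) * ((-1 : R) ^ I.card *
          ((L.map (fun x => (x.1 + x.2 i, x.2))).map
            (fun x => x.1 + ∑ j ∈ I, x.2 j)).prod) := by
      intro I hI
      rw [if_pos (Finset.mem_insert_self i I), Finset.card_insert_of_notMem (z I hI),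
        List.map_map]
      have : (fun x : R × (ι → R) => x.1 + ∑ j ∈ insert i I, x.2 j) =
        (fun x : R × (ι → R) => x.1 + ∑ j ∈ I, x.2 j) ∘ (fun x : R × (ι → R) => (x.1 + x.2 i, x.2)) := by
        funext y
        simp [Finset.sum_insert (z I hI), add_assoc]
      rw [this]
      ring
    rw [Finset.sum_congr rfl e2, ← Finset.mul_sum, ih _ (by simpa using hn) (T.erase i)
      (by rw [Finset.card_erase_of_mem hi]; omega), mul_zero]

theorem aux_ind (p : ℕ) [Fact p.Prime] (x : ZMod p × ZMod p) :
    (if x = 0 then (1 : ZMod p) else 0) = (1 - x.1 ^ (p - 1)) * (1 - x.2 ^ (p - 1)) := by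
  have hp : p.Prime := Fact.out
  have h1 : p - 1 ≠ 0 := by have := hp.two_le; omega
  obtain ⟨a, b⟩ := x
  by_cases ha : a = 0
  · by_cases hb : b = 0
    · simp [ha, hb, h1]
    · simp [ha, hb, h1, ZMod.pow_card_sub_one_eq_one hb]
  · simp [ha, ZMod.pow_card_sub_one_eq_one ha]

theorem aux_main (p : ℕ) [Fact p.Prime] {ι : Type*} [DecidableEq ι]
    (g : ι → ZMod p × ZMod p) (T : Finset ι) (S : Finset ℕ) (r : ℕ → ZMod p)
    (h : 2 * (p - 1) + S.card < T.card) :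
    ∑ I ∈ T.powerset, (-1 : ZMod p) ^ I.card *
      ((if ∑ i ∈ I, g i = 0 then 1 else 0) * ∏ t ∈ S, (r t + (I.card : ZMod p))) = 0 := by
  have key : ∀ u v : ℕ, u ≤ p - 1 → v ≤ p - 1 →
      ∑ I ∈ T.powerset, (-1 : ZMod p) ^ I.card *
      ((∑ i ∈ I, (g i).1) ^ u * (∑ i ∈ I, (g i).2) ^ v *
        ∏ t ∈ S, (r t + (I.card : ZMod p))) = 0 := by
    intro u v hu hv
    have := aux_list (List.replicate u ((0 : ZMod p), fun i => (g i).1) ++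
      List.replicate v ((0 : ZMod p), fun i => (g i).2) ++
      S.toList.map (fun t => (r t, fun _ => (1 : ZMod p)))) T
      (by simp; omega)
    rw [← this]
    refine Finset.sum_congr rfl fun I _ => ?_
    simp [Function.comp_def, Finset.prod_map_toList, mul_assoc]
  have e : ∀ I ∈ T.powerset, (-1 : ZMod p) ^ I.card *
      ((if ∑ i ∈ I, g i = 0 then 1 else 0) * ∏ t ∈ S, (r t + (I.card : ZMod p))) =
      (-1 : ZMod p) ^ I.card * ((∑ i ∈ I, (g i).1) ^ 0 * (∑ i ∈ I, (g i).2) ^ 0 *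
        ∏ t ∈ S, (r t + (I.card : ZMod p)))
      - (-1 : ZMod p) ^ I.card * ((∑ i ∈ I, (g i).1) ^ (p - 1) * (∑ i ∈ I, (g i).2) ^ 0 *
        ∏ t ∈ S, (r t + (I.card : ZMod p)))
      - (-1 : ZMod p) ^ I.card * ((∑ i ∈ I, (g i).1) ^ 0 * (∑ i ∈ I, (g i).2) ^ (p - 1) *
        ∏ t ∈ S, (r t + (I.card : ZMod p)))
      + (-1 : ZMod p) ^ I.card * ((∑ i ∈ I, (g i).1) ^ (p - 1) *
        (∑ i ∈ I, (g i).2) ^ (p - 1) * ∏ t ∈ S, (r t + (I.card : ZMod p))) := by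
    intro I _
    rw [aux_ind, Prod.fst_sum, Prod.snd_sum]
    ring
  rw [Finset.sum_congr rfl e, Finset.sum_add_distrib, Finset.sum_sub_distrib,
    Finset.sum_sub_distrib, key _ _ (by omega) (by omega), key _ _ (by omega) (by omega),
    key _ _ (by omega) (by omega), key _ _ (by omega) (by omega)]
  ring

theorem aux_cast_ne (p a : ℕ) (h1 : a % p ≠ 0) : (a : ZMod p) ≠ 0 := by
  intro h
  rw [ZMod.natCast_eq_zero_iff] at h
  exact h1 (Nat.mod_eq_zero_of_dvd h)

/-- No zero-sum subset of size at least `2p`. -/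
theorem aux_no_long (p k : ℕ) [Fact p.Prime] (hk2 : k ≤ p - 1) {ι : Type*} [DecidableEq ι]
    (g : ι → ZMod p × ZMod p)
    (hzs : ∀ I : Finset ι, I.Nonempty → I.card ≤ 2 * p - 1 - k → ∑ i ∈ I, g i ≠ 0)
    (T : Finset ι) (h1 : 2 * p ≤ T.card) (h2 : T.card ≤ 2 * p - 2 + k) :
    ∑ i ∈ T, g i ≠ 0 := by
  intro hT
  have hp : p.Prime := Fact.out
  have hp2 := hp.two_le
  have hp3 : 3 ≤ p := by omega
  -- interior sizes
  have hint : ∀ I ∈ T.powerset, ∑ i ∈ I, g i = 0 → I ≠ ∅ → I ≠ T →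
      2 * p - k ≤ I.card ∧ I.card + (2 * p - k) ≤ T.card := by
    intro I hI h0 hne hneT
    have hIT := Finset.mem_powerset.mp hI
    have a1 : 2 * p - k ≤ I.card := by
      by_contra hc
      exact hzs I (Finset.nonempty_iff_ne_empty.mpr hne) (by omega) h0
    have hs := Finset.sum_sdiff (f := g) hIT
    rw [h0, hT, add_zero] at hs
    have hcard := Finset.card_sdiff_add_card_eq_card hIT
    have a2 : 2 * p - k ≤ (T \ I).card := by
      by_contra hc
      refine hzs (T \ I) ?_ (by omega) hs
      rw [Finset.sdiff_nonempty]
      exact fun hh => hneT (Finset.Subset.antisymm hIT hh)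
    omega
  have hTne : T ≠ ∅ := by
    intro h; simp [h] at h1; omega
  by_cases hm : T.card = 2 * p
  · have hmain := aux_main p g T ∅ (fun _ => 0) (by simp; omega)
    rw [← Finset.sum_subset (s₁ := {∅, T})] at hmain
    · rw [Finset.sum_pair hTne.symm] at hmain
      simp [hT, hm] at hmain
      have : ((2 : ℕ) : ZMod p) = 0 := by push_cast; rw [← hmain]; norm_num
      exact aux_cast_ne p 2 (by rw [Nat.mod_eq_of_lt (by omega)]; norm_num) this
    · intro I hI
      simp at hI
      rcases hI with rfl | rfl <;> simp
    · intro I hI hI2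
      simp at hI2
      rw [if_neg]
      · simp
      · intro h0
        have := hint I hI h0 hI2.1 hI2.2
        omega
  · have hmain := aux_main p g T (insert T.card (Finset.Icc (2 * p - k) (T.card - (2 * p - k))))
      (fun t => -(t : ZMod p)) (by
        have := Finset.card_insert_le T.card (Finset.Icc (2 * p - k) (T.card - (2 * p - k)))
        rw [Nat.card_Icc] at this
        omega)
    rw [Finset.sum_eq_single ∅] at hmain
    · simp only [Finset.sum_empty, if_true, Finset.card_empty, pow_zero, one_mul, Nat.cast_zero,
        add_zero] at hmain
      rw [Finset.prod_eq_zero_iff] at hmain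
      obtain ⟨t, ht, ht0⟩ := hmain
      rw [neg_eq_zero] at ht0
      refine aux_cast_ne p t ?_ ht0
      rw [Finset.mem_insert, Finset.mem_Icc] at ht
      rcases ht with rfl | ht
      · have : T.card = (T.card - 2 * p) + p * 2 := by omega
        rw [this, Nat.add_mul_mod_self_left, Nat.mod_eq_of_lt (by omega)]
        omega
      · have : t = (t - p) + p := by omega
        rw [this, Nat.add_mod_right, Nat.mod_eq_of_lt (by omega)]
        omega
    · intro I hI hne
      by_cases h0 : ∑ i ∈ I, g i = 0
      · rw [Finset.prod_eq_zero (i := I.card)]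
        · simp
        · by_cases hIT : I = T
          · simp [hIT]
          · have := hint I hI h0 hne hIT
            rw [Finset.mem_insert, Finset.mem_Icc]
            omega
        · simp
      · simp [h0]
    · intro h; simp at h

/-- If `g : Fin (2p-2+k) → (ℤ/pℤ)²` has no nonempty zero-sum subset of size at most
`2p-1-k`, then the number of zero-sum subsets of size `2p-1` is `≡ k (mod p)`; in
particular there are at least `k` of them, and each is a minimal zero-sum sequence. -/
theorem stmt_4 (p k : ℕ) (hp : p.Prime) (hk1 : 1 ≤ k) (hk2 : k ≤ p - 1)
    (g : Fin (2 * p - 2 + k) → ZMod p × ZMod p)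
    (hzs : ∀ I : Finset (Fin (2 * p - 2 + k)), I.Nonempty → I.card ≤ 2 * p - 1 - k →
      ∑ i ∈ I, g i ≠ 0) :
    ((Finset.univ.filter (fun I : Finset (Fin (2 * p - 2 + k)) =>
        I.card = 2 * p - 1 ∧ ∑ i ∈ I, g i = 0)).card ≡ k [MOD p]) ∧
    k ≤ (Finset.univ.filter (fun I : Finset (Fin (2 * p - 2 + k)) =>
        I.card = 2 * p - 1 ∧ ∑ i ∈ I, g i = 0)).card ∧
    (∀ I : Finset (Fin (2 * p - 2 + k)), I.card = 2 * p - 1 → ∑ i ∈ I, g i = 0 →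
      ∀ J ⊂ I, J.Nonempty → ∑ i ∈ J, g i ≠ 0) := by
  haveI : Fact p.Prime := ⟨hp⟩
  have hp2 := hp.two_le
  have hmod : ((Finset.univ.filter (fun I : Finset (Fin (2 * p - 2 + k)) =>
        I.card = 2 * p - 1 ∧ ∑ i ∈ I, g i = 0)).card ≡ k [MOD p]) := by
    set F := Finset.univ.filter (fun I : Finset (Fin (2 * p - 2 + k)) =>
        I.card = 2 * p - 1 ∧ ∑ i ∈ I, g i = 0) with hF
    have hmain := aux_main p g Finset.univ (Finset.range (k - 1)) (fun t => (t : ZMod p) + 2)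
      (by simp; omega)
    have hcast : ((2 * p - 1 : ℕ) : ZMod p) = -1 := by
      rw [Nat.cast_sub (by omega)]; simp
    have hE : (∅ : Finset (Fin (2 * p - 2 + k))) ∉ F := by
      simp [hF]; omega
    rw [← Finset.sum_subset (s₁ := insert ∅ F), Finset.sum_insert hE] at hmain
    · have e : ∀ I ∈ F, (-1 : ZMod p) ^ I.card *
          ((if ∑ i ∈ I, g i = 0 then 1 else 0) *
            ∏ t ∈ Finset.range (k - 1), ((t : ZMod p) + 2 + (I.card : ZMod p))) =
          - ∏ t ∈ Finset.range (k - 1), ((t : ZMod p) + 1) := by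
        intro I hI
        rw [hF, Finset.mem_filter] at hI
        rw [hI.2.1, if_pos hI.2.2, hcast, Odd.neg_one_pow ⟨p - 1, by omega⟩, one_mul, neg_one_mul]
        congr 1
        refine Finset.prod_congr rfl fun t _ => ?_
        ring
      rw [Finset.sum_congr rfl e, Finset.sum_const, nsmul_eq_mul] at hmain
      simp only [Finset.sum_empty, if_true, Finset.card_empty, pow_zero, one_mul, Nat.cast_zero,
        add_zero] at hmain
      have hA : ∏ t ∈ Finset.range (k - 1), ((t : ZMod p) + 2) =
          (k : ZMod p) * ∏ t ∈ Finset.range (k - 1), ((t : ZMod p) + 1) := by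
        have a := Finset.prod_range_succ (fun t : ℕ => (t : ZMod p) + 1) (k - 1)
        rw [Finset.prod_range_succ'] at a
        have hk : ((k - 1 : ℕ) : ZMod p) + 1 = k := by
          rw [Nat.cast_sub hk1]; simp
        rw [hk] at a
        simp only [Nat.cast_add, Nat.cast_one, Nat.cast_zero, zero_add, mul_one] at a
        rw [mul_comm, ← a]
        refine Finset.prod_congr rfl fun t _ => ?_
        ring
      have hB : ∏ t ∈ Finset.range (k - 1), ((t : ZMod p) + 1) ≠ 0 := by
        rw [Finset.prod_ne_zero_iff]
        intro t ht
        rw [Finset.mem_range] at ht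
        have := aux_cast_ne p (t + 1) (by rw [Nat.mod_eq_of_lt (by omega)]; omega)
        exact_mod_cast this
      rw [← ZMod.natCast_eq_natCast_iff]
      rw [hA] at hmain
      apply mul_right_cancel₀ hB
      linear_combination -hmain
    · intro I _; simp
    · intro I _ hI
      rw [Finset.mem_insert, not_or] at hI
      by_cases h0 : ∑ i ∈ I, g i = 0
      · have hlow : 2 * p - k ≤ I.card := by
          by_contra hc
          exact hzs I (Finset.nonempty_iff_ne_empty.mpr hI.1) (by omega) h0
        have hle : I.card ≤ 2 * p - 2 + k := by
          simpa using Finset.card_le_univ I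
        have hup : I.card < 2 * p := by
          by_contra hc
          exact aux_no_long p k hk2 g hzs I (by omega) hle h0
        have hne : I.card ≠ 2 * p - 1 := by
          intro h
          exact hI.2 (by rw [hF, Finset.mem_filter]; exact ⟨Finset.mem_univ _, h, h0⟩)
        rw [Finset.prod_eq_zero (i := 2 * p - 2 - I.card)]
        · simp
        · rw [Finset.mem_range]; omega
        · have : (((2 * p - 2 - I.card) + 2 + I.card : ℕ) : ZMod p) = ((2 * p : ℕ) : ZMod p) := by
            congr 1; omega
          push_cast at this
          rw [this]; simp
      · simp [h0]
  refine ⟨hmod, ?_, ?_⟩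
  · have h := hmod
    unfold Nat.ModEq at h
    rw [Nat.mod_eq_of_lt (a := k) (by omega)] at h
    calc k = _ := h.symm
      _ ≤ _ := Nat.mod_le _ _
  · intro I hc h0 J hJ hne hJ0
    have hs := Finset.sum_sdiff (f := g) hJ.subset
    rw [h0, hJ0, add_zero] at hs
    have hcard := Finset.card_sdiff_add_card_eq_card hJ.subset
    have a1 : 2 * p - k ≤ J.card := by
      by_contra hc
      exact hzs J hne (by omega) hJ0
    exact hzs (I \ J) (Finset.sdiff_nonempty.mpr hJ.2) (by omega) hs
end

section
/- Let p be a prime, let k be an integer with 2 ≤ k ≤ p−1, let G = (ℤ/pℤ) ⊕ (ℤ/pℤ), and let S be a sequence over G of length |S| = 2p−2+k such that S has no nonempty zero-sum subsequence of length at most 2p−1−k. Then the sum σ(S) of all terms of S is nonzero. -/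
theorem alt_sum {F ι : Type*} [CommRing F] [DecidableEq ι] (L : List (F × (ι → F))) :
    ∀ s : Finset ι, L.length < s.card →
    ∑ T ∈ s.powerset, (-1 : F) ^ T.card * (L.map (fun q => q.1 + ∑ i ∈ T, q.2 i)).prod = 0 := by
  suffices H : ∀ n : ℕ, ∀ L : List (F × (ι → F)), L.length = n → ∀ s : Finset ι, n < s.card →
      ∑ T ∈ s.powerset, (-1 : F) ^ T.card * (L.map (fun q => q.1 + ∑ i ∈ T, q.2 i)).prod = 0 from
    fun s hs => H _ L rfl s hs
  intro n
  induction n with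
  | zero =>
    intro L hL s hs
    obtain rfl := List.length_eq_zero_iff.1 hL
    have h := Finset.sum_powerset_neg_one_pow_card_of_nonempty (Finset.card_pos.1 hs)
    have h2 := congrArg (Int.cast : ℤ → F) h
    push_cast at h2
    simpa using h2
  | succ n ih =>
    intro L hL s hs
    match L, hL with
    | q :: R, hL =>
      have hR : R.length = n := by simpa using hL
      have h0 := ih R hR s (by omega)
      have key : ∀ i ∈ s, ∑ T ∈ s.powerset, (if i ∈ T then
          (-1 : F) ^ T.card * (R.map (fun q => q.1 + ∑ i ∈ T, q.2 i)).prod else 0) = 0 := by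
        intro i hi
        have hc : (s.erase i).card + 1 = s.card := Finset.card_erase_add_one hi
        have h1 := ih (R.map (fun q => (q.1 + q.2 i, q.2))) (by simpa using hR) (s.erase i)
          (by omega)
        conv_lhs => rw [← Finset.insert_erase hi]
        rw [Finset.sum_powerset_insert (Finset.notMem_erase i s)]
        rw [Finset.sum_eq_zero, zero_add, ← neg_zero, ← h1, ← Finset.sum_neg_distrib]
        · apply Finset.sum_congr rfl
          intro T hT
          have hiT : i ∉ T := fun h => Finset.notMem_erase i s (Finset.mem_powerset.1 hT h)
          rw [if_pos (Finset.mem_insert_self _ _), Finset.card_insert_of_notMem hiT, pow_succ,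
            List.map_map]
          have : (R.map (fun q => q.1 + ∑ j ∈ insert i T, q.2 j)) =
              R.map ((fun q : F × (ι → F) => q.1 + ∑ i ∈ T, q.2 i) ∘
                fun q => (q.1 + q.2 i, q.2)) := by
            apply List.map_congr_left
            intro q _
            simp [Finset.sum_insert hiT, add_assoc]
          rw [this]
          ring
        · intro T hT
          have hiT : i ∉ T := fun h => Finset.notMem_erase i s (Finset.mem_powerset.1 hT h)
          rw [if_neg hiT]
      have e : ∀ T ∈ s.powerset, (-1 : F) ^ T.card *
          ((q :: R).map (fun q => q.1 + ∑ i ∈ T, q.2 i)).prod =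
          q.1 * ((-1 : F) ^ T.card * (R.map (fun q => q.1 + ∑ i ∈ T, q.2 i)).prod) +
          ∑ i ∈ s, q.2 i * (if i ∈ T then
          (-1 : F) ^ T.card * (R.map (fun q => q.1 + ∑ i ∈ T, q.2 i)).prod else 0) := by
        intro T hT
        have hT' := Finset.mem_powerset.1 hT
        simp only [mul_ite, mul_zero]
        rw [← Finset.sum_filter, Finset.filter_mem_eq_inter, Finset.inter_eq_right.2 hT',
          ← Finset.sum_mul, List.map_cons, List.prod_cons]
        ring
      rw [Finset.sum_congr rfl e, Finset.sum_add_distrib, ← Finset.mul_sum, h0, mul_zero, zero_add,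
        Finset.sum_comm]
      apply Finset.sum_eq_zero
      intro i hi
      rw [← Finset.mul_sum, key i hi, mul_zero]

theorem main_aux {ι : Type*} [Fintype ι] [DecidableEq ι] (p : ℕ) (hp : p.Prime) (k : ℕ)
    (hk1 : 2 ≤ k) (hk2 : k ≤ p - 1) (g : ι → ZMod p × ZMod p)
    (hlen : Fintype.card ι = 2 * p - 2 + k)
    (hzs : ∀ T : Finset ι, T.Nonempty → T.card ≤ 2 * p - 1 - k → ∑ i ∈ T, g i ≠ 0) :
    ∑ i, g i ≠ 0 := by
  intro hsum
  have := Fact.mk hp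
  have hp3 : 3 ≤ p := by omega
  let C : List (ZMod p) := (Finset.univ.erase (0 : ZMod p)).toList
  have hC : C.length = p - 1 := by simp [C, ZMod.card]
  have hCm : ∀ c, c ∈ C ↔ c ≠ 0 := by simp [C]
  let L : List (ZMod p × (ι → ZMod p)) :=
    C.map (fun c => (c, fun i => (g i).1)) ++ (C.map (fun c => (c, fun i => (g i).2)) ++
      (List.range (k - 2)).map (fun j => (-((j + 1 : ℕ) : ZMod p), fun _ => 1)))
  have hL := alt_sum L Finset.univ (by
    simp only [L, List.length_append, List.length_map, hC, List.length_range, Finset.card_univ]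
    omega)
  have hLz : ∀ T : Finset ι, (L.map (fun q => q.1 + ∑ i ∈ T, q.2 i)).prod ≠ 0 →
      ∑ i ∈ T, g i = 0 ∧ ∀ j < k - 2, (T.card : ZMod p) ≠ ((j + 1 : ℕ) : ZMod p) := by
    intro T hT
    have hT0 : ∀ q ∈ L, q.1 + ∑ i ∈ T, q.2 i ≠ 0 := by
      intro q hq h
      exact hT (List.prod_eq_zero (List.mem_map.2 ⟨q, hq, h⟩))
    refine ⟨?_, ?_⟩
    · ext
      · rw [Prod.fst_sum]
        by_contra h
        refine hT0 (-∑ i ∈ T, (g i).1, fun i => (g i).1) ?_ (by simp)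
        apply List.mem_append_left
        exact List.mem_map.2 ⟨_, (hCm _).2 (neg_ne_zero.2 h), rfl⟩
      · rw [Prod.snd_sum]
        by_contra h
        refine hT0 (-∑ i ∈ T, (g i).2, fun i => (g i).2) ?_ (by simp)
        apply List.mem_append_right
        apply List.mem_append_left
        exact List.mem_map.2 ⟨_, (hCm _).2 (neg_ne_zero.2 h), rfl⟩
    · intro j hj h
      refine hT0 (-((j + 1 : ℕ) : ZMod p), fun _ => 1) ?_ (by simp [h])
      apply List.mem_append_right
      apply List.mem_append_right
      exact List.mem_map.2 ⟨j, List.mem_range.2 hj, rfl⟩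
  have hbase : (L.map (fun q => q.1 + ∑ i ∈ (∅ : Finset ι), q.2 i)).prod ≠ 0 := by
    apply List.prod_ne_zero
    intro h
    obtain ⟨q, hq, h⟩ := List.mem_map.1 h
    simp only [Finset.sum_empty, add_zero] at h
    simp only [L, List.mem_append, List.mem_map, List.mem_range] at hq
    rcases hq with ⟨c, hc, rfl⟩ | ⟨c, hc, rfl⟩ | ⟨j, hj, rfl⟩
    · exact (hCm c).1 hc h
    · exact (hCm c).1 hc h
    · simp only [neg_eq_zero] at h
      rw [ZMod.natCast_eq_zero_iff] at h
      exact absurd (Nat.le_of_dvd (by omega) h) (by omega)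
  have hne : (∅ : Finset ι) ≠ Finset.univ := by
    intro h
    have := congrArg Finset.card h
    rw [Finset.card_univ, hlen, Finset.card_empty] at this
    omega
  have hother : ∀ T : Finset ι, T ≠ ∅ → T ≠ Finset.univ →
      (L.map (fun q => q.1 + ∑ i ∈ T, q.2 i)).prod = 0 := by
    intro T h1 h2
    by_contra h
    obtain ⟨hz, hj⟩ := hLz T h
    have a1 : ¬ T.card ≤ 2 * p - 1 - k := fun h => hzs T (Finset.nonempty_iff_ne_empty.2 h1) h hz
    have hz2 : ∑ i ∈ Tᶜ, g i = 0 := by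
      have := Finset.sum_add_sum_compl T g
      rwa [hz, hsum, zero_add] at this
    have a2 : ¬ Tᶜ.card ≤ 2 * p - 1 - k := fun h => hzs Tᶜ
      (Finset.nonempty_iff_ne_empty.2 (by simpa using h2)) h hz2
    have a3 := Finset.card_add_card_compl T
    rw [hlen] at a3
    apply hj (T.card - p - 1) (by omega)
    have : T.card = (T.card - p - 1 + 1) + p := by omega
    conv_lhs => rw [this]
    push_cast
    simp
  rw [Finset.powerset_univ, ← Finset.sum_subset (Finset.subset_univ {∅, Finset.univ}),
    Finset.sum_pair hne] at hL
  · by_cases hk : k = 2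
    · subst hk
      have hu : ∀ q ∈ L, q.1 + ∑ i, q.2 i = q.1 + ∑ i ∈ (∅ : Finset ι), q.2 i := by
        intro q hq
        have h1 := congrArg Prod.fst hsum
        have h2 := congrArg Prod.snd hsum
        rw [Prod.fst_sum] at h1
        rw [Prod.snd_sum] at h2
        simp only [L, List.mem_append, List.mem_map, List.mem_range] at hq
        rcases hq with ⟨c, hc, rfl⟩ | ⟨c, hc, rfl⟩ | ⟨j, hj, rfl⟩
        · simpa using h1
        · simpa using h2
        · omega
      rw [List.map_congr_left hu, Finset.card_univ, hlen, Finset.card_empty, pow_zero,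
        Even.neg_one_pow (n := 2 * p - 2 + 2) ⟨p, by omega⟩, ← add_mul] at hL
      rcases mul_eq_zero.1 hL with h | h
      · have : ((2 : ℕ) : ZMod p) = 0 := by rw [← h]; norm_num
        rw [ZMod.natCast_eq_zero_iff] at this
        exact absurd (Nat.le_of_dvd (by omega) this) (by omega)
      · exact hbase h
    · have : (L.map (fun q => q.1 + ∑ i, q.2 i)).prod = 0 := by
        by_contra h
        refine (hLz _ h).2 (k - 3) (by omega) ?_
        rw [Finset.card_univ, hlen]
        have : 2 * p - 2 + k = (k - 3 + 1) + p + p := by omega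
        rw [this]
        push_cast
        simp
      rw [this, mul_zero, add_zero] at hL
      exact hbase (by simpa using hL)
  · intro T _ hT
    simp only [Finset.mem_insert, Finset.mem_singleton, not_or] at hT
    rw [hother T hT.1 hT.2, mul_zero]

/-- If `S` over `(ℤ/pℤ)²` has length `2p-2+k` (with `2 ≤ k ≤ p-1`) and no nonempty
zero-sum subsequence of length at most `2p-1-k`, then `σ(S) ≠ 0`. -/
theorem stmt_5 (p : ℕ) (hp : p.Prime) (k : ℕ) (hk1 : 2 ≤ k) (hk2 : k ≤ p - 1)
    (S : Multiset (ZMod p × ZMod p)) (hlen : Multiset.card S = 2 * p - 2 + k)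
    (hzs : ∀ T ≤ S, T ≠ 0 → Multiset.card T ≤ 2 * p - 1 - k → T.sum ≠ 0) :
    S.sum ≠ 0 := by
  classical
  have hS : (Finset.univ : Finset S).val.map (fun x : S => x.1) = S := Multiset.map_univ_coe S
  have := main_aux (ι := S) p hp k hk1 hk2 (fun x => x.1) (by rw [Multiset.card_coe, hlen]) (by
    intro T hT hc
    refine hzs (T.val.map (fun x : S => x.1)) ?_ ?_ (by simpa using hc)
    · conv_rhs => rw [← hS]
      exact Multiset.map_le_map (Finset.val_le_iff.2 (Finset.subset_univ T))
    · simpa using hT.ne_empty)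
  rw [← hS]
  exact this
end

section
/- Let p be a prime, let k be an integer with 1 ≤ k ≤ p−2, let G = (ℤ/pℤ) ⊕ (ℤ/pℤ), and let S be a sequence over G of length |S| = 2p−2+k such that S has no nonempty zero-sum subsequence of length at most 2p−1−k. If (e₁,e₂) is a basis of G and S = e₁^[p−1] · e₂^[p−1] · T for some sequence T over G, then T = (e₁+e₂)^[k], i.e., S = e₁^[p−1] · e₂^[p−1] · (e₁+e₂)^[k]. -/
lemma aux_davenport (p : ℕ) [Fact p.Prime] (Z : Multiset (ZMod p × ZMod p))
    (hZ : 2 * p - 1 ≤ Multiset.card Z) : ∃ N ≤ Z, N ≠ 0 ∧ N.sum = 0 := by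
  classical
  have hp2 := (Fact.out : p.Prime).two_le
  let f₁ : MvPolynomial Z.ToType (ZMod p) := ∑ i : Z.ToType, (i.1).1 • MvPolynomial.X i ^ (p - 1)
  let f₂ : MvPolynomial Z.ToType (ZMod p) := ∑ i : Z.ToType, (i.1).2 • MvPolynomial.X i ^ (p - 1)
  have hdeg : f₁.totalDegree + f₂.totalDegree < Fintype.card Z.ToType := by
    calc
      _ ≤ (p - 1) + (p - 1) := by
        gcongr <;> apply MvPolynomial.totalDegree_finsetSum_le <;> rintro i _
        · exact (MvPolynomial.totalDegree_smul_le ..).trans (MvPolynomial.totalDegree_X_pow ..).le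
        · exact (MvPolynomial.totalDegree_smul_le ..).trans (MvPolynomial.totalDegree_X_pow ..).le
      _ < 2 * p - 1 := by omega
      _ ≤ _ := by simpa using hZ
  set N := Fintype.card {x // MvPolynomial.eval x f₁ = 0 ∧ MvPolynomial.eval x f₂ = 0} with hN
  let zero_sol : {x // MvPolynomial.eval x f₁ = 0 ∧ MvPolynomial.eval x f₂ = 0} :=
    ⟨0, by
      have : p - 1 ≠ 0 := by omega
      simp [f₁, f₂, map_sum, this]⟩
  have hN₀ : 0 < N := @Fintype.card_pos _ _ ⟨zero_sol⟩
  have hpN : p ∣ N := char_dvd_card_solutions_of_add_lt p hdeg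
  obtain ⟨x, hx⟩ := Fintype.exists_ne_of_one_lt_card ((Fact.out : p.Prime).one_lt.trans_le <|
    Nat.le_of_dvd hN₀ hpN) zero_sol
  let t : Finset Z.ToType := Finset.univ.filter (fun a => x.1 a ≠ 0)
  refine ⟨t.val.map (fun i => i.1), ?_, ?_, ?_⟩
  · calc t.val.map (fun i => i.1) ≤ (Finset.univ : Finset Z.ToType).val.map (fun i => i.1) :=
        Multiset.map_le_map (Finset.val_le_iff.2 (Finset.filter_subset _ _))
      _ = Z := Multiset.map_univ_coe Z
  · rw [← Subtype.coe_ne_coe, Function.ne_iff] at hx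
    obtain ⟨a, ha⟩ := hx
    intro h
    rw [Multiset.map_eq_zero, Finset.val_eq_zero] at h
    have : a ∈ t := by
      have ha' : x.1 a ≠ 0 := ha
      simpa [t] using ha'
    simp [h] at this
  · change ∑ i ∈ t, i.1 = 0
    ext
    · rw [Prod.fst_sum]
      simpa [f₁, t, ZMod.pow_card_sub_one, Finset.sum_filter] using x.2.1
    · rw [Prod.snd_sum]
      simpa [f₂, t, ZMod.pow_card_sub_one, Finset.sum_filter] using x.2.2

lemma aux_le_map {α β : Type*} (f : α → β) (X : Multiset α) :
    ∀ N ≤ X.map f, ∃ U ≤ X, U.map f = N := by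
  classical
  induction X using Multiset.induction_on with
  | empty => intro N hN; exact ⟨0, le_rfl, (Multiset.le_zero.1 (by simpa using hN)).symm⟩
  | cons a X ih =>
    intro N hN
    rw [Multiset.map_cons] at hN
    by_cases h : f a ∈ N
    · obtain ⟨N', rfl⟩ := Multiset.exists_cons_of_mem h
      obtain ⟨U, hU, rfl⟩ := ih N' ((Multiset.cons_le_cons_iff _).1 hN)
      exact ⟨a ::ₘ U, Multiset.cons_le_cons _ hU, by simp⟩
    · obtain ⟨U, hU, rfl⟩ := ih N ((Multiset.le_cons_of_notMem h).1 hN)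
      exact ⟨U, hU.trans (Multiset.le_cons_self _ _), rfl⟩

lemma aux_le_add {α : Type*} (A B N : Multiset α) (h : N ≤ A + B) :
    ∃ U ≤ A, ∃ V ≤ B, N = U + V := by
  classical
  refine ⟨N ∩ A, Multiset.inter_le_right, N - A, ?_, ?_⟩
  · rw [Multiset.sub_le_iff_le_add, add_comm]; exact h
  · rw [add_comm, Multiset.sub_add_inter]

/-- The set of sub-sums. -/
noncomputable def auxSig (p : ℕ) (M : Multiset (ZMod p)) : Finset (ZMod p) :=
  (M.powerset.map Multiset.sum).toFinset

lemma aux_mem_sig (p : ℕ) (M : Multiset (ZMod p)) (x : ZMod p) :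
    x ∈ auxSig p M ↔ ∃ U ≤ M, U.sum = x := by
  simp [auxSig]

lemma aux_sig_lt (p : ℕ) [NeZero p] (a : ZMod p) (M : Multiset (ZMod p))
    (h : ∀ N ≤ a ::ₘ M, N ≠ 0 → N.sum ≠ 0) :
    (auxSig p M).card + 1 ≤ (auxSig p (a ::ₘ M)).card := by
  apply Finset.card_lt_card
  refine Finset.ssubset_iff_subset_ne.2 ⟨?_, ?_⟩
  · intro x hx
    rw [aux_mem_sig] at *
    obtain ⟨U, hU, rfl⟩ := hx
    exact ⟨U, hU.trans (Multiset.le_cons_self _ _), rfl⟩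
  · intro heq
    have hcl : ∀ n : ℕ, n • a ∈ auxSig p M := by
      intro n
      induction n with
      | zero => rw [aux_mem_sig]; exact ⟨0, Multiset.zero_le _, by simp⟩
      | succ n ih =>
        rw [heq, aux_mem_sig]
        rw [aux_mem_sig] at ih
        obtain ⟨U, hU, hs⟩ := ih
        exact ⟨a ::ₘ U, Multiset.cons_le_cons _ hU, by rw [Multiset.sum_cons, hs, succ_nsmul']⟩
    have h1 := hcl (p - 1)
    rw [aux_mem_sig] at h1
    obtain ⟨U, hU, hs⟩ := h1
    apply h (a ::ₘ U) (Multiset.cons_le_cons _ hU) (Multiset.cons_ne_zero)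
    rw [Multiset.sum_cons, hs, ← succ_nsmul', Nat.sub_add_cancel NeZero.one_le]
    simp

lemma aux_sig_add (p : ℕ) [NeZero p] (M R : Multiset (ZMod p)) :
    (∀ N ≤ R + M, N ≠ 0 → N.sum ≠ 0) →
    (auxSig p M).card + Multiset.card R ≤ (auxSig p (R + M)).card := by
  induction R using Multiset.induction_on with
  | empty => simp
  | cons a R ih =>
    intro h
    rw [Multiset.cons_add] at *
    have := aux_sig_lt p a _ h
    have := ih (fun N hN => h N (hN.trans (Multiset.le_cons_self _ _)))
    rw [Multiset.card_cons]
    omega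

lemma aux_all_one (p : ℕ) [NeZero p] (M : Multiset (ZMod p)) (hM : Multiset.card M = p - 1)
    (h : ∀ N ≤ M, N ≠ 0 → N.sum ≠ 0) (h1 : 1 ∈ M) (x : ZMod p) (hx : x ∈ M) : x = 1 := by
  by_contra hne
  obtain ⟨M', rfl⟩ := Multiset.exists_cons_of_mem h1
  have hx' : x ∈ M' := by
    rcases Multiset.mem_cons.1 hx with h | h
    · exact absurd h hne
    · exact h
  obtain ⟨R, rfl⟩ := Multiset.exists_cons_of_mem hx'
  have e : (1 : ZMod p) ::ₘ x ::ₘ R = R + {1, x} := by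
    rw [add_comm, Multiset.insert_eq_cons, Multiset.cons_add, Multiset.singleton_add]
  rw [e] at h
  have hc := aux_sig_add p {1, x} R h
  have hle : (auxSig p (R + {1, x})).card ≤ p := by
    simpa [ZMod.card] using Finset.card_le_univ (auxSig p (R + {1, x}))
  have hsub : ({1, x} : Multiset (ZMod p)) ≤ R + {1, x} := Multiset.le_add_left _ _
  have n1 : (1 : ZMod p) ≠ 0 := by
    have := h {1} (le_trans (by simp) hsub) (by simp)
    simpa using this
  have nx : x ≠ 0 := by
    have := h {x} ((Multiset.le_cons_self _ _).trans hsub) (by simp)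
    simpa using this
  have n1x : 1 + x ≠ 0 := by
    have := h {1, x} hsub (by simp)
    simpa using this
  have h4 : ({0, 1, x, 1 + x} : Finset (ZMod p)) ⊆ auxSig p {1, x} := by
    intro y hy
    rw [aux_mem_sig]
    simp only [Finset.mem_insert, Finset.mem_singleton] at hy
    rcases hy with rfl | rfl | rfl | rfl
    · exact ⟨0, by simp, by simp⟩
    · exact ⟨{1}, by simp, by simp⟩
    · exact ⟨{y}, Multiset.le_cons_self _ _, by simp⟩
    · exact ⟨{1, x}, le_rfl, by simp⟩
  have h4c : ({0, 1, x, 1 + x} : Finset (ZMod p)).card = 4 := by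
    rw [Finset.card_insert_of_notMem, Finset.card_insert_of_notMem, Finset.card_insert_of_notMem,
      Finset.card_singleton]
    · simp [n1]
    · simp [nx, Ne.symm hne]
    · simp [n1.symm, nx.symm, n1x.symm]
  have := Finset.card_le_card h4
  simp at hM
  omega

theorem aux_main_s6 (p : ℕ) [Fact p.Prime] (k : ℕ) (hk1 : 1 ≤ k) (hk2 : k ≤ p - 2)
    (T : Multiset (ZMod p × ZMod p)) (hT : Multiset.card T = k)
    (H : ∀ N ≤ Multiset.replicate (p - 1) (1, 0) + Multiset.replicate (p - 1) (0, 1) + T,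
      N ≠ 0 → Multiset.card N ≤ 2 * p - 1 - k → N.sum ≠ 0) :
    ∀ g ∈ T, g = (1, 1) := by
  have hp2 := (Fact.out : p.Prime).two_le
  -- lengths
  have key : ∀ U ≤ T, U ≠ 0 → ∃ i j : ℕ, i ≤ p - 1 ∧ j ≤ p - 1 ∧
      (i : ZMod p) = - U.sum.1 ∧ (j : ZMod p) = - U.sum.2 ∧
      2 * p - k ≤ i + j + Multiset.card U ∧
      (i + j + Multiset.card U < 2 * p ∨ 3 * p - k ≤ i + j + Multiset.card U) := by
    intro U hU hU0
    have hi := ZMod.val_lt (- U.sum.1)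
    have hj := ZMod.val_lt (- U.sum.2)
    refine ⟨(- U.sum.1).val, (- U.sum.2).val, by omega, by omega, by simp, by simp, ?_⟩
    have hi' : (((- U.sum.1).val : ℕ) : ZMod p) = - U.sum.1 := by simp
    have hj' : (((- U.sum.2).val : ℕ) : ZMod p) = - U.sum.2 := by simp
    generalize (- U.sum.1).val = i at *
    generalize (- U.sum.2).val = j at *
    have hcU : 0 < Multiset.card U := Multiset.card_pos.2 hU0
    set Z : Multiset (ZMod p × ZMod p) :=
      Multiset.replicate i (1, 0) + Multiset.replicate j (0, 1) + U with hZ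
    have hZle : Z ≤ Multiset.replicate (p - 1) (1, 0) + Multiset.replicate (p - 1) (0, 1) + T := by
      refine add_le_add (add_le_add ?_ ?_) hU
      · exact (Multiset.replicate_le_replicate _).2 (by omega)
      · exact (Multiset.replicate_le_replicate _).2 (by omega)
    have hZc : Multiset.card Z = i + j + Multiset.card U := by simp [hZ]
    have hZs : Z.sum = 0 := by
      ext <;> simp [hZ, hi', hj']
    have hZ0 : Z ≠ 0 := by
      rw [← Multiset.card_pos]; omega
    rw [← hZc]
    refine ⟨?_, ?_⟩
    · by_contra hlt
      exact H Z hZle hZ0 (by omega) hZs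
    · by_contra hcon
      push Not at hcon
      obtain ⟨z, hz⟩ := Multiset.exists_mem_of_ne_zero hZ0
      obtain ⟨Z', hZ'⟩ := Multiset.exists_cons_of_mem hz
      have hc' : Multiset.card Z = Multiset.card Z' + 1 := by rw [hZ']; simp
      obtain ⟨N, hN, hN0, hNs⟩ := aux_davenport p Z' (by omega)
      obtain ⟨V, rfl⟩ := Multiset.le_iff_exists_add.1 hN
      have hZ2 : Z = N + (z ::ₘ V) := by rw [hZ', Multiset.add_cons]
      have hc2 : Multiset.card Z = Multiset.card N + Multiset.card (z ::ₘ V) := by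
        rw [hZ2, Multiset.card_add]
      have hVs : (z ::ₘ V).sum = 0 := by
        have := hZs
        rw [hZ2, Multiset.sum_add, hNs, zero_add] at this
        exact this
      have a1 : ¬ (Multiset.card N ≤ 2 * p - 1 - k) := fun h =>
        H N (le_trans (hZ2 ▸ Multiset.le_add_right _ _) hZle) hN0 h hNs
      have a2 : ¬ (Multiset.card (z ::ₘ V) ≤ 2 * p - 1 - k) := fun h =>
        H _ (le_trans (hZ2 ▸ Multiset.le_add_left _ _) hZle) Multiset.cons_ne_zero h hVs
      omega
  let f : ZMod p × ZMod p → ZMod p := fun g => g.1 + g.2 - 1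
  have hfs : ∀ U : Multiset (ZMod p × ZMod p),
      (U.map f).sum = U.sum.1 + U.sum.2 - (Multiset.card U : ZMod p) := by
    intro U
    induction U using Multiset.induction_on with
    | empty => simp
    | cons a U ih => simp [ih, f]; ring
  have hall := aux_all_one p (Multiset.replicate (p - 1 - k) 1 + T.map f)
    (by simp [hT]; omega) (by
      intro N hN hN0 hNs
      obtain ⟨R, hR, W, hW, rfl⟩ := aux_le_add _ _ _ hN
      obtain ⟨r, hr, rfl⟩ := Multiset.le_replicate_iff.1 hR
      obtain ⟨U, hU, rfl⟩ := aux_le_map f T W hW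
      rw [Multiset.sum_add, hfs] at hNs
      simp only [Multiset.sum_replicate, nsmul_eq_mul, mul_one] at hNs
      by_cases hU0 : U = 0
      · subst hU0
        simp at hNs hN0
        have := Nat.le_of_dvd (Nat.pos_of_ne_zero (by rintro rfl; simp at hN0))
          ((ZMod.natCast_eq_zero_iff _ _).1 hNs)
        omega
      · obtain ⟨i, j, hi, hj, hi', hj', h1, h2⟩ := key U hU hU0
        have hUc : Multiset.card U ≤ k := hT ▸ Multiset.card_le_card hU
        have hd : (((i + j + Multiset.card U - r : ℕ)) : ZMod p) = 0 := by
          rw [Nat.cast_sub (by omega)]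
          push_cast
          rw [hi', hj']
          linear_combination -hNs
        obtain ⟨c, hc⟩ := (ZMod.natCast_eq_zero_iff _ _).1 hd
        have c1 : 1 < c := by
          by_contra hcc
          have : p * c ≤ p * 1 := Nat.mul_le_mul_left _ (by omega)
          omega
        have c3 : c < 3 := by
          by_contra hcc
          have : p * 3 ≤ p * c := Nat.mul_le_mul_left _ (by omega)
          omega
        have : c = 2 := by omega
        subst this
        omega)
    (by
      rw [Multiset.mem_add]; left
      exact Multiset.mem_replicate.2 ⟨by omega, rfl⟩)
  intro g hg
  have hfg : f g = 1 := hall _ (by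
    rw [Multiset.mem_add]; right; exact Multiset.mem_map_of_mem f hg)
  obtain ⟨i, j, hi, hj, hi', hj', h1, -⟩ := key {g} (by simpa using hg) (by simp)
  simp only [Multiset.sum_singleton, Multiset.card_singleton] at *
  have hd : ((i + j + 2 : ℕ) : ZMod p) = 0 := by
    push_cast
    rw [hi', hj']
    simp only [f] at hfg
    linear_combination -hfg
  obtain ⟨c, hc⟩ := (ZMod.natCast_eq_zero_iff _ _).1 hd
  have c1 : 1 < c := by
    by_contra hcc
    have : p * c ≤ p * 1 := Nat.mul_le_mul_left _ (by omega)
    omega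
  have : p * 2 ≤ p * c := Nat.mul_le_mul_left _ (by omega)
  have ei : i + 1 = p := by omega
  have ej : j + 1 = p := by omega
  have ei' : (i : ZMod p) + 1 = 0 := by exact_mod_cast (by rw [ei]; simp : ((i + 1 : ℕ) : ZMod p) = 0)
  have ej' : (j : ZMod p) + 1 = 0 := by exact_mod_cast (by rw [ej]; simp : ((j + 1 : ℕ) : ZMod p) = 0)
  ext
  · simp only; linear_combination hi' - ei'
  · simp only; linear_combination hj' - ej'


/-- If `S` over `(ℤ/pℤ)²` has length `2p-2+k` (with `1 ≤ k ≤ p-2`), no nonempty zero-sum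
subsequence of length at most `2p-1-k`, and `S = e₁^[p-1] · e₂^[p-1] · T` for a basis
`(e₁, e₂)`, then `T = (e₁+e₂)^[k]`. -/
theorem stmt_6 (p : ℕ) (hp : p.Prime) (k : ℕ) (hk1 : 1 ≤ k) (hk2 : k ≤ p - 2)
    (S : Multiset (ZMod p × ZMod p)) (hlen : Multiset.card S = 2 * p - 2 + k)
    (hzs : ∀ T ≤ S, T ≠ 0 → Multiset.card T ≤ 2 * p - 1 - k → T.sum ≠ 0)
    (e₁ e₂ : ZMod p × ZMod p)
    (hbasis : Function.Bijective (fun ab : ZMod p × ZMod p => ab.1 • e₁ + ab.2 • e₂))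
    (T : Multiset (ZMod p × ZMod p))
    (hform : S = Multiset.replicate (p - 1) e₁ + Multiset.replicate (p - 1) e₂ + T) :
    T = Multiset.replicate k (e₁ + e₂) := by

  have : Fact p.Prime := ⟨hp⟩
  let Φ : (ZMod p × ZMod p) →+ (ZMod p × ZMod p) :=
    { toFun := fun ab => ab.1 • e₁ + ab.2 • e₂
      map_zero' := by simp
      map_add' := by
        intro x y
        simp only [Prod.fst_add, Prod.snd_add, add_smul]
        abel }
  have hsur : Function.Surjective Φ := hbasis.2
  obtain ⟨T', rfl⟩ : ∃ T' : Multiset (ZMod p × ZMod p), T'.map Φ = T := by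
    refine ⟨T.map (Function.surjInv hsur), ?_⟩
    rw [Multiset.map_map]
    simp [Function.comp_def, Function.surjInv_eq hsur]
  have hΦ1 : Φ (1, 0) = e₁ := by simp [Φ]
  have hΦ2 : Φ (0, 1) = e₂ := by simp [Φ]
  have hΦ3 : Φ (1, 1) = e₁ + e₂ := by simp [Φ]
  have hp2 := hp.two_le
  have hT : Multiset.card T' = k := by
    rw [hform] at hlen
    simp at hlen
    omega
  have hS : S = (Multiset.replicate (p - 1) (1, 0) + Multiset.replicate (p - 1) (0, 1) + T').map Φ := by
    rw [hform]; simp [hΦ1, hΦ2]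
  have hmain := aux_main_s6 p k hk1 hk2 T' hT (by
    intro N hN hN0 hNc hNs
    refine hzs (N.map Φ) (hS ▸ Multiset.map_le_map hN) (by simpa using hN0) (by simpa using hNc) ?_
    rw [← map_multiset_sum, hNs, map_zero])
  have hT' : T' = Multiset.replicate k (1, 1) := Multiset.eq_replicate.2 ⟨hT, hmain⟩
  rw [hT', Multiset.map_replicate, hΦ3]
end

section
/- Let p be a prime, let G = (ℤ/pℤ) ⊕ (ℤ/pℤ) ⊕ (ℤ/pℤ), and let S be a minimal zero-sum sequence over G of length 3p−2. If there is an element e₁ ∈ G whose multiplicity in S is at least p−1, then there exist e₂, e₃ ∈ G such that (e₁,e₂,e₃) is a basis of G and there exist α₁,…,α_{p−1} ∈ ℤ/pℤ and β₁,…,β_p, γ₁,…,γ_p ∈ ℤ/pℤ with S = e₁^[p−1] · ∏_{i=1}^{p−1}(α_i·e₁ + e₂) · ∏_{i=1}^{p}(β_i·e₁ + γ_i·e₂ + e₃), where ∑_{i=1}^{p−1} α_i + ∑_{i=1}^{p} β_i = 1 and ∑_{i=1}^{p} γ_i = 1 in ℤ/pℤ. -/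
open MvPolynomial

/-- truncated exponential -/
noncomputable def texp (p : ℕ) (a : ZMod p) : Polynomial (ZMod p) :=
  ∑ k ∈ Finset.range p, Polynomial.C (a ^ k * ((k.factorial : ZMod p))⁻¹) * Polynomial.X ^ k

lemma texp_coeff (p : ℕ) (a : ZMod p) (n : ℕ) (hn : n < p) :
    (texp p a).coeff n = a ^ n * ((n.factorial : ZMod p))⁻¹ := by
  unfold texp
  simp only [Polynomial.finsetSum_coeff, Polynomial.coeff_C_mul, Polynomial.coeff_X_pow]
  simp [hn]

lemma fact_ne (p : ℕ) [Fact p.Prime] (n : ℕ) (hn : n < p) : ((n.factorial : ℕ) : ZMod p) ≠ 0 := by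
  rw [Ne, ZMod.natCast_eq_zero_iff, (Fact.out : p.Prime).dvd_factorial]
  omega

lemma texp_mul (p : ℕ) [Fact p.Prime] (a b : ZMod p) :
    (Polynomial.X ^ p : Polynomial (ZMod p)) ∣ texp p a * texp p b - texp p (a + b) := by
  rw [Polynomial.X_pow_dvd_iff]
  intro d hd
  rw [Polynomial.coeff_sub, texp_coeff _ _ _ hd, Polynomial.coeff_mul, sub_eq_zero]
  rw [(Commute.all a b).add_pow', Finset.sum_mul]
  apply Finset.sum_congr rfl
  rintro ⟨i, j⟩ hij
  rw [Finset.HasAntidiagonal.mem_antidiagonal] at hij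
  simp only at hij
  rw [texp_coeff _ _ _ (by omega), texp_coeff _ _ _ (by omega)]
  have h1 := fact_ne p i (by omega)
  have h2 := fact_ne p j (by omega)
  have h3 := fact_ne p d hd
  have h4 : ((d.choose i : ℕ) : ZMod p) * (i.factorial : ZMod p) * (j.factorial : ZMod p) = (d.factorial : ZMod p) := by
    rw [← hij, Nat.choose_symm_add]; exact_mod_cast congrArg (Nat.cast (R := ZMod p)) (Nat.add_choose_mul_factorial_mul_factorial i j)
  simp only [nsmul_eq_mul]
  field_simp
  rw [← h4]
  ring

abbrev PP (p : ℕ) := MvPolynomial (Fin 2) (ZMod p)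

/-- exponential in variable i -/
noncomputable def EE (p : ℕ) (i : Fin 2) (a : ZMod p) : PP p := Polynomial.aeval (X i) (texp p a)

noncomputable def JJ (p : ℕ) : Ideal (PP p) := Ideal.span {X 0 ^ p, X 1 ^ p}

lemma X_mem_JJ (p : ℕ) (i : Fin 2) : (X i ^ p : PP p) ∈ JJ p := by
  apply Ideal.subset_span
  fin_cases i <;> simp

lemma EE_mul (p : ℕ) [Fact p.Prime] (i : Fin 2) (a b : ZMod p) :
    EE p i a * EE p i b - EE p i (a + b) ∈ JJ p := by
  obtain ⟨q, hq⟩ := texp_mul p a b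
  have := congrArg (Polynomial.aeval (X i : PP p)) hq
  simp only [map_sub, map_mul, map_pow, Polynomial.aeval_X] at this
  unfold EE
  rw [this]
  exact Ideal.mul_mem_right _ _ (X_mem_JJ p i)

noncomputable def eg (p : ℕ) (g : ZMod p × ZMod p) : PP p := EE p 0 g.1 * EE p 1 g.2

lemma eg_mul (p : ℕ) [Fact p.Prime] (g h : ZMod p × ZMod p) :
    eg p g * eg p h - eg p (g + h) ∈ JJ p := by
  have h0 := EE_mul p 0 g.1 h.1
  have h1 := EE_mul p 1 g.2 h.2
  unfold eg
  have : EE p 0 g.1 * EE p 1 g.2 * (EE p 0 h.1 * EE p 1 h.2) - EE p 0 (g + h).1 * EE p 1 (g + h).2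
    = (EE p 0 g.1 * EE p 0 h.1 - EE p 0 (g.1 + h.1)) * (EE p 1 g.2 * EE p 1 h.2) +
      EE p 0 (g.1 + h.1) * (EE p 1 g.2 * EE p 1 h.2 - EE p 1 (g.2 + h.2)) := by
    simp only [Prod.fst_add, Prod.snd_add]; ring
  rw [this]
  exact Ideal.add_mem _ (Ideal.mul_mem_right _ _ h0) (Ideal.mul_mem_left _ _ h1)

lemma texp_zero (p : ℕ) [Fact p.Prime] : texp p 0 = 1 := by
  unfold texp
  rw [Finset.sum_eq_single 0]
  · simp
  · intro b _ hb; simp [hb]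
  · intro h; exact absurd (Finset.mem_range.2 (Fact.out : p.Prime).pos) h

lemma eg_zero (p : ℕ) [Fact p.Prime] : eg p 0 = 1 := by
  simp [eg, EE, texp_zero]

lemma eg_prod (p : ℕ) [Fact p.Prime] {ι : Type*} [DecidableEq ι] (I : Finset ι) (g : ι → ZMod p × ZMod p) :
    ∏ i ∈ I, eg p (g i) - eg p (∑ i ∈ I, g i) ∈ JJ p := by
  induction I using Finset.induction_on with
  | empty => simp [eg_zero]
  | insert a s ha ih =>
    rw [Finset.prod_insert ha, Finset.sum_insert ha]
    have := Ideal.add_mem _ (Ideal.mul_mem_left _ (eg p (g a)) ih) (eg_mul p (g a) (∑ i ∈ s, g i))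
    convert this using 1
    ring

/-- exponent vector -/
noncomputable def mm (i j : ℕ) : Fin 2 →₀ ℕ := Finsupp.single 0 i + Finsupp.single 1 j

lemma mm0 (i j : ℕ) : mm i j 0 = i := by simp [mm]
lemma mm1 (i j : ℕ) : mm i j 1 = j := by simp [mm]
lemma mm_deg (i j : ℕ) : (mm i j).degree = i + j := by simp [mm]

noncomputable def eps (p : ℕ) : PP p →ₗ[ZMod p] ZMod p :=
  lcoeff (ZMod p) (mm 0 0) + lcoeff (ZMod p) (mm (p-1) 0) + lcoeff (ZMod p) (mm 0 (p-1)) + lcoeff (ZMod p) (mm (p-1) (p-1))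

lemma eps_apply (p : ℕ) (f : PP p) : eps p f = coeff (mm 0 0) f + coeff (mm (p-1) 0) f + coeff (mm 0 (p-1)) f + coeff (mm (p-1) (p-1)) f := by
  simp [eps]

lemma coeff_X_pow_mul_zero (p : ℕ) (i : Fin 2) (q : PP p) (m : Fin 2 →₀ ℕ) (hm : m i < p) :
    coeff m (q * X i ^ p) = 0 := by
  rw [X_pow_eq_monomial, coeff_mul_monomial', if_neg]
  intro h
  have := h i
  simp at this
  omega

lemma eps_JJ (p : ℕ) [Fact p.Prime] (f : PP p) (hf : f ∈ JJ p) : eps p f = 0 := by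
  have hp := (Fact.out : p.Prime).pos
  rw [JJ, Ideal.mem_span_pair] at hf
  obtain ⟨a, b, rfl⟩ := hf
  rw [map_add]
  rw [eps_apply, eps_apply]
  rw [coeff_X_pow_mul_zero, coeff_X_pow_mul_zero, coeff_X_pow_mul_zero, coeff_X_pow_mul_zero, coeff_X_pow_mul_zero, coeff_X_pow_mul_zero, coeff_X_pow_mul_zero, coeff_X_pow_mul_zero]
  · simp
  all_goals simp only [mm0, mm1]; omega

lemma eps_idealOfVars (p : ℕ) [Fact p.Prime] (f : PP p) (n : ℕ) (hn : 2 * p - 1 ≤ n) (hf : f ∈ idealOfVars (Fin 2) (ZMod p) ^ n) : eps p f = 0 := by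
  have hp := (Fact.out : p.Prime).pos
  rw [mem_pow_idealOfVars_iff'] at hf
  rw [eps_apply, hf _ (by rw [mm_deg]; omega), hf _ (by rw [mm_deg]; omega), hf _ (by rw [mm_deg]; omega), hf _ (by rw [mm_deg]; omega)]
  simp

lemma eps_hom (p : ℕ) [Fact p.Prime] (f : PP p) (n : ℕ) (h0 : n ≠ 0) (h1 : n ≠ p - 1) (h2 : n ≠ 2 * p - 2) (hf : f.IsHomogeneous n) : eps p f = 0 := by
  rw [eps_apply, hf.coeff_eq_zero (by rw [mm_deg]; omega), hf.coeff_eq_zero (by rw [mm_deg]; omega), hf.coeff_eq_zero (by rw [mm_deg]; omega), hf.coeff_eq_zero (by rw [mm_deg]; omega)]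
  simp

lemma coeff_eg (p : ℕ) [Fact p.Prime] (g : ZMod p × ZMod p) (i j : ℕ) (hi : i < p) (hj : j < p) :
    coeff (mm i j) (eg p g) = (g.1 ^ i * ((i.factorial : ZMod p))⁻¹) * (g.2 ^ j * ((j.factorial : ZMod p))⁻¹) := by
  have key : ∀ k l : ℕ, (C (g.1 ^ k * ((k.factorial : ZMod p))⁻¹) * X 0 ^ k * (C (g.2 ^ l * ((l.factorial : ZMod p))⁻¹) * X 1 ^ l) : PP p)
     = monomial (mm k l) ((g.1 ^ k * ((k.factorial : ZMod p))⁻¹) * (g.2 ^ l * ((l.factorial : ZMod p))⁻¹)) := by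
    intro k l
    rw [X_pow_eq_monomial, X_pow_eq_monomial, C_mul_monomial, C_mul_monomial, monomial_mul]
    simp [mm]
  have hmm : ∀ k l, mm k l = mm i j ↔ k = i ∧ l = j := by
    intro k l
    constructor
    · intro h
      constructor
      · rw [← mm0 k l, h, mm0]
      · rw [← mm1 k l, h, mm1]
    · rintro ⟨rfl, rfl⟩; rfl
  simp only [eg, EE, texp, map_sum, map_mul, map_pow, Polynomial.aeval_X, Polynomial.aeval_C, MvPolynomial.algebraMap_eq]
  simp only [← map_pow, ← map_mul]
  rw [Finset.sum_mul_sum]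
  simp only [key, coeff_sum, coeff_monomial, hmm]
  rw [Finset.sum_eq_single i, Finset.sum_eq_single j]
  · simp
  · intro b _ hb; simp [hb]
  · intro h; exact absurd (Finset.mem_range.2 hj) h
  · intro b _ hb; simp [hb]
  · intro h; exact absurd (Finset.mem_range.2 hi) h

lemma eps_eg (p : ℕ) [Fact p.Prime] (g : ZMod p × ZMod p) : eps p (eg p g) = if g = 0 then 1 else 0 := by
  have hp := (Fact.out : p.Prime).pos
  have hp1 := (Fact.out : p.Prime).one_lt
  rw [eps_apply, coeff_eg, coeff_eg, coeff_eg, coeff_eg] <;> try omega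
  have hw : (((p-1).factorial : ℕ) : ZMod p) = -1 := ZMod.wilsons_lemma p
  rw [hw]
  have hf : ∀ a : ZMod p, a ^ (p-1) = if a = 0 then 0 else 1 := by
    intro a
    split_ifs with h
    · subst h; exact zero_pow (by omega)
    · exact ZMod.pow_card_sub_one_eq_one h
  obtain ⟨a, b⟩ := g
  simp only [hf, Prod.mk_eq_zero]
  by_cases ha : a = 0 <;> by_cases hb : b = 0 <;> simp [ha, hb, inv_neg]


noncomputable abbrev MI (p : ℕ) : Ideal (PP p) := idealOfVars (Fin 2) (ZMod p)

lemma X_mem_MI (p : ℕ) (i : Fin 2) : (X i : PP p) ∈ MI p := by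
  apply Ideal.subset_span
  exact ⟨i, rfl⟩

noncomputable def LL (p : ℕ) (g : ZMod p × ZMod p) : PP p := C g.1 * X 0 + C g.2 * X 1

lemma LL_add (p : ℕ) (g h : ZMod p × ZMod p) : LL p (g + h) = LL p g + LL p h := by
  simp [LL]; ring

lemma LL_smul (p : ℕ) (c : ZMod p) (g : ZMod p × ZMod p) : LL p (c • g) = C c * LL p g := by
  simp [LL]; ring

lemma LL_zero (p : ℕ) : LL p 0 = 0 := by simp [LL]

lemma LL_sum (p : ℕ) {ι : Type*} (I : Finset ι) (g : ι → ZMod p × ZMod p) :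
    LL p (∑ i ∈ I, g i) = ∑ i ∈ I, LL p (g i) := by
  classical
  induction I using Finset.induction_on with
  | empty => simp [LL_zero]
  | insert a s ha ih => rw [Finset.sum_insert ha, Finset.sum_insert ha, LL_add, ih]

lemma LL_mem (p : ℕ) (g : ZMod p × ZMod p) : LL p g ∈ MI p :=
  Ideal.add_mem _ (Ideal.mul_mem_left _ _ (X_mem_MI p 0)) (Ideal.mul_mem_left _ _ (X_mem_MI p 1))

lemma LL_hom (p : ℕ) (g : ZMod p × ZMod p) : (LL p g).IsHomogeneous 1 := by
  unfold LL
  exact ((isHomogeneous_X _ _).C_mul _).add ((isHomogeneous_X _ _).C_mul _)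

lemma LL_pow (p : ℕ) [Fact p.Prime] (g : ZMod p × ZMod p) : LL p g ^ p ∈ JJ p := by
  unfold LL
  rw [add_pow_char, mul_pow, mul_pow]
  exact Ideal.add_mem _ (Ideal.mul_mem_left _ _ (X_mem_JJ p 0)) (Ideal.mul_mem_left _ _ (X_mem_JJ p 1))

lemma texp_one (p : ℕ) [Fact p.Prime] (a : ZMod p) :
    (Polynomial.X ^ 2 : Polynomial (ZMod p)) ∣ texp p a - (1 + Polynomial.C a * Polynomial.X) := by
  have hp1 := (Fact.out : p.Prime).one_lt
  rw [Polynomial.X_pow_dvd_iff]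
  intro d hd
  rw [Polynomial.coeff_sub, texp_coeff _ _ _ (by omega), Polynomial.coeff_add, Polynomial.coeff_C_mul, Polynomial.coeff_X, Polynomial.coeff_one]
  interval_cases d <;> simp

lemma texp_three (p : ℕ) [Fact p.Prime] (hp : 5 ≤ p) (a c : ZMod p) (hc : 24 * c = 1) :
    (Polynomial.X ^ 4 : Polynomial (ZMod p)) ∣ texp p a - (1 + Polynomial.C a * Polynomial.X +
      12 * Polynomial.C c * (Polynomial.C a * Polynomial.X) ^ 2 + 4 * Polynomial.C c * (Polynomial.C a * Polynomial.X) ^ 3) := by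
  rw [Polynomial.X_pow_dvd_iff]
  intro d hd
  have h2 : ((2 : ZMod p))⁻¹ = 12 * c := inv_eq_of_mul_eq_one_right (by linear_combination hc)
  have h6 : ((6 : ZMod p))⁻¹ = 4 * c := inv_eq_of_mul_eq_one_right (by linear_combination hc)
  have e1 : (12 * Polynomial.C c * (Polynomial.C a * Polynomial.X) ^ 2 : Polynomial (ZMod p)) = Polynomial.C (12 * c * a ^ 2) * Polynomial.X ^ 2 := by
    simp only [map_mul, map_pow, map_ofNat]; ring
  have e2 : (4 * Polynomial.C c * (Polynomial.C a * Polynomial.X) ^ 3 : Polynomial (ZMod p)) = Polynomial.C (4 * c * a ^ 3) * Polynomial.X ^ 3 := by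
    simp only [map_mul, map_pow, map_ofNat]; ring
  rw [e1, e2]
  simp only [Polynomial.coeff_sub, texp_coeff _ _ _ (show d < p by omega), Polynomial.coeff_add, Polynomial.coeff_C_mul, Polynomial.coeff_X, Polynomial.coeff_one, Polynomial.coeff_X_pow]
  interval_cases d <;> simp [Nat.factorial, h2, h6] <;> ring

lemma eg_one (p : ℕ) [Fact p.Prime] (g : ZMod p × ZMod p) : eg p g - 1 - LL p g ∈ MI p ^ 2 := by
  have key : ∀ (i : Fin 2) (a : ZMod p), EE p i a - (1 + C a * X i) ∈ MI p ^ 2 := by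
    intro i a
    obtain ⟨q, hq⟩ := texp_one p a
    have := congrArg (Polynomial.aeval (X i : PP p)) hq
    simp only [map_sub, map_mul, map_add, map_one, map_pow, Polynomial.aeval_X, Polynomial.aeval_C, MvPolynomial.algebraMap_eq] at this
    unfold EE
    rw [this]
    exact Ideal.mul_mem_right _ _ (Ideal.pow_mem_pow (X_mem_MI p i) 2)
  have h0 := key 0 g.1
  have h1 := key 1 g.2
  have h2 : (X 0 * X 1 : PP p) ∈ MI p ^ 2 := by
    rw [pow_two]; exact Ideal.mul_mem_mul (X_mem_MI p 0) (X_mem_MI p 1)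
  have : eg p g - 1 - LL p g = (EE p 0 g.1 - (1 + C g.1 * X 0)) * EE p 1 g.2
     + (1 + C g.1 * X 0) * (EE p 1 g.2 - (1 + C g.2 * X 1)) + (C g.1 * C g.2) * (X 0 * X 1) := by
    unfold eg LL; ring
  rw [this]
  exact Ideal.add_mem _ (Ideal.add_mem _ (Ideal.mul_mem_right _ _ h0) (Ideal.mul_mem_left _ _ h1)) (Ideal.mul_mem_left _ _ h2)

lemma eg_three (p : ℕ) [Fact p.Prime] (hp : 5 ≤ p) (c : ZMod p) (hc : 24 * c = 1) (g : ZMod p × ZMod p) :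
    eg p g - 1 - (LL p g + 12 * C c * LL p g ^ 2 + 4 * C c * LL p g ^ 3) ∈ MI p ^ 4 := by
  have key : ∀ (i : Fin 2) (a : ZMod p), EE p i a - (1 + C a * X i + 12 * C c * (C a * X i) ^ 2 + 4 * C c * (C a * X i) ^ 3) ∈ MI p ^ 4 := by
    intro i a
    obtain ⟨q, hq⟩ := texp_three p hp a c hc
    have := congrArg (Polynomial.aeval (X i : PP p)) hq
    simp only [map_sub, map_mul, map_add, map_one, map_pow, map_ofNat, Polynomial.aeval_X, Polynomial.aeval_C, MvPolynomial.algebraMap_eq] at this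
    unfold EE
    rw [this]
    exact Ideal.mul_mem_right _ _ (Ideal.pow_mem_pow (X_mem_MI p i) 4)
  have h0 := key 0 g.1
  have h1 := key 1 g.2
  have hcC : (24 * C c : PP p) = 1 := by
    have := congrArg (C : ZMod p → PP p) hc
    simpa only [map_mul, map_ofNat, map_one] using this
  have hx : (C g.1 * X 0 : PP p) ∈ MI p := Ideal.mul_mem_left _ _ (X_mem_MI p 0)
  have hy : (C g.2 * X 1 : PP p) ∈ MI p := Ideal.mul_mem_left _ _ (X_mem_MI p 1)
  have e : eg p g = EE p 0 g.1 * EE p 1 g.2 := rfl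
  have e' : LL p g = C g.1 * X 0 + C g.2 * X 1 := rfl
  rw [e, e']
  generalize (C g.1 * X 0 : PP p) = x at *
  generalize (C g.2 * X 1 : PP p) = y at *
  generalize EE p 0 g.1 = A at *
  generalize EE p 1 g.2 = B at *
  generalize (C c : PP p) = d at *
  have m : ∀ i j : ℕ, i + j = 4 → x ^ i * y ^ j ∈ MI p ^ 4 := by
    intro i j hij
    rw [← hij, pow_add]
    exact Ideal.mul_mem_mul (Ideal.pow_mem_pow hx i) (Ideal.pow_mem_pow hy j)
  have : A * B - 1 - (x + y + 12 * d * (x + y) ^ 2 + 4 * d * (x + y) ^ 3) =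
     (A - (1 + x + 12 * d * x ^ 2 + 4 * d * x ^ 3)) * B
     + (1 + x + 12 * d * x ^ 2 + 4 * d * x ^ 3) * (B - (1 + y + 12 * d * y ^ 2 + 4 * d * y ^ 3))
     + 4 * d * (x ^ 1 * y ^ 3) + (144 * d ^ 2 + 48 * d ^ 2 * y) * (x ^ 2 * y ^ 2)
     + (4 * d + 48 * d ^ 2 * y + 16 * d ^ 2 * y ^ 2) * (x ^ 3 * y ^ 1) := by
    linear_combination (-x * y) * hcC
  rw [this]
  refine Ideal.add_mem _ (Ideal.add_mem _ (Ideal.add_mem _ (Ideal.add_mem _ (Ideal.mul_mem_right _ _ h0) (Ideal.mul_mem_left _ _ h1)) ?_) ?_) ?_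
  all_goals exact Ideal.mul_mem_left _ _ (m _ _ (by norm_num))

lemma prod_one {A ι : Type*} [CommRing A] [DecidableEq ι] (M : Ideal A) (V : Finset ι) (u l : ι → A)
    (hl : ∀ i, l i ∈ M) (h : ∀ i, u i - l i ∈ M ^ 2) :
    ∏ i ∈ V, u i - ∏ i ∈ V, l i ∈ M ^ (V.card + 1) := by
  induction V using Finset.induction_on with
  | empty => simp
  | insert a s ha ih =>
    rw [Finset.prod_insert ha, Finset.prod_insert ha, Finset.card_insert_of_notMem ha]
    have hpl : ∏ i ∈ s, l i ∈ M ^ s.card := by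
      rw [← Finset.prod_const]; exact Ideal.prod_mem_prod (fun i _ => hl i)
    have hu : u a ∈ M := by
      have := Ideal.add_mem _ (Ideal.pow_le_self (two_ne_zero) (h a)) (hl a)
      simpa using this
    have : u a * ∏ i ∈ s, u i - l a * ∏ i ∈ s, l i = u a * (∏ i ∈ s, u i - ∏ i ∈ s, l i) + (u a - l a) * ∏ i ∈ s, l i := by ring
    rw [this]
    refine Ideal.add_mem _ ?_ ?_
    · rw [pow_succ']; exact Ideal.mul_mem_mul hu ih
    · rw [show s.card + 1 + 1 = 2 + s.card by ring, pow_add]; exact Ideal.mul_mem_mul (h a) hpl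

lemma prod_three {A ι : Type*} [CommRing A] [DecidableEq ι] (M : Ideal A) (V : Finset ι) (u l : ι → A) (c : A) (hc : 24 * c = 1)
    (hl : ∀ i, l i ∈ M) (h : ∀ i, u i - (l i + 12 * c * l i ^ 2 + 4 * c * l i ^ 3) ∈ M ^ 4) :
    ∏ i ∈ V, u i - (∏ i ∈ V, l i) * (1 + 12 * c * (∑ i ∈ V, l i) + 3 * c * (∑ i ∈ V, l i) ^ 2 + c * ∑ i ∈ V, l i ^ 2) ∈ M ^ (V.card + 3) := by
  induction V using Finset.induction_on with
  | empty => simp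
  | insert a s ha ih =>
    simp only [Finset.prod_insert ha, Finset.sum_insert ha, Finset.card_insert_of_notMem ha]
    have hpl : ∏ i ∈ s, l i ∈ M ^ s.card := by
      rw [← Finset.prod_const]; exact Ideal.prod_mem_prod (fun i _ => hl i)
    have hla := hl a
    have hu : u a ∈ M := by
      have := Ideal.add_mem _ (Ideal.pow_le_self (four_ne_zero) (h a)) (Ideal.mul_mem_left _ (1 + 12 * c * l a + 4 * c * l a ^ 2) hla)
      convert this using 1; ring
    have hs : ∑ i ∈ s, l i ∈ M := Ideal.sum_mem _ (fun i _ => hl i)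
    have hq : ∑ i ∈ s, l i ^ 2 ∈ M ^ 2 := Ideal.sum_mem _ (fun i _ => Ideal.pow_mem_pow (hl i) 2)
    have ha' := h a
    generalize ∏ i ∈ s, u i = U at *
    generalize ∏ i ∈ s, l i = W at *
    generalize ∑ i ∈ s, l i ^ 2 = q at *
    generalize ∑ i ∈ s, l i = σ at *
    generalize u a = v at *
    generalize l a = x at *
    have m3 : ∀ a b d : A, a ∈ M → b ∈ M → d ∈ M → a * b * d ∈ M ^ 3 := by
      intro a b d ha hb hd
      rw [pow_succ, pow_two]; exact Ideal.mul_mem_mul (Ideal.mul_mem_mul ha hb) hd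
    have m3' : x * q ∈ M ^ 3 := by
      rw [pow_succ']; exact Ideal.mul_mem_mul hla hq
    have : v * U - x * W * (1 + 12 * c * (x + σ) + 3 * c * (x + σ) ^ 2 + c * (x ^ 2 + q)) =
       v * (U - W * (1 + 12 * c * σ + 3 * c * σ ^ 2 + c * q))
       + (v - (x + 12 * c * x ^ 2 + 4 * c * x ^ 3)) * W * (1 + 12 * c * σ + 3 * c * σ ^ 2 + c * q)
       + x * W * (36 * c ^ 2 * (x * σ * σ) + (12 * c ^ 2 + 4 * c ^ 2 * x) * (x * q) + (48 * c ^ 2 + 12 * c ^ 2 * σ) * (x * x * σ)) := by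
      linear_combination (6 * c * x^2 * W * σ) * hc
    rw [this]
    refine Ideal.add_mem _ (Ideal.add_mem _ ?_ ?_) ?_
    · rw [show s.card + 1 + 3 = 1 + (s.card + 3) by ring, pow_add, pow_one]; exact Ideal.mul_mem_mul hu ih
    · rw [show s.card + 1 + 3 = 4 + s.card by ring, pow_add]; exact Ideal.mul_mem_right _ _ (Ideal.mul_mem_mul ha' hpl)
    · rw [show s.card + 1 + 3 = 1 + s.card + 3 by ring, pow_add, pow_add, pow_one]
      refine Ideal.mul_mem_mul (Ideal.mul_mem_mul hla hpl) ?_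
      exact Ideal.add_mem _ (Ideal.add_mem _ (Ideal.mul_mem_left _ _ (m3 _ _ _ hla hs hs)) (Ideal.mul_mem_left _ _ m3')) (Ideal.mul_mem_left _ _ (m3 _ _ _ hla hla hs))


lemma eps_prod (p : ℕ) [Fact p.Prime] {ι : Type*} [DecidableEq ι] (V : Finset ι) (g : ι → ZMod p × ZMod p)
    (h : ∀ I ⊆ V, I.Nonempty → ∑ i ∈ I, g i ≠ 0) :
    eps p (∏ i ∈ V, (eg p (g i) - 1)) = (-1) ^ V.card := by
  simp only [sub_eq_add_neg]
  rw [Finset.prod_add, map_sum, Finset.sum_eq_single ∅]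
  · have h1 : (∏ i ∈ (∅ : Finset ι), eg p (g i)) * ∏ i ∈ V \ ∅, (-1 : PP p) = (-1 : ZMod p) ^ V.card • eg p 0 := by
      rw [eg_zero]; simp [MvPolynomial.smul_eq_C_mul]
    rw [h1, map_smul, eps_eg]; simp
  · intro I hI hne
    rw [Finset.mem_powerset] at hI
    have h1 : (∏ i ∈ I, eg p (g i)) * ∏ i ∈ V \ I, (-1 : PP p) = (-1 : ZMod p) ^ (V \ I).card • ∏ i ∈ I, eg p (g i) := by
      simp [MvPolynomial.smul_eq_C_mul, mul_comm]
    have h2 := eps_JJ p _ (eg_prod p I g)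
    rw [map_sub, sub_eq_zero, eps_eg, if_neg (h I hI (Finset.nonempty_iff_ne_empty.2 hne))] at h2
    rw [h1, map_smul, h2, smul_zero]
  · intro h; simp at h

section
variable (p : ℕ) [Fact p.Prime] {ι : Type*} [DecidableEq ι] [Fintype ι] (g : ι → ZMod p × ZMod p)

lemma even_pow (n : ℕ) (hn : Even n) : (-1 : ZMod p) ^ n = 1 := hn.neg_one_pow

lemma level_one (hcard : Fintype.card ι = 2 * p - 1)
    (hm : ∀ I : Finset ι, I.Nonempty → I ≠ Finset.univ → ∑ i ∈ I, g i ≠ 0) (j : ι) :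
    eps p (∏ i ∈ Finset.univ.erase j, LL p (g i)) = 1 := by
  have hp1 := (Fact.out : p.Prime).one_lt
  have hc : (Finset.univ.erase j).card = 2 * p - 2 := by
    rw [Finset.card_erase_of_mem (Finset.mem_univ j), Finset.card_univ, hcard]; omega
  have h1 := eps_prod p (Finset.univ.erase j) g (by
    intro I hI hne
    apply hm I hne
    rintro rfl
    simpa using hI (Finset.mem_univ j))
  have h2 := prod_one (MI p) (Finset.univ.erase j) (fun i => eg p (g i) - 1) (fun i => LL p (g i))
    (fun i => LL_mem p _) (fun i => eg_one p _)
  have h3 := eps_idealOfVars p _ _ (by omega) h2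
  rw [map_sub, h1, hc, even_pow p _ ⟨p - 1, by omega⟩, sub_eq_zero] at h3
  exact h3.symm

lemma eps_C_mul (c : ZMod p) (f : PP p) : eps p (C c * f) = c * eps p f := by
  rw [← MvPolynomial.smul_eq_C_mul, map_smul, smul_eq_mul]

lemma level_two (hp5 : 5 ≤ p) (V : Finset ι) (hcard : V.card = 2 * p - 4)
    (hm : ∀ I ⊆ V, I.Nonempty → ∑ i ∈ I, g i ≠ 0) :
    eps p ((∏ i ∈ V, LL p (g i)) * (3 * (∑ i ∈ V, LL p (g i)) ^ 2 + ∑ i ∈ V, LL p (g i) ^ 2)) = 24 := by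
  have h24 : (24 : ZMod p) ≠ 0 := by
    intro h
    have h' : ((24 : ℕ) : ZMod p) = 0 := by exact_mod_cast h
    rw [ZMod.natCast_eq_zero_iff] at h'
    have h'' : p ∣ Nat.factorial 4 := by simpa [Nat.factorial] using h'
    rw [(Fact.out : p.Prime).dvd_factorial] at h''
    omega
  obtain ⟨c, hc⟩ : ∃ c : ZMod p, 24 * c = 1 := ⟨24⁻¹, mul_inv_cancel₀ h24⟩
  have hcC : (24 * C c : PP p) = 1 := by
    have := congrArg (C : ZMod p → PP p) hc
    simpa only [map_mul, map_ofNat, map_one] using this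
  have h1 := eps_prod p V g hm
  have h2 := prod_three (MI p) V (fun i => eg p (g i) - 1) (fun i => LL p (g i)) (C c) hcC
    (fun i => LL_mem p _) (fun i => eg_three p hp5 c hc _)
  have h3 := eps_idealOfVars p _ _ (by omega) h2
  rw [map_sub, h1, hcard, even_pow p _ ⟨p - 2, by omega⟩, sub_eq_zero] at h3
  have hh1 : (∏ i ∈ V, LL p (g i)).IsHomogeneous (2 * p - 4) := by
    have := IsHomogeneous.prod V (fun i => LL p (g i)) (fun _ => 1) (fun i _ => LL_hom p _)
    simpa [hcard] using this
  have hh2 : (∑ i ∈ V, LL p (g i)).IsHomogeneous 1 := IsHomogeneous.sum _ _ _ (fun i _ => LL_hom p _)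
  have hh3 := hh1.mul hh2
  have z1 := eps_hom p _ _ (by omega) (by omega) (by omega) hh1
  have z2 := eps_hom p _ _ (by omega) (by omega) (by omega) hh3
  have e : (∏ i ∈ V, LL p (g i)) * (1 + 12 * C c * (∑ i ∈ V, LL p (g i)) + 3 * C c * (∑ i ∈ V, LL p (g i)) ^ 2 + C c * ∑ i ∈ V, LL p (g i) ^ 2)
    = ∏ i ∈ V, LL p (g i) + C (12 * c) * ((∏ i ∈ V, LL p (g i)) * ∑ i ∈ V, LL p (g i)) +
     C c * ((∏ i ∈ V, LL p (g i)) * (3 * (∑ i ∈ V, LL p (g i)) ^ 2 + ∑ i ∈ V, LL p (g i) ^ 2)) := by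
    simp only [map_mul, map_ofNat]; ring
  rw [e, map_add, map_add, z1, eps_C_mul, z2, eps_C_mul] at h3
  linear_combination (-24) * h3 - eps p ((∏ i ∈ V, LL p (g i)) * (3 * (∑ i ∈ V, LL p (g i)) ^ 2 + ∑ i ∈ V, LL p (g i) ^ 2)) * hc

/-- trilinear data from a triple -/
lemma triple (hp5 : 5 ≤ p) (hcard : Fintype.card ι = 2 * p - 1) (hs : ∑ i, g i = 0)
    (hm : ∀ I : Finset ι, I.Nonempty → I ≠ Finset.univ → ∑ i ∈ I, g i ≠ 0)
    (a c : ZMod p × ZMod p) (x t : ι → ZMod p) (hg : ∀ i, g i = x i • a + t i • c)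
    (i j k : ι) (hij : i ≠ j) (hik : i ≠ k) (hjk : j ≠ k) :
    ∃ A B D : ZMod p,
      (∀ h : ZMod p × ZMod p, ∀ y s : ZMod p, h = y • a + s • c →
        eps p ((∏ l ∈ (Finset.univ.erase i).erase j, LL p (g l)) * LL p h) = A * x k * y + B * (x k * s + t k * y) + D * t k * s) ∧
      A * x i * x j + B * (x i * t j + x j * t i) + D * t i * t j = 1 ∧
      A * x i * x k + B * (x i * t k + x k * t i) + D * t i * t k = 1 ∧
      A * x j * x k + B * (x j * t k + x k * t j) + D * t j * t k = 1 ∧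
      A * ∑ l, x l ^ 2 + 2 * B * ∑ l, x l * t l + D * ∑ l, t l ^ 2 +
       2 * ((A * x i ^ 2 + 2 * B * (x i * t i) + D * t i ^ 2) + (A * x j ^ 2 + 2 * B * (x j * t j) + D * t j ^ 2)
        + (A * x k ^ 2 + 2 * B * (x k * t k) + D * t k ^ 2)) = 6 := by
  set V := ((Finset.univ.erase i).erase j).erase k with hV
  set W := ∏ l ∈ V, LL p (g l) with hW
  have mj : j ∈ Finset.univ.erase i := by simp [hij.symm]
  have mk : k ∈ (Finset.univ.erase i).erase j := by simp [hik.symm, hjk.symm]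
  have mi' : i ∈ Finset.univ.erase j := by simp [hij]
  have mi'' : i ∈ Finset.univ.erase k := by simp [hik]
  have mk' : k ∈ (Finset.univ.erase j).erase i := by simp [hik.symm, hjk.symm]
  have mj' : j ∈ (Finset.univ.erase k).erase i := by simp [hij.symm, hjk]
  have hVc : V.card = 2 * p - 4 := by
    rw [hV, Finset.card_erase_of_mem mk, Finset.card_erase_of_mem mj, Finset.card_erase_of_mem (Finset.mem_univ i), Finset.card_univ, hcard]
    omega
  have l2 := level_two p g hp5 V hVc (by
    intro I hI hne
    apply hm I hne
    rintro rfl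
    simpa [hV] using hI (Finset.mem_univ k))
  have hWk : W * LL p (g k) = ∏ l ∈ (Finset.univ.erase i).erase j, LL p (g l) := Finset.prod_erase_mul _ _ mk
  have hi : W * LL p (g k) * LL p (g j) = ∏ l ∈ Finset.univ.erase i, LL p (g l) := by
    rw [hWk]; exact Finset.prod_erase_mul _ _ mj
  have hj : W * LL p (g k) * LL p (g i) = ∏ l ∈ Finset.univ.erase j, LL p (g l) := by
    rw [hWk, Finset.erase_right_comm]; exact Finset.prod_erase_mul _ _ mi'
  have hk : W * LL p (g j) * LL p (g i) = ∏ l ∈ Finset.univ.erase k, LL p (g l) := by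
    have : W * LL p (g j) = ∏ l ∈ (Finset.univ.erase k).erase i, LL p (g l) := by
      rw [hW, hV, Finset.erase_right_comm (s := Finset.univ.erase i), Finset.erase_right_comm (s := Finset.univ)]
      exact Finset.prod_erase_mul _ _ mj'
    rw [this]; exact Finset.prod_erase_mul _ _ mi''
  have e1 := level_one p g hcard hm i
  have e2 := level_one p g hcard hm j
  have e3 := level_one p g hcard hm k
  rw [← hi] at e1
  rw [← hj] at e2
  rw [← hk] at e3
  have hL : ∀ l, LL p (g l) = C (x l) * LL p a + C (t l) * LL p c := by
    intro l; rw [hg l, LL_add, LL_smul, LL_smul]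
  have Q : ∀ y s y' s' : ZMod p, eps p (W * (C y * LL p a + C s * LL p c) * (C y' * LL p a + C s' * LL p c)) =
      eps p (W * LL p a * LL p a) * y * y' + eps p (W * LL p a * LL p c) * (y * s' + s * y') + eps p (W * LL p c * LL p c) * s * s' := by
    intro y s y' s'
    have : W * (C y * LL p a + C s * LL p c) * (C y' * LL p a + C s' * LL p c) =
      C (y * y') * (W * LL p a * LL p a) + C (y * s' + s * y') * (W * LL p a * LL p c) + C (s * s') * (W * LL p c * LL p c) := by
      simp only [map_mul, map_add]; ring
    rw [this]
    simp only [map_add (eps p), eps_C_mul]; ring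
  refine ⟨eps p (W * LL p a * LL p a), eps p (W * LL p a * LL p c), eps p (W * LL p c * LL p c), ?_, ?_, ?_, ?_, ?_⟩
  · intro h y s hh
    rw [← hWk, hh, LL_add, LL_smul, LL_smul, hL k, Q]
  · rw [hL, hL, Q] at e3; linear_combination e3
  · rw [hL, hL, Q] at e2; linear_combination e2
  · rw [hL, hL, Q] at e1; linear_combination e1
  · have s1 : ∑ l ∈ V, LL p (g l) = -(LL p (g i) + LL p (g j) + LL p (g k)) := by
      have := LL_sum p Finset.univ g
      rw [hs, LL_zero, ← Finset.sum_erase_add _ _ (Finset.mem_univ i), ← Finset.sum_erase_add _ _ mj, ← Finset.sum_erase_add _ _ mk] at this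
      linear_combination -this
    have s2 : ∑ l ∈ V, LL p (g l) ^ 2 = ∑ l, LL p (g l) ^ 2 - (LL p (g i) ^ 2 + LL p (g j) ^ 2 + LL p (g k) ^ 2) := by
      rw [← Finset.sum_erase_add _ _ (Finset.mem_univ i), ← Finset.sum_erase_add _ _ mj, ← Finset.sum_erase_add _ _ mk]
      ring
    rw [s1, s2] at l2
    have expand : W * (3 * (-(LL p (g i) + LL p (g j) + LL p (g k))) ^ 2 + (∑ l, LL p (g l) ^ 2 - (LL p (g i) ^ 2 + LL p (g j) ^ 2 + LL p (g k) ^ 2)))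
      = ∑ l, W * LL p (g l) * LL p (g l) + C 2 * (W * LL p (g i) * LL p (g i)) + C 2 * (W * LL p (g j) * LL p (g j)) + C 2 * (W * LL p (g k) * LL p (g k))
        + C 6 * (W * LL p (g k) * LL p (g j)) + C 6 * (W * LL p (g k) * LL p (g i)) + C 6 * (W * LL p (g j) * LL p (g i)) := by
      have : ∑ l, W * LL p (g l) * LL p (g l) = W * ∑ l, LL p (g l) ^ 2 := by
        rw [Finset.mul_sum]; apply Finset.sum_congr rfl; intros; ring
      rw [this]
      simp only [map_ofNat]; ring
    rw [expand] at l2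
    simp only [map_add, eps_C_mul, e1, e2, e3, map_sum] at l2
    simp only [hL, Q] at l2
    have hsum : ∀ A B D : ZMod p, ∑ l, (A * x l * x l + B * (x l * t l + t l * x l) + D * t l * t l) = A * ∑ l, x l ^ 2 + 2 * B * ∑ l, x l * t l + D * ∑ l, t l ^ 2 := by
      intro A B D
      simp only [Finset.mul_sum, ← Finset.sum_add_distrib]
      apply Finset.sum_congr rfl; intros; ring
    rw [hsum] at l2
    linear_combination l2
end


lemma core_R1 {K : Type*} [Field K] (x t B D P R S : K) (ht : t ≠ 0)
    (h1 : x + B * t = 1) (h2 : x ^ 2 + 2 * B * (x * t) + D * t ^ 2 = x)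
    (h3 : P + 2 * B * R + D * S + 2 * (1 + 1 + x) = 6) :
    P * t ^ 2 + 2 * (1 - x) * t * R + (1 - x) ^ 2 * S = (1 - x) * (S + 2 * t ^ 2) := by
  have hB : B * t = 1 - x := by linear_combination h1
  have hD : D * t ^ 2 = - x * (1 - x) := by linear_combination h2 - 2 * x * hB
  linear_combination t ^ 2 * h3 - 2 * R * t * hB - S * hD

lemma core_E1 {K : Type*} [Field K] (h2 : (2 : K) ≠ 0) (x t x' t' A B D P R S : K) (ht : t ≠ 0) (ht' : t' ≠ 0) (hne : t ≠ t')
    (h1 : A * x + B * t = 1) (h1' : A * x' + B * t' = 1)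
    (h3 : A * x * x' + B * (x * t' + x' * t) + D * t * t' = 1)
    (h4 : A * P + 2 * B * R + D * S + 2 * (A + (A * x ^ 2 + 2 * B * (x * t) + D * t ^ 2)
        + (A * x' ^ 2 + 2 * B * (x' * t') + D * t' ^ 2)) = 6)
    (r : P * t ^ 2 + 2 * (1 - x) * t * R + (1 - x) ^ 2 * S = (1 - x) * (S + 2 * t ^ 2))
    (r' : P * t' ^ 2 + 2 * (1 - x') * t' * R + (1 - x') ^ 2 * S = (1 - x') * (S + 2 * t' ^ 2)) :
    (1 - x) * t' ^ 2 + (1 - x') * t ^ 2 = ((1 - x) * t' - (1 - x') * t) ^ 2 := by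
  have hA : A * (x * t' - x' * t) = t' - t := by linear_combination t' * h1 - t * h1'
  have hB : B * (x * t' - x' * t) = x - x' := by linear_combination x * h1' - x' * h1
  have hD : D * (x * t' - x' * t) * t * t' = (x * t' - x' * t) - (t' - t) * x * x' - (x - x') * (x * t' + x' * t) := by
    linear_combination (x * t' - x' * t) * h3 - x * x' * hA - (x * t' + x' * t) * hB
  have h5 : (P + 2 + 2 * x ^ 2 + 2 * x' ^ 2) * t * t' * (t' - t) + (2 * R + 4 * x * t + 4 * x' * t') * t * t' * (x - x')
     + (S + 2 * t ^ 2 + 2 * t' ^ 2) * ((x * t' - x' * t) - (t' - t) * x * x' - (x - x') * (x * t' + x' * t)) = 6 * (x * t' - x' * t) * t * t' := by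
    linear_combination ((x * t' - x' * t) * t * t') * h4 - (P + 2 + 2 * x ^ 2 + 2 * x' ^ 2) * t * t' * hA
      - (2 * R + 4 * x * t + 4 * x' * t') * t * t' * hB - (S + 2 * t ^ 2 + 2 * t' ^ 2) * hD
  have h6 : 2 * (t - t') * ((1 - x) * t' ^ 2 + (1 - x') * t ^ 2 - ((1 - x) * t' - (1 - x') * t) ^ 2) = 0 := by
    linear_combination -h5 - t' * r + t * r'
  have h7 : 2 * (t - t') ≠ 0 := mul_ne_zero h2 (sub_ne_zero.2 hne)
  have := (mul_eq_zero.1 h6).resolve_left h7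
  linear_combination this

lemma core_E2 {K ι : Type*} [Field K] [DecidableEq K] [Fintype ι] (s t : ι → K)
    (hc : (Fintype.card ι : K) = -1) (hs : ∑ j, s j = -1) (ht : ∑ j, t j = 0)
    (h0 : ∀ j, t j = 0 → s j = 0) (i : ι) (hti : t i ≠ 0)
    (hE1 : ∀ j, t j ≠ 0 → t i ≠ t j → s i * t j ^ 2 + s j * t i ^ 2 = (s i * t j - s j * t i) ^ 2)
    (r : (∑ j, (1 - s j) ^ 2) * t i ^ 2 + 2 * s i * t i * (∑ j, (1 - s j) * t j) + s i ^ 2 * (∑ j, t j ^ 2) = s i * ((∑ j, t j ^ 2) + 2 * t i ^ 2)) :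
    ∑ j ∈ Finset.univ.filter (fun j => t j = t i), ((s j - s i) ^ 2 - s i - s j) = 2 * s i := by
  have key : ∀ j, (1 - s j) ^ 2 * t i ^ 2 + 2 * s i * t i * ((1 - s j) * t j) + s i ^ 2 * t j ^ 2 - s i * t j ^ 2
      = t i ^ 2 * (if t j = t i then ((s j - s i) ^ 2 - s i - s j) else 0) + (t i ^ 2 * 1 + 2 * t i * s i * t j - 2 * t i ^ 2 * s j + t i ^ 2 * s j) := by
    intro j
    split_ifs with h
    · rw [h]; ring
    · by_cases h' : t j = 0
      · rw [h', h0 j h']; ring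
      · linear_combination -(hE1 j h' (Ne.symm h))
  have hsum := Finset.sum_congr (rfl : (Finset.univ : Finset ι) = Finset.univ) (fun j _ => key j)
  simp only [Finset.sum_add_distrib, Finset.sum_sub_distrib, ← Finset.mul_sum, ← Finset.sum_mul] at hsum
  rw [← Finset.sum_filter, hs, ht] at hsum
  simp only [Finset.sum_const, Finset.card_univ, nsmul_eq_mul, mul_one, hc] at hsum
  have h2 : t i ^ 2 ≠ 0 := pow_ne_zero 2 hti
  apply mul_left_cancel₀ h2
  linear_combination r - hsum

lemma cast_neg_one (p n : ℕ) (hp : 1 < p) (h : (n : ZMod p) = -1) : p - 1 ≤ n := by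
  have : ((n + 1 : ℕ) : ZMod p) = 0 := by push_cast; rw [h]; ring
  rw [ZMod.natCast_eq_zero_iff] at this
  have := Nat.le_of_dvd (by omega) this
  omega

lemma core_fin (p : ℕ) [Fact p.Prime] (hp3 : 3 ≤ p) {ι : Type*} [Fintype ι] [DecidableEq ι] (s t : ι → ZMod p)
    (hc : Fintype.card ι = 2 * p - 1) (hs : ∑ j, s j = -1) (ht : ∑ j, t j = 0)
    (h0 : ∀ j, t j = 0 → s j = 0) (i0 j0 : ι) (hij0 : i0 ≠ j0) (hi0 : t i0 = 0) (hj0 : t j0 = 0)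
    (hE1 : ∀ i j, t i ≠ 0 → t j ≠ 0 → t i ≠ t j → s i * t j ^ 2 + s j * t i ^ 2 = (s i * t j - s j * t i) ^ 2)
    (hE2 : ∀ i, t i ≠ 0 → ∑ j ∈ Finset.univ.filter (fun j => t j = t i), ((s j - s i) ^ 2 - s i - s j) = 2 * s i) :
    ∃ σ τ : ZMod p, p - 1 ≤ (Finset.univ.filter (fun j => s j = σ ∧ t j = τ)).card := by
  have hpp : p.Prime := Fact.out
  have h2 : (2 : ZMod p) ≠ 0 := by
    intro h
    have h' : ((2 : ℕ) : ZMod p) = 0 := by exact_mod_cast h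
    rw [ZMod.natCast_eq_zero_iff] at h'
    have := Nat.le_of_dvd (by norm_num) h'
    omega
  by_contra hcon
  push Not at hcon
  -- another class
  have stepA : ∀ i, t i ≠ 0 → ∃ k, t k ≠ 0 ∧ t k ≠ t i := by
    intro i hti
    by_contra hno
    push Not at hno
    have hsum : ∑ j, t j = ((Finset.univ.filter (fun j => t j ≠ 0)).card : ZMod p) * t i := by
      rw [← Finset.sum_filter_ne_zero, Finset.sum_congr rfl (g := fun _ => t i), Finset.sum_const, nsmul_eq_mul]
      intro j hj
      exact hno j (Finset.mem_filter.1 hj).2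
    rw [ht] at hsum
    have hN := (mul_eq_zero.1 hsum.symm).resolve_right hti
    rw [ZMod.natCast_eq_zero_iff] at hN
    have hadd := Finset.card_filter_add_card_filter_not (s := (Finset.univ : Finset ι)) (fun j => t j = 0)
    rw [Finset.card_univ, hc] at hadd
    have hge : 2 ≤ (Finset.univ.filter (fun j => t j = 0)).card := by
      rw [← Finset.card_pair hij0]
      apply Finset.card_le_card
      intro a ha
      simp only [Finset.mem_insert, Finset.mem_singleton] at ha
      rcases ha with rfl | rfl <;> simp [hi0, hj0]
    have hpos : 0 < (Finset.univ.filter (fun j => t j ≠ 0)).card :=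
      Finset.card_pos.2 ⟨i, by simp [hti]⟩
    have hle : (Finset.univ.filter (fun j => t j = 0)).card < p - 1 := by
      refine lt_of_le_of_lt (Finset.card_le_card ?_) (hcon 0 0)
      intro a ha
      simp only [Finset.mem_filter, Finset.mem_univ, true_and] at ha ⊢
      exact ⟨h0 a ha, ha⟩
    obtain ⟨m, hm⟩ := hN
    change _ + (Finset.univ.filter (fun j => t j ≠ 0)).card = _ at hadd
    rw [hm] at hadd hpos
    have : m < 2 := by
      by_contra hmm
      have : p * 2 ≤ p * m := Nat.mul_le_mul_left _ (by omega)
      omega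
    interval_cases m <;> omega
  have stepB : ∀ i, t i ≠ 0 → (∀ j, t j = t i → s j = s i) → s i = 0 := by
    intro i hti hone
    have h := hE2 i hti
    rw [Finset.sum_congr rfl (g := fun _ => -2 * s i)] at h
    · rw [Finset.sum_const, nsmul_eq_mul] at h
      have h3 : (((Finset.univ.filter (fun j => t j = t i)).card : ZMod p) + 1) * s i = 0 := by
        apply mul_left_cancel₀ h2
        linear_combination -h
      rcases mul_eq_zero.1 h3 with h4 | h4
      · exfalso
        have h5 := cast_neg_one p _ hpp.one_lt (eq_neg_of_add_eq_zero_left h4)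
        have h6 := hcon (s i) (t i)
        have : (Finset.univ.filter (fun j => t j = t i)) = (Finset.univ.filter (fun j => s j = s i ∧ t j = t i)) := by
          ext j
          simp only [Finset.mem_filter, Finset.mem_univ, true_and]
          exact ⟨fun h => ⟨hone j h, h⟩, fun h => h.2⟩
        rw [← this] at h6
        omega
      · exact h4
    · intro j hj
      rw [hone j (Finset.mem_filter.1 hj).2]; ring
  by_cases hall : ∀ i, t i ≠ 0 → (∀ j, t j = t i → s j = s i)
  · have : ∑ j, s j = 0 := by
      apply Finset.sum_eq_zero
      intro j _
      by_cases h : t j = 0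
      · exact h0 j h
      · exact stepB j h (hall j h)
    rw [hs] at this
    exact one_ne_zero (neg_eq_zero.1 this)
  · push Not at hall
    obtain ⟨i, hti, i', hti', hss⟩ := hall
    have hc2 : ∀ c, t c ≠ 0 → t c ≠ t i → 2 * s c * t i = (s i + s i' - 1) * t c := by
      intro c hc0 hci
      have e := hE1 i c hti hc0 (Ne.symm hci)
      have e' := hE1 i' c (by rw [hti']; exact hti) hc0 (by rw [hti']; exact Ne.symm hci)
      rw [hti'] at e'
      have hn : (s i - s i') * t c ≠ 0 := mul_ne_zero (sub_ne_zero.2 (Ne.symm hss)) hc0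
      apply mul_left_cancel₀ hn
      linear_combination e - e'
    have hout : ∀ c, t c ≠ t i → s c = 0 := by
      intro c hci
      by_cases hc0 : t c = 0
      · exact h0 c hc0
      · apply stepB c hc0
        intro d hd
        have a1 := hc2 c hc0 hci
        have a2 := hc2 d (by rw [hd]; exact hc0) (by rw [hd]; exact hci)
        rw [hd] at a2
        have hn : 2 * t i ≠ 0 := mul_ne_zero h2 hti
        apply mul_left_cancel₀ hn
        linear_combination a2 - a1
    obtain ⟨c, hc0, hci⟩ := stepA i hti
    have hin : ∀ j, t j = t i → s j = 0 ∨ s j = 1 := by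
      intro j hj
      have e := hE1 j c (by rw [hj]; exact hti) hc0 (by rw [hj]; exact Ne.symm hci)
      rw [hout c hci] at e
      have : t c ^ 2 * (s j * (s j - 1)) = 0 := by linear_combination -e
      rcases mul_eq_zero.1 ((mul_eq_zero.1 this).resolve_left (pow_ne_zero 2 hc0)) with h | h
      · exact Or.inl h
      · exact Or.inr (sub_eq_zero.1 h)
    have hv : ∀ j, s j = if (s j = 1 ∧ t j = t i) then 1 else 0 := by
      intro j
      by_cases hj : t j = t i
      · rcases hin j hj with h | h
        · simp [h]
        · simp [h, hj]
      · simp [hout j hj]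
    rw [Finset.sum_congr rfl (fun j _ => hv j), ← Finset.sum_filter, Finset.sum_const, nsmul_eq_mul, mul_one] at hs
    have := cast_neg_one p _ hpp.one_lt hs
    have := hcon 1 (t i)
    omega


noncomputable def phi (p : ℕ) [Fact p.Prime] {ι : Type*} [DecidableEq ι] [Fintype ι] (g : ι → ZMod p × ZMod p) (i j : ι) :
    (ZMod p × ZMod p) →ₗ[ZMod p] ZMod p where
  toFun h := eps p ((∏ l ∈ (Finset.univ.erase i).erase j, LL p (g l)) * LL p h)
  map_add' h h' := by rw [LL_add, mul_add, map_add]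
  map_smul' c h := by
    rw [LL_smul, mul_left_comm, eps_C_mul]; rfl

section
variable (p : ℕ) [Fact p.Prime] {ι : Type*} [DecidableEq ι] [Fintype ι] (g : ι → ZMod p × ZMod p)
  (hcard : Fintype.card ι = 2 * p - 1)
  (hm : ∀ I : Finset ι, I.Nonempty → I ≠ Finset.univ → ∑ i ∈ I, g i ≠ 0)

include hcard hm

lemma phi_right (i j : ι) (hij : i ≠ j) : phi p g i j (g j) = 1 := by
  have mj : j ∈ Finset.univ.erase i := by simp [hij.symm]
  have := level_one p g hcard hm i
  rw [← Finset.prod_erase_mul _ _ mj] at this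
  exact this

lemma phi_left (i j : ι) (hij : i ≠ j) : phi p g i j (g i) = 1 := by
  have mi : i ∈ Finset.univ.erase j := by simp [hij]
  have := level_one p g hcard hm j
  rw [← Finset.prod_erase_mul _ _ mi, Finset.erase_right_comm] at this
  exact this

lemma g_eq (i j : ι) (hd : (g i).1 * (g j).2 = (g i).2 * (g j).1) : g i = g j := by
  by_cases hij : i = j
  · rw [hij]
  have hl := phi_left p g hcard hm i j hij
  have hr := phi_right p g hcard hm i j hij
  generalize phi p g i j = φ at *
  have key : ∀ h, φ h = φ (1, 0) * h.1 + φ (0, 1) * h.2 := by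
    intro h
    have : h = h.1 • ((1 : ZMod p), (0 : ZMod p)) + h.2 • ((0 : ZMod p), (1 : ZMod p)) := by ext <;> simp
    conv_lhs => rw [this]
    rw [map_add, map_smul, map_smul]; simp [mul_comm]
  rw [key] at hl hr
  ext
  · linear_combination (g i).1 * (-hr) + (g j).1 * hl + φ (0, 1) * hd
  · linear_combination (g i).2 * (-hr) + (g j).2 * hl - φ (1, 0) * hd

lemma exists_pair (hp3 : 3 ≤ p) : ∃ i j, i ≠ j ∧ g i = g j := by
  let d : ι → Option (ZMod p) := fun i => if (g i).1 = 0 then none else some ((g i).2 / (g i).1)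
  obtain ⟨i, j, hij, he⟩ := Fintype.exists_ne_map_eq_of_card_lt d (by
    rw [Fintype.card_option, ZMod.card, hcard]; omega)
  refine ⟨i, j, hij, g_eq p g hcard hm i j ?_⟩
  simp only [d] at he
  by_cases h1 : (g i).1 = 0 <;> by_cases h2 : (g j).1 = 0
  · simp [h1, h2]
  · simp [h1, h2] at he
  · simp [h1, h2] at he
  · simp only [h1, h2, if_false, Option.some.injEq] at he
    field_simp at he
    linear_combination -he

lemma propB (hs : ∑ i, g i = 0) : ∃ f, p - 1 ≤ (Finset.univ.filter (fun i => g i = f)).card := by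
  have hpp : p.Prime := Fact.out
  have hp2 := hpp.two_le
  by_cases hp3 : 3 ≤ p
  swap
  · have : Nonempty ι := Fintype.card_pos_iff.1 (by omega)
    obtain ⟨i⟩ := this
    refine ⟨g i, ?_⟩
    have : 0 < (Finset.univ.filter (fun j => g j = g i)).card := Finset.card_pos.2 ⟨i, by simp⟩
    omega
  obtain ⟨i0, j0, hij0, hg0⟩ := exists_pair p g hcard hm hp3
  by_cases hp5 : 5 ≤ p
  swap
  · refine ⟨g i0, ?_⟩
    have hge : 2 ≤ (Finset.univ.filter (fun j => g j = g i0)).card := by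
      rw [← Finset.card_pair hij0]
      apply Finset.card_le_card
      intro a ha
      simp only [Finset.mem_insert, Finset.mem_singleton] at ha
      rcases ha with rfl | rfl <;> simp [hg0]
    have : p ≠ 4 := by rintro rfl; revert hpp; decide
    omega
  have small : ∀ n : ℕ, 0 < n → n < p → (n : ZMod p) ≠ 0 := by
    intro n h0 h1 h
    rw [ZMod.natCast_eq_zero_iff] at h
    have := Nat.le_of_dvd h0 h
    omega
  have h2 : (2 : ZMod p) ≠ 0 := by exact_mod_cast small 2 (by omega) (by omega)
  obtain ⟨a, ha⟩ : ∃ a, a = g i0 := ⟨_, rfl⟩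
  obtain ⟨φ, hφ⟩ : ∃ φ, φ = phi p g i0 j0 := ⟨_, rfl⟩
  have hφa : φ a = 1 := by rw [hφ, ha]; exact phi_left p g hcard hm i0 j0 hij0
  have key : ∀ h, φ h = φ (1, 0) * h.1 + φ (0, 1) * h.2 := by
    intro h
    have : h = h.1 • ((1 : ZMod p), (0 : ZMod p)) + h.2 • ((0 : ZMod p), (1 : ZMod p)) := by ext <;> simp
    conv_lhs => rw [this]
    rw [map_add, map_smul, map_smul]; simp [mul_comm]
  obtain ⟨c, hc⟩ : ∃ c : ZMod p × ZMod p, c = (-φ (0, 1), φ (1, 0)) := ⟨_, rfl⟩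
  have hdec : ∀ h, h = φ h • a + (a.1 * h.2 - a.2 * h.1) • c := by
    intro h
    have e := hφa
    rw [key] at e
    rw [key h, hc]
    ext
    · simp only [Prod.fst_add, Prod.smul_fst, smul_eq_mul]
      linear_combination (-h.1) * e
    · simp only [Prod.snd_add, Prod.smul_snd, smul_eq_mul]
      linear_combination (-h.2) * e
  obtain ⟨x, hx⟩ : ∃ x : ι → ZMod p, ∀ k, x k = φ (g k) := ⟨fun k => φ (g k), fun _ => rfl⟩
  obtain ⟨t, ht⟩ : ∃ t : ι → ZMod p, ∀ k, t k = a.1 * (g k).2 - a.2 * (g k).1 := ⟨fun k => _, fun _ => rfl⟩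
  have hg : ∀ k, g k = x k • a + t k • c := by
    intro k; rw [hx, ht]; exact hdec (g k)
  have xi0 : x i0 = 1 := by rw [hx, ← ha, hφa]
  have xj0 : x j0 = 1 := by rw [hx, ← hg0, ← ha, hφa]
  have ti0 : t i0 = 0 := by rw [ht, ← ha]; ring
  have tj0 : t j0 = 0 := by rw [ht, ← hg0, ← ha]; ring
  have hx0 : ∑ k, x k = 0 := by
    simp only [hx]; rw [← map_sum, hs, map_zero]
  have ht0 : ∑ k, t k = 0 := by
    have e1 : ∑ k, (g k).1 = 0 := by rw [← Prod.fst_sum, hs]; rfl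
    have e2 : ∑ k, (g k).2 = 0 := by rw [← Prod.snd_sum, hs]; rfl
    simp only [ht, Finset.sum_sub_distrib, ← Finset.mul_sum, e1, e2]; ring
  have hcc : (Fintype.card ι : ZMod p) = -1 := by
    rw [hcard]
    have : ((2 * p - 1 : ℕ) : ZMod p) + 1 = ((2 * p : ℕ) : ZMod p) := by
      rw [← Nat.cast_one (R := ZMod p), ← Nat.cast_add]; congr 1; omega
    have h3 : ((2 * p : ℕ) : ZMod p) = 0 := by simp
    rw [h3] at this
    exact eq_neg_of_add_eq_zero_left this
  have hs1 : ∑ k, (1 - x k) = -1 := by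
    rw [Finset.sum_sub_distrib, hx0]; simp [hcc]
  have h0 : ∀ k, t k = 0 → 1 - x k = 0 := by
    intro k hk
    have : g i0 = g k := g_eq p g hcard hm i0 k (by
      rw [ht, ha] at hk; linear_combination hk)
    rw [hx, ← this, ← ha, hφa, sub_self]
  have nei : ∀ k, t k ≠ 0 → i0 ≠ k := by rintro k hk rfl; exact hk ti0
  have nej : ∀ k, t k ≠ 0 → j0 ≠ k := by rintro k hk rfl; exact hk tj0
  have hR : ∀ k, t k ≠ 0 → (∑ l, x l ^ 2) * t k ^ 2 + 2 * (1 - x k) * t k * (∑ l, x l * t l) + (1 - x k) ^ 2 * (∑ l, t l ^ 2)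
       = (1 - x k) * ((∑ l, t l ^ 2) + 2 * t k ^ 2) := by
    intro k hk
    obtain ⟨A, B, D, q1, q2, q3, q4, q5⟩ := triple p g hp5 hcard hs hm a c x t hg i0 j0 k hij0 (nei k hk) (nej k hk)
    have q6 := q1 (g k) (x k) (t k) (hg k)
    have q7 : eps p ((∏ l ∈ (Finset.univ.erase i0).erase j0, LL p (g l)) * LL p (g k)) = x k := by
      rw [hx, hφ]; rfl
    rw [q7] at q6
    rw [xi0, xj0, ti0, tj0] at q2
    have hA : A = 1 := by linear_combination q2
    subst hA
    rw [xi0, ti0] at q3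
    rw [xi0, ti0, xj0, tj0] at q5
    apply core_R1 (x k) (t k) B D _ _ _ hk
    · linear_combination q3
    · linear_combination -q6
    · linear_combination q5 + 2 * q6
  have hE1 : ∀ i j, t i ≠ 0 → t j ≠ 0 → t i ≠ t j →
      (1 - x i) * t j ^ 2 + (1 - x j) * t i ^ 2 = ((1 - x i) * t j - (1 - x j) * t i) ^ 2 := by
    intro i j hi hj hne
    obtain ⟨A, B, D, -, q2, q3, q4, q5⟩ := triple p g hp5 hcard hs hm a c x t hg i0 i j (nei i hi) (nei j hj) (fun h => hne (by rw [h]))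
    rw [xi0, ti0] at q2 q3 q5
    apply core_E1 h2 (x i) (t i) (x j) (t j) A B D _ _ _ hi hj hne _ _ _ _ (hR i hi) (hR j hj)
    · linear_combination q2
    · linear_combination q3
    · linear_combination q4
    · linear_combination q5
  have hE2 : ∀ i, t i ≠ 0 → ∑ j ∈ Finset.univ.filter (fun j => t j = t i), (((1 - x j) - (1 - x i)) ^ 2 - (1 - x i) - (1 - x j)) = 2 * (1 - x i) := by
    intro i hi
    apply core_E2 (fun k => 1 - x k) t hcc hs1 ht0 h0 i hi
    · intro j hj hne; exact hE1 i j hi hj hne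
    · have := hR i hi
      simpa only [sub_sub_cancel] using this
  obtain ⟨σ, τ, hστ⟩ := core_fin p hp3 (fun k => 1 - x k) t hcard hs1 ht0 h0 i0 j0 hij0 ti0 tj0 hE1 hE2
  refine ⟨(1 - σ) • a + τ • c, hστ.trans (Finset.card_le_card ?_)⟩
  intro k hk
  simp only [Finset.mem_filter, Finset.mem_univ, true_and] at hk ⊢
  rw [hg k, hk.2, ← hk.1, sub_sub_cancel]

lemma structure2 (hs : ∑ i, g i = 0) : ∃ (f : ZMod p × ZMod p) (A : Finset ι), f ≠ 0 ∧ A.card = p - 1 ∧ (∀ i ∈ A, g i = f) ∧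
    ∀ j ∉ A, (∀ i ∉ A, ∃ γ : ZMod p, g i = g j + γ • f) ∧ ∃ φ : (ZMod p × ZMod p) →ₗ[ZMod p] ZMod p, φ f = 0 ∧ φ (g j) = 1 := by
  have hpp : p.Prime := Fact.out
  have hp2 := hpp.two_le
  obtain ⟨f, hf⟩ := propB p g hcard hm hs
  obtain ⟨A, hAs, hA⟩ := Finset.exists_subset_card_eq hf
  have hAf : ∀ i ∈ A, g i = f := fun i hi => (Finset.mem_filter.1 (hAs hi)).2
  have hphi : ∀ i ∉ A, ∀ j ∉ A, phi p g i j f = 0 := by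
    intro i hi j hj
    have hsub : A ⊆ (Finset.univ.erase i).erase j := by
      intro a ha
      simp only [Finset.mem_erase, Finset.mem_univ, and_true]
      exact ⟨fun h => hj (h ▸ ha), fun h => hi (h ▸ ha)⟩
    change eps p _ = 0
    apply eps_JJ
    rw [← Finset.prod_sdiff hsub, Finset.prod_congr rfl (g := fun _ => LL p f) (s₁ := A) (fun i hi => by rw [hAf i hi]), Finset.prod_const, hA, mul_assoc, ← pow_succ, show p - 1 + 1 = p by omega]
    exact Ideal.mul_mem_left _ _ (LL_pow p f)
  have hfne : f ≠ 0 := by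
    have hne : A.Nonempty := Finset.card_pos.1 (by omega)
    obtain ⟨i, hi⟩ := hne
    have := hm {i} (Finset.singleton_nonempty i) (by
      intro h
      have := congrArg Finset.card h
      rw [Finset.card_singleton, Finset.card_univ, hcard] at this
      omega)
    rw [Finset.sum_singleton, hAf i hi] at this
    exact this
  refine ⟨f, A, hfne, hA, hAf, ?_⟩
  intro j hj
  constructor
  · intro i hi
    by_cases hij : i = j
    · exact ⟨0, by rw [hij]; simp⟩
    have z := hphi i hi j hj
    have z1 := phi_left p g hcard hm i j hij
    have z2 := phi_right p g hcard hm i j hij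
    generalize phi p g i j = φ at *
    have key : ∀ h, φ h = φ (1, 0) * h.1 + φ (0, 1) * h.2 := by
      intro h
      have : h = h.1 • ((1 : ZMod p), (0 : ZMod p)) + h.2 • ((0 : ZMod p), (1 : ZMod p)) := by ext <;> simp
      conv_lhs => rw [this]
      rw [map_add, map_smul, map_smul]; simp [mul_comm]
    have hdet : f.1 * (g i - g j).2 - f.2 * (g i - g j).1 = 0 := by
      have w : φ (g i - g j) = 0 := by rw [map_sub, z1, z2, sub_self]
      rw [key] at z z1 w
      linear_combination (-(f.1 * (g i - g j).2 - f.2 * (g i - g j).1)) * z1 + ((g i - g j).2 * (g i).1 - (g i - g j).1 * (g i).2) * z + (f.1 * (g i).2 - f.2 * (g i).1) * w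
    by_cases h1 : f.1 = 0
    · have h2 : f.2 ≠ 0 := fun h => hfne (Prod.ext h1 h)
      refine ⟨(g i - g j).2 / f.2, ?_⟩
      have : (g i - g j).1 = 0 := by
        rw [h1] at hdet
        have : f.2 * (g i - g j).1 = 0 := by linear_combination -hdet
        exact (mul_eq_zero.1 this).resolve_left h2
      rw [Prod.fst_sub] at this
      ext
      · simp only [Prod.fst_add, Prod.smul_fst, smul_eq_mul, h1]; linear_combination this
      · simp only [Prod.snd_add, Prod.smul_snd, smul_eq_mul, Prod.snd_sub]; field_simp; ring
    · refine ⟨(g i - g j).1 / f.1, ?_⟩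
      simp only [Prod.fst_sub, Prod.snd_sub] at hdet
      ext
      · simp only [Prod.fst_add, Prod.smul_fst, smul_eq_mul, Prod.fst_sub]; field_simp; ring
      · simp only [Prod.snd_add, Prod.smul_snd, smul_eq_mul, Prod.fst_sub]; field_simp; linear_combination hdet
  · have hc2 : 0 < ((Finset.univ \ A).erase j).card := by
      rw [Finset.card_erase_of_mem (by simp [hj]), Finset.card_sdiff_of_subset (Finset.subset_univ A), Finset.card_univ, hcard, hA]
      omega
    obtain ⟨i, hi⟩ := Finset.card_pos.1 hc2
    simp only [Finset.mem_erase, Finset.mem_sdiff, Finset.mem_univ, true_and] at hi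
    exact ⟨phi p g i j, hphi i hi.2 j hj, phi_right p g hcard hm i j hi.1⟩
end


lemma exists_proj (p : ℕ) [Fact p.Prime] (e : ZMod p × ZMod p × ZMod p) (he : e ≠ 0) :
    ∃ π : (ZMod p × ZMod p × ZMod p) →ₗ[ZMod p] (ZMod p × ZMod p),
      Function.Surjective π ∧ π e = 0 ∧ ∀ w, π w = 0 → ∃ c : ZMod p, w = c • e := by
  have h1 := Submodule.finrank_quotient_add_finrank (Submodule.span (ZMod p) {e})
  rw [finrank_span_singleton he] at h1
  have h3 : Module.finrank (ZMod p) (ZMod p × ZMod p × ZMod p) = 3 := by simp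
  rw [h3] at h1
  have h2 : Module.finrank (ZMod p) (ZMod p × ZMod p) = 2 := by simp
  let E := LinearEquiv.ofFinrankEq (R := ZMod p) ((ZMod p × ZMod p × ZMod p) ⧸ Submodule.span (ZMod p) {e}) (ZMod p × ZMod p) (by omega)
  refine ⟨E.toLinearMap ∘ₗ (Submodule.span (ZMod p) {e}).mkQ, ?_, ?_, ?_⟩
  · rw [LinearMap.coe_comp]
    exact E.surjective.comp (Submodule.mkQ_surjective _)
  · simp [Submodule.mem_span_singleton_self]
  · intro w hw
    have : w ∈ Submodule.span (ZMod p) {e} := by simpa using hw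
    obtain ⟨c, hc⟩ := Submodule.mem_span_singleton.1 this
    exact ⟨c, hc.symm⟩

lemma map_reindex {ι β : Type*} (A : Finset ι) (n : ℕ) (e : Fin n ≃ A) (v : ι → β) :
    A.val.map v = (Finset.univ : Finset (Fin n)).val.map (fun k => v (e k)) := by
  have h1 : (Finset.univ : Finset (Fin n)).val.map (fun k => v (e k)) =
      ((Finset.univ : Finset (Fin n)).val.map e).map (fun a : A => v a) := by
    rw [Multiset.map_map]; rfl
  rw [h1, Multiset.map_univ_val_equiv, Finset.univ_eq_attach, Finset.attach_val]
  exact (Multiset.attach_map_val' A.val v).symm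

/-- Structure of a minimal zero-sum sequence of length `3p-2` over `(ℤ/pℤ)³` containing
an element `e₁` with multiplicity at least `p-1`. -/
theorem stmt_7 (p : ℕ) (hp : p.Prime)
    (S : Multiset (ZMod p × ZMod p × ZMod p))
    (hlen : Multiset.card S = 3 * p - 2)
    (hne : S ≠ 0) (hsum : S.sum = 0)
    (hmin : ∀ T < S, T ≠ 0 → T.sum ≠ 0)
    (e₁ : ZMod p × ZMod p × ZMod p) (he₁ : p - 1 ≤ S.count e₁) :
    ∃ e₂ e₃ : ZMod p × ZMod p × ZMod p,
      Function.Bijective (fun abc : ZMod p × ZMod p × ZMod p =>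
        abc.1 • e₁ + abc.2.1 • e₂ + abc.2.2 • e₃) ∧
      ∃ (α : Fin (p - 1) → ZMod p) (β γ : Fin p → ZMod p),
        S = Multiset.replicate (p - 1) e₁ +
            Multiset.map (fun i => α i • e₁ + e₂) (Finset.univ : Finset (Fin (p - 1))).val +
            Multiset.map (fun i => β i • e₁ + γ i • e₂ + e₃) (Finset.univ : Finset (Fin p)).val ∧
        (∑ i, α i) + (∑ i, β i) = 1 ∧ (∑ i, γ i) = 1 := by
  have : Fact p.Prime := ⟨hp⟩
  have hp2 := hp.two_le
  have he0 : e₁ ≠ 0 := by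
    intro h
    have hmem : e₁ ∈ S := Multiset.count_pos.1 (by omega)
    refine hmin {e₁} ?_ (by simp) (by simp [h])
    refine lt_of_le_of_ne (Multiset.singleton_le.2 hmem) ?_
    intro h'
    have := congrArg Multiset.card h'
    rw [Multiset.card_singleton, hlen] at this
    omega
  obtain ⟨S', hS'⟩ := Multiset.le_iff_exists_add.1 (Multiset.le_count_iff_replicate_le.1 he₁)
  have hcS' : Multiset.card S' = 2 * p - 1 := by
    have := congrArg Multiset.card hS'
    rw [hlen, Multiset.card_add, Multiset.card_replicate] at this
    omega
  obtain ⟨ι, _, _, v, hcard, hv⟩ : ∃ (ι : Type) (_ : DecidableEq ι) (_ : Fintype ι) (v : ι → ZMod p × ZMod p × ZMod p),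
      Fintype.card ι = 2 * p - 1 ∧ S' = Finset.univ.val.map v := by
    refine ⟨S'.ToType, Classical.decEq _, inferInstance, fun x => x.1, ?_, ?_⟩
    · rw [Multiset.card_coe, hcS']
    · exact (Multiset.map_univ_coe S').symm
  obtain ⟨π, hsurj, hπe, hker⟩ := exists_proj p e₁ he0
  have hm : ∀ I : Finset ι, I.Nonempty → I ≠ Finset.univ → ∑ i ∈ I, π (v i) ≠ 0 := by
    intro I hI hIu h
    rw [← map_sum] at h
    obtain ⟨c, hc⟩ := hker _ h
    have hk : (-c).val < p := ZMod.val_lt _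
    have hle : Multiset.replicate (-c).val e₁ + I.val.map v ≤ S := by
      rw [hS', hv]
      refine add_le_add (Multiset.replicate_le_replicate e₁ |>.2 (by omega)) (Multiset.map_le_map ?_)
      exact Finset.val_le_iff.2 (Finset.subset_univ I)
    refine hmin (Multiset.replicate (-c).val e₁ + I.val.map v) (lt_of_le_of_ne hle ?_) ?_ ?_
    · intro h'
      have := congrArg Multiset.card h'
      rw [hlen, Multiset.card_add, Multiset.card_replicate, Multiset.card_map] at this
      have h2 : I.card < Fintype.card ι := by
        rw [← Finset.card_univ]
        exact Finset.card_lt_card (Finset.ssubset_univ_iff.2 hIu)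
      rw [hcard] at h2
      change _ + I.card = _ at this
      omega
    · intro h'
      have := congrArg Multiset.card h'
      rw [Multiset.card_add, Multiset.card_map, Multiset.card_zero] at this
      have h2 : 0 < I.card := hI.card_pos
      change _ + I.card = _ at this
      omega
    · rw [Multiset.sum_add, Multiset.sum_replicate]
      change _ + ∑ i ∈ I, v i = 0
      rw [hc, ← Nat.cast_smul_eq_nsmul (ZMod p), ZMod.natCast_val, ZMod.cast_id', id, neg_smul, neg_add_cancel]
  have hs : ∑ i, π (v i) = 0 := by
    have h := hsum
    rw [hS', hv, Multiset.sum_add, Multiset.sum_replicate] at h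
    change _ + ∑ i, v i = 0 at h
    have := congrArg π h
    rw [map_add, map_nsmul, hπe, smul_zero, zero_add, map_sum, map_zero] at this
    exact this
  obtain ⟨f, A, hf0, hA, hAf, hrest⟩ := structure2 p (fun i => π (v i)) hcard hm hs
  have hAc : Aᶜ.card = p := by
    rw [Finset.card_compl, hcard, hA]; omega
  obtain ⟨k0, hk0⟩ : ∃ k, k ∉ A := by
    obtain ⟨k, hk⟩ := Finset.card_pos.1 (show 0 < Aᶜ.card by omega)
    exact ⟨k, Finset.mem_compl.1 hk⟩
  obtain ⟨hγ, φ, hφf, hφk⟩ := hrest k0 hk0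
  obtain ⟨e₂, he₂⟩ := hsurj f
  have hindep : ∀ a b c : ZMod p, a • e₁ + b • e₂ + c • v k0 = 0 → a = 0 ∧ b = 0 ∧ c = 0 := by
    intro a b c h
    have h1 := congrArg π h
    rw [map_add, map_add, map_smul, map_smul, map_smul, hπe, he₂, smul_zero, zero_add, map_zero] at h1
    have h2 := congrArg φ h1
    simp only [map_add, map_smul, hφf, hφk, map_zero, smul_eq_mul, mul_zero, mul_one, zero_add] at h2
    rw [h2, zero_smul, add_zero] at h1
    have h3 : b = 0 := (smul_eq_zero.1 h1).resolve_right hf0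
    rw [h2, h3, zero_smul, zero_smul, add_zero, add_zero] at h
    exact ⟨(smul_eq_zero.1 h).resolve_right he0, h3, h2⟩
  refine ⟨e₂, v k0, ?_, ?_⟩
  · apply Finite.injective_iff_bijective.1
    rintro ⟨a, b, c⟩ ⟨a', b', c'⟩ h
    simp only at h
    have := hindep (a - a') (b - b') (c - c') (by
      simp only [sub_smul]
      rw [← sub_eq_zero] at h
      rw [← h]; abel)
    obtain ⟨h1, h2, h3⟩ := this
    rw [sub_eq_zero.1 h1, sub_eq_zero.1 h2, sub_eq_zero.1 h3]
  have hα : ∀ i : A, ∃ α : ZMod p, v i = α • e₁ + e₂ := by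
    intro i
    obtain ⟨c, hc⟩ := hker (v i - e₂) (by rw [map_sub, he₂, sub_eq_zero]; exact hAf i i.2)
    exact ⟨c, by rw [← hc]; abel⟩
  have hβ : ∀ i : (Aᶜ : Finset ι), ∃ β γ : ZMod p, v i = β • e₁ + γ • e₂ + v k0 := by
    intro i
    obtain ⟨γ, hg⟩ := hγ i (Finset.mem_compl.1 i.2)
    change π (v i) = π (v k0) + γ • f at hg
    obtain ⟨c, hc⟩ := hker (v i - (γ • e₂ + v k0)) (by rw [map_sub, map_add, map_smul, he₂, hg]; abel)
    exact ⟨c, γ, by rw [← hc]; abel⟩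
  choose α hα using hα
  choose β γ hβ using hβ
  have e := (A.equivFinOfCardEq hA).symm
  have e' := (Aᶜ.equivFinOfCardEq hAc).symm
  have hrep : S = Multiset.replicate (p - 1) e₁ +
            Multiset.map (fun i => α (e i) • e₁ + e₂) (Finset.univ : Finset (Fin (p - 1))).val +
            Multiset.map (fun i => β (e' i) • e₁ + γ (e' i) • e₂ + v k0) (Finset.univ : Finset (Fin p)).val := by
    have h1 : (Finset.univ : Finset ι).val = A.val + Aᶜ.val := by
      have := Finset.disjUnion_val A Aᶜ disjoint_compl_right
      rw [← this, Finset.disjUnion_eq_union, Finset.union_compl]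
    rw [hS', hv, h1, Multiset.map_add, map_reindex A _ e v, map_reindex Aᶜ _ e' v, ← add_assoc]
    simp only [hα, hβ]
  refine ⟨fun i => α (e i), fun i => β (e' i), fun i => γ (e' i), hrep, ?_⟩
  have h := hsum
  rw [hrep, Multiset.sum_add, Multiset.sum_add, Multiset.sum_replicate] at h
  change _ + ∑ i, (α (e i) • e₁ + e₂) + ∑ i, (β (e' i) • e₁ + γ (e' i) • e₂ + v k0) = 0 at h
  simp only [Finset.sum_add_distrib, ← Finset.sum_smul, Finset.sum_const, Finset.card_univ, Fintype.card_fin] at h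
  simp only [← Nat.cast_smul_eq_nsmul (ZMod p)] at h
  have hp1 : ((p - 1 : ℕ) : ZMod p) = -1 := by
    rw [Nat.cast_sub (by omega)]; simp
  rw [hp1, CharP.cast_eq_zero, zero_smul] at h
  have := hindep (∑ i, α (e i) + ∑ i, β (e' i) - 1) (∑ i, γ (e' i) - 1) 0 (by
    rw [← h]; simp only [sub_smul, add_smul, neg_smul, one_smul, zero_smul]; abel)
  exact ⟨sub_eq_zero.1 this.1, sub_eq_zero.1 this.2.1⟩
end

section
/- Let p be a prime, let k be an integer with 2 ≤ k ≤ p−2, let G = (ℤ/pℤ) ⊕ (ℤ/pℤ), and let (e₁,e₂) be a basis of G. Let ℓ ≥ p and v ≥ 0 be integers with (p−1) + ℓ + v = 2p−2+k, let a₁,…,a_ℓ ∈ ℤ/pℤ with ∑_{i=1}^{p} a_i = 1 in ℤ/pℤ, let b₁,…,b_v ∈ ℤ/pℤ, and let x₁,…,x_v ∈ ℤ/pℤ with x_i ≠ 0 and x_i ≠ 1 for all i. Set S = e₁^[p−1] · ∏_{i=1}^{ℓ}(a_i·e₁ + e₂) · ∏_{i=1}^{v}(b_i·e₁ + x_i·e₂).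 If S has no nonempty zero-sum subsequence of length at most 2p−1−k, then the maximum multiplicity of the sequence ∏_{i=1}^{ℓ}(a_i·e₁ + e₂) equals p−1; that is, there exists a ∈ ℤ/pℤ such that exactly p−1 of the indices i ∈ [1,ℓ] satisfy a_i = a. -/
namespace ZS

variable {p : ℕ} [Fact p.Prime]

/-- polynomial functions of degree `< n`. -/
def D (p : ℕ) (n : ℕ) : Submodule (ZMod p) (ZMod p × ZMod p → ZMod p) :=
  Submodule.span (ZMod p) {f | ∃ i j : ℕ, i + j < n ∧ f = fun z => z.1 ^ i * z.2 ^ j}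

lemma D_mono {m n : ℕ} (h : m ≤ n) : D p m ≤ D p n := by
  apply Submodule.span_mono
  rintro f ⟨i, j, hij, rfl⟩
  exact ⟨i, j, by omega, rfl⟩

lemma mono_mem {n i j : ℕ} (h : i + j < n) :
    (fun z : ZMod p × ZMod p => z.1 ^ i * z.2 ^ j) ∈ D p n :=
  Submodule.subset_span ⟨i, j, h, rfl⟩

lemma mul_fst {n : ℕ} {f : ZMod p × ZMod p → ZMod p} (hf : f ∈ D p n) :
    (fun z => z.1 * f z) ∈ D p (n + 1) := by
  induction hf using Submodule.span_induction with
  | mem f hf =>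
    obtain ⟨i, j, hij, rfl⟩ := hf
    convert mono_mem (p := p) (n := n + 1) (i := i + 1) (j := j) (by omega) using 2
    ring
  | zero =>
    convert (D p (n+1)).zero_mem using 1
    funext z; simp
  | add f g _ _ hf hg =>
    convert (D p (n+1)).add_mem hf hg using 1
    funext z; simp; ring
  | smul c f _ hf =>
    convert (D p (n+1)).smul_mem c hf using 1
    funext z; simp; ring

lemma mul_snd {n : ℕ} {f : ZMod p × ZMod p → ZMod p} (hf : f ∈ D p n) :
    (fun z => z.2 * f z) ∈ D p (n + 1) := by
  induction hf using Submodule.span_induction with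
  | mem f hf =>
    obtain ⟨i, j, hij, rfl⟩ := hf
    convert mono_mem (p := p) (n := n + 1) (i := i) (j := j + 1) (by omega) using 2
    ring
  | zero =>
    convert (D p (n+1)).zero_mem using 1
    funext z; simp
  | add f g _ _ hf hg =>
    convert (D p (n+1)).add_mem hf hg using 1
    funext z; simp; ring
  | smul c f _ hf =>
    convert (D p (n+1)).smul_mem c hf using 1
    funext z; simp; ring

lemma shift_mono (y : ZMod p × ZMod p) (i j : ℕ) :
    (fun z : ZMod p × ZMod p => (z - y).1 ^ i * (z - y).2 ^ j) ∈ D p (i + j + 1) := by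
  induction i with
  | zero =>
    induction j with
    | zero => simpa using mono_mem (p := p) (n := 1) (i := 0) (j := 0) (by omega)
    | succ j ih =>
      have h1 := mul_snd ih
      have h2 := (D p (0 + j + 1 + 1)).smul_mem (-y.2) (D_mono (Nat.le_succ _) ih)
      rw [show 0 + (j + 1) + 1 = 0 + j + 1 + 1 by ring]
      convert (D p (0 + j + 1 + 1)).add_mem h1 h2 using 1
      funext z; simp; ring
  | succ i ih =>
    have h1 := mul_fst ih
    have h2 := (D p (i + j + 1 + 1)).smul_mem (-y.1) (D_mono (Nat.le_succ _) ih)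
    rw [show i + 1 + j + 1 = i + j + 1 + 1 by ring]
    convert (D p (i + j + 1 + 1)).add_mem h1 h2 using 1
    funext z; simp; ring

lemma diff_mono (y : ZMod p × ZMod p) (i j : ℕ) :
    (fun z : ZMod p × ZMod p => z.1 ^ i * z.2 ^ j - (z - y).1 ^ i * (z - y).2 ^ j)
      ∈ D p (i + j) := by
  induction i with
  | zero =>
    induction j with
    | zero =>
      convert (D p 0).zero_mem using 1
      funext z; simp
    | succ j ih =>
      have h1 := mul_snd ih
      have h2 := (D p (0 + j + 1)).smul_mem (y.2) (shift_mono y 0 j)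
      rw [show 0 + (j + 1) = 0 + j + 1 by ring]
      convert (D p (0 + j + 1)).add_mem h1 h2 using 1
      funext z; simp; ring
  | succ i ih =>
    have h1 := mul_fst ih
    have h2 := (D p (i + j + 1)).smul_mem (y.1) (shift_mono y i j)
    rw [show i + 1 + j = i + j + 1 by ring]
    convert (D p (i + j + 1)).add_mem h1 h2 using 1
    funext z; simp; ring

lemma diff_mem {n : ℕ} (y : ZMod p × ZMod p) {f : ZMod p × ZMod p → ZMod p}
    (hf : f ∈ D p n) : (fun z => f z - f (z - y)) ∈ D p (n - 1) := by
  induction hf using Submodule.span_induction with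
  | mem f hf =>
    obtain ⟨i, j, hij, rfl⟩ := hf
    exact D_mono (by omega) (diff_mono y i j)
  | zero =>
    convert (D p (n-1)).zero_mem using 1
    funext z; simp
  | add f g _ _ hf hg =>
    convert (D p (n-1)).add_mem hf hg using 1
    funext z; simp; ring
  | smul c f _ hf =>
    convert (D p (n-1)).smul_mem c hf using 1
    funext z; simp; ring

/-- signed count of subsequences with a given sum -/
def th : List (ZMod p × ZMod p) → (ZMod p × ZMod p → ZMod p)
  | [] => fun z => if z = 0 then 1 else 0
  | g :: L => fun z => th L z - th L (z - g)

lemma th_mem (L : List (ZMod p × ZMod p)) : th L ∈ D p (2 * p - 1 - L.length) := by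
  induction L with
  | nil =>
    have hp : 2 ≤ p := (Fact.out : p.Prime).two_le
    have e : (th [] : ZMod p × ZMod p → ZMod p) =
        (fun z => z.1 ^ 0 * z.2 ^ 0) - (fun z => z.1 ^ (p-1) * z.2 ^ 0)
          - (fun z => z.1 ^ 0 * z.2 ^ (p-1)) + (fun z => z.1 ^ (p-1) * z.2 ^ (p-1)) := by
      funext z
      obtain ⟨u, x⟩ := z
      have h0 : (0 : ZMod p) ^ (p - 1) = 0 := zero_pow (by omega)
      by_cases hu : u = 0 <;> by_cases hx : x = 0 <;>
        simp [th, hu, hx, h0, ZMod.pow_card_sub_one_eq_one]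
    rw [e]
    refine add_mem (sub_mem (sub_mem ?_ ?_) ?_) ?_ <;> apply mono_mem <;> simp <;> omega
  | cons g L ih =>
    have := diff_mem g ih
    rw [List.length_cons, ← Nat.sub_sub]
    exact this

lemma th_attain (L : List (ZMod p × ZMod p)) (h : ZMod p × ZMod p) (hh : th L h ≠ 0) :
    ∃ T : Multiset (ZMod p × ZMod p), T ≤ (L : Multiset _) ∧ T.sum = h := by
  induction L generalizing h with
  | nil =>
    refine ⟨0, by simp, ?_⟩
    by_contra hne
    apply hh
    simp only [th]
    rw [if_neg]
    intro h0; apply hne; simp [h0]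
  | cons g L ih =>
    by_cases h1 : th L h = 0
    · have h2 : th L (h - g) ≠ 0 := by
        intro h2; apply hh; simp [th, h1, h2]
      obtain ⟨T, hT, hs⟩ := ih _ h2
      refine ⟨g ::ₘ T, ?_, by simp [hs]⟩
      rw [← Multiset.cons_coe]
      exact Multiset.cons_le_cons g hT
    · obtain ⟨T, hT, hs⟩ := ih _ h1
      refine ⟨T, ?_, hs⟩
      rw [← Multiset.cons_coe]
      exact hT.trans (Multiset.le_cons_self _ _)

/-- zero-sum free -/
def Zsf (M : Multiset (ZMod p × ZMod p)) : Prop := ∀ T ≤ M, T ≠ 0 → T.sum ≠ 0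

lemma Zsf.mono {M N : Multiset (ZMod p × ZMod p)} (h : Zsf N) (hMN : M ≤ N) : Zsf M :=
  fun T hT => h T (hT.trans hMN)

lemma th_zero (L : List (ZMod p × ZMod p)) (hL : Zsf (p := p) (L : Multiset (ZMod p × ZMod p))) : th L 0 = 1 := by
  induction L with
  | nil => simp [th]
  | cons g L ih =>
    rw [← Multiset.cons_coe] at hL
    have h1 := ih (hL.mono (Multiset.le_cons_self _ _))
    have h2 : th L (0 - g) = 0 := by
      by_contra hne
      obtain ⟨T, hT, hs⟩ := th_attain _ _ hne
      exact hL (g ::ₘ T) (Multiset.cons_le_cons g hT) (Multiset.cons_ne_zero) (by simp [hs])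
    simp [th, h1, h2] at *
    simp [h2]

lemma th_symm (L : List (ZMod p × ZMod p)) (h : ZMod p × ZMod p) :
    th L (L.sum - h) = (-1) ^ L.length * th L h := by
  induction L generalizing h with
  | nil => simp [th]
  | cons g L ih =>
    have h1 := ih (h - g)
    have h2 := ih h
    simp only [th, List.sum_cons, List.length_cons]
    rw [show g + L.sum - h = L.sum - (h - g) by abel, h1,
      show L.sum - (h - g) - g = L.sum - h by abel, h2]
    ring

lemma davenport (M : Multiset (ZMod p × ZMod p)) (hM : 2 * p - 1 ≤ M.card) :
    ∃ T ≤ M, T ≠ 0 ∧ T.sum = 0 := by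
  by_contra hcon
  push Not at hcon
  have hz : Zsf M := hcon
  induction M using Quotient.inductionOn with
  | h L =>
    have h1 := th_zero L hz
    have h2 := th_mem L
    have : 2 * p - 1 - L.length = 0 := by
      have : L.length = Multiset.card (L : Multiset (ZMod p × ZMod p)) := rfl
      simp at hM; omega
    rw [this] at h2
    have h3 : D p 0 = ⊥ := by
      rw [D, Submodule.span_eq_bot]
      rintro f ⟨i, j, hij, _⟩; omega
    rw [h3, Submodule.mem_bot] at h2
    rw [h2] at h1
    simp at h1

lemma cubic {f : ZMod p × ZMod p → ZMod p} (hf : f ∈ D p 4) :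
    ∃ (a0 a1 a2 a3 b0 b1 b2 c0 c1 d0 : ZMod p), ∀ u x, f (u, x) =
      (a0 + a1 * x + a2 * x^2 + a3 * x^3) + (b0 + b1 * x + b2 * x^2) * u
        + (c0 + c1 * x) * u^2 + d0 * u^3 := by
  induction hf using Submodule.span_induction with
  | mem f hf =>
    obtain ⟨i, j, hij, rfl⟩ := hf
    have hi : i < 4 := by omega
    have hj : j < 4 := by omega
    refine ⟨if i = 0 ∧ j = 0 then 1 else 0, if i = 0 ∧ j = 1 then 1 else 0,
      if i = 0 ∧ j = 2 then 1 else 0, if i = 0 ∧ j = 3 then 1 else 0,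
      if i = 1 ∧ j = 0 then 1 else 0, if i = 1 ∧ j = 1 then 1 else 0,
      if i = 1 ∧ j = 2 then 1 else 0, if i = 2 ∧ j = 0 then 1 else 0,
      if i = 2 ∧ j = 1 then 1 else 0, if i = 3 ∧ j = 0 then 1 else 0, ?_⟩
    intro u x
    interval_cases i <;> interval_cases j <;> simp at hij ⊢ <;> ring
  | zero => exact ⟨0,0,0,0,0,0,0,0,0,0, by intros; simp⟩
  | add f g _ _ hf hg =>
    obtain ⟨a0, a1, a2, a3, b0, b1, b2, c0, c1, d0, h⟩ := hf
    obtain ⟨a0', a1', a2', a3', b0', b1', b2', c0', c1', d0', h'⟩ := hg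
    refine ⟨a0+a0', a1+a1', a2+a2', a3+a3', b0+b0', b1+b1', b2+b2', c0+c0', c1+c1', d0+d0', ?_⟩
    intro u x
    simp only [Pi.add_apply, h, h']; ring
  | smul c f _ hf =>
    obtain ⟨a0, a1, a2, a3, b0, b1, b2, c0, c1, d0, h⟩ := hf
    refine ⟨c*a0, c*a1, c*a2, c*a3, c*b0, c*b1, c*b2, c*c0, c*c1, c*d0, ?_⟩
    intro u x
    simp only [Pi.smul_apply, h, smul_eq_mul]; ring

lemma quad_zero {F : Type*} [Field F] {A B C r s t : F} (hrs : r ≠ s) (hrt : r ≠ t) (hst : s ≠ t)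
    (h1 : A + B * r + C * r^2 = 0) (h2 : A + B * s + C * s^2 = 0)
    (h3 : A + B * t + C * t^2 = 0) : A = 0 ∧ B = 0 ∧ C = 0 := by
  have e1 : B + C * (r + s) = 0 := by
    apply mul_left_cancel₀ (sub_ne_zero.2 hrs); linear_combination h1 - h2
  have e2 : B + C * (r + t) = 0 := by
    apply mul_left_cancel₀ (sub_ne_zero.2 hrt); linear_combination h1 - h3
  have e3 : C = 0 := by
    apply mul_left_cancel₀ (sub_ne_zero.2 hst); linear_combination e1 - e2
  subst e3
  have : B = 0 := by simpa using e1
  subst this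
  simpa using h1

lemma cubic_zero {F : Type*} [Field F] {A B C E r s t w : F} (hrs : r ≠ s) (hrt : r ≠ t)
    (hst : s ≠ t) (hrw : r ≠ w) (hsw : s ≠ w) (htw : t ≠ w)
    (h1 : A + B * r + C * r^2 + E * r^3 = 0) (h2 : A + B * s + C * s^2 + E * s^3 = 0)
    (h3 : A + B * t + C * t^2 + E * t^3 = 0) (h4 : A + B * w + C * w^2 + E * w^3 = 0) :
    A = 0 ∧ B = 0 ∧ C = 0 ∧ E = 0 := by
  have e1 : B + C * (r + s) + E * (r^2 + r * s + s^2) = 0 := by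
    apply mul_left_cancel₀ (sub_ne_zero.2 hrs); linear_combination h1 - h2
  have e2 : B + C * (r + t) + E * (r^2 + r * t + t^2) = 0 := by
    apply mul_left_cancel₀ (sub_ne_zero.2 hrt); linear_combination h1 - h3
  have e3 : B + C * (r + w) + E * (r^2 + r * w + w^2) = 0 := by
    apply mul_left_cancel₀ (sub_ne_zero.2 hrw); linear_combination h1 - h4
  have e4 : C + E * (r + s + t) = 0 := by
    apply mul_left_cancel₀ (sub_ne_zero.2 hst); linear_combination e1 - e2
  have e5 : C + E * (r + s + w) = 0 := by
    apply mul_left_cancel₀ (sub_ne_zero.2 hsw); linear_combination e1 - e3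
  have e6 : E = 0 := by
    apply mul_left_cancel₀ (sub_ne_zero.2 htw); linear_combination e4 - e5
  subst e6
  obtain ⟨hA, hB, hC⟩ := quad_zero (A := A) (B := B) (C := C) hrs hrt hst
    (by linear_combination h1) (by linear_combination h2) (by linear_combination h3)
  exact ⟨hA, hB, hC, rfl⟩

lemma th_vanish (L : List (ZMod p × ZMod p)) (W T : Multiset (ZMod p × ZMod p))
    (hz : Zsf (W + (L : Multiset (ZMod p × ZMod p)))) (hT : T ≤ W) (hT0 : T ≠ 0) :
    th L (-T.sum) = 0 := by
  by_contra hne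
  obtain ⟨U, hU, hs⟩ := th_attain _ _ hne
  refine hz (T + U) (add_le_add hT hU) ?_ (by simp [hs])
  intro h
  apply hT0
  have := (add_eq_zero.1 h).1
  exact this

lemma lemM (hp5 : 5 ≤ p) (L : List (ZMod p × ZMod p)) (hL : L.length = 2 * p - 5)
    (α α' ξ : ZMod p)
    (hz : Zsf (({(α, 1), (α', 1), (1, 0)} : Multiset (ZMod p × ZMod p))
      + (L : Multiset (ZMod p × ZMod p))))
    (hs : L.sum.2 = ξ - 2) (h0 : ξ ≠ 0) (h1 : ξ ≠ -1) :
    α = α' ∨ α = α' + 1 ∨ α' = α + 1 := by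
  by_contra hcon
  push Not at hcon
  obtain ⟨n1, n2, n3⟩ := hcon
  have hmem := th_mem L
  rw [hL, show 2 * p - 1 - (2 * p - 5) = 4 by omega] at hmem
  obtain ⟨a0, a1, a2, a3, b0, b1, b2, c0, c1, d0, hf⟩ := cubic hmem
  have hle (X Y : Multiset (ZMod p × ZMod p)) : X ≤ X + Y := Multiset.le_add_right _ _
  have hle' (X Y : Multiset (ZMod p × ZMod p)) : Y ≤ X + Y := Multiset.le_add_left _ _
  have hone : (1 : ZMod p) ≠ 0 := one_ne_zero
  have v0 : th L (0, 0) = 1 := th_zero L (hz.mono (hle' _ _))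
  set g : ZMod p × ZMod p := (α, 1) with hg
  set g' : ZMod p × ZMod p := (α', 1) with hg'
  set e : ZMod p × ZMod p := (1, 0) with he
  have W1 : ({g, g', e} : Multiset (ZMod p × ZMod p)) = {g} + ({g'} + {e}) := rfl
  have ve := th_vanish L _ {e} hz (by rw [W1, ← add_assoc]; exact hle' _ _) (by simp)
  have vg := th_vanish L _ {g} hz (by rw [W1]; exact hle _ _) (by simp)
  have vg' := th_vanish L _ {g'} hz (by rw [W1, add_left_comm]; exact hle _ _) (by simp)
  have vge := th_vanish L _ ({g} + {e}) hz
    (by rw [W1, add_left_comm]; exact hle' _ _) (by simp)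
  have vge' := th_vanish L _ ({g'} + {e}) hz (by rw [W1]; exact hle' _ _) (by simp)
  have vgg := th_vanish L _ ({g} + {g'}) hz (by rw [W1, ← add_assoc]; exact hle _ _) (by simp)
  have vgge := th_vanish L _ ({g} + ({g'} + {e})) hz (by rw [W1]) (by simp)
  simp only [Multiset.sum_add, Multiset.sum_singleton, hg, hg', he, Prod.mk_add_mk, Prod.neg_mk]
    at ve vg vg' vge vge' vgg vgge
  rw [hf] at v0 ve vg vg' vge vge' vgg vgge
  obtain ⟨hA, hB, hC, hE⟩ := cubic_zero (r := -α) (s := -(α + 1)) (t := -α') (w := -(α' + 1))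
    (A := a0 - a1 + a2 - a3) (B := b0 - b1 + b2) (C := c0 - c1) (E := d0)
    (by intro h; apply hone; linear_combination h)
    (by intro h; apply n1; linear_combination -h)
    (by intro h; apply n3; linear_combination h)
    (by intro h; apply n2; linear_combination -h)
    (by intro h; apply n1; linear_combination -h)
    (by intro h; apply hone; linear_combination h)
    (by linear_combination vg) (by linear_combination vge)
    (by linear_combination vg') (by linear_combination vge')
  have hodd : (-1 : ZMod p) ^ L.length = -1 := by
    apply Odd.neg_one_pow
    rw [hL]; exact ⟨p - 3, by omega⟩
  have hsym : ∀ u, th L (u, ξ - 1) = 0 := by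
    intro u
    have := th_symm L (L.sum.1 - u, -1)
    rw [hodd, hf (L.sum.1 - u)] at this
    have e2 : L.sum - (L.sum.1 - u, -1) = (u, ξ - 1) := by
      ext
      · simp
      · simp [hs]; ring
    rw [e2] at this
    rw [this]
    subst hE
    linear_combination -hA - hB * (L.sum.1 - u) - hC * (L.sum.1 - u)^2
  have q0 := hsym 0
  have q1 := hsym 1
  have q2 := hsym (-1)
  rw [hf] at q0 q1 q2
  subst hE
  have two : (2 : ZMod p) ≠ 0 := by
    intro h
    have : ((2 : ℕ) : ZMod p) = 0 := by exact_mod_cast h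
    rw [ZMod.natCast_eq_zero_iff] at this
    have := Nat.le_of_dvd (by norm_num) this
    omega
  have qC : c0 + c1 * (ξ - 1) = 0 := by
    apply mul_left_cancel₀ two
    linear_combination q1 + q2 - 2 * q0
  have qB : b0 + b1 * (ξ - 1) + b2 * (ξ - 1)^2 = 0 := by
    apply mul_left_cancel₀ two
    linear_combination q1 - q2
  have hc1 : c1 = 0 := by
    apply mul_left_cancel₀ h0
    linear_combination qC - hC
  subst hc1
  have hc0 : c0 = 0 := by linear_combination hC
  subst hc0
  have hb1 : b1 = b2 * (2 - ξ) := by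
    apply mul_left_cancel₀ h0
    linear_combination qB - hB
  subst hb1
  have hb0 : b0 = b2 * (1 - ξ) := by linear_combination hB
  subst hb0
  have r1 : b2 * (1 - ξ) = 1 := by linear_combination v0 - ve
  have r2 : b2 * (1 + ξ) = 0 := by
    linear_combination -vgge + vgg
  rcases mul_eq_zero.1 r2 with h | h
  · rw [h] at r1; simp at r1
  · apply h1; linear_combination h

lemma le_add_split {X : Type*} [DecidableEq X] {T A B : Multiset X} (h : T ≤ A + B) :
    ∃ T1 T2, T1 ≤ A ∧ T2 ≤ B ∧ T = T1 + T2 := by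
  refine ⟨T ∩ A, T - A, Multiset.inter_le_right, ?_, ?_⟩
  · rw [Multiset.sub_le_iff_le_add, add_comm]; exact h
  · rw [add_comm, Multiset.sub_add_inter]

/-- the shear -/
def sh (z : ZMod p × ZMod p) : ZMod p × ZMod p := (z.1 - 1, z.2)

lemma sh_sum (U : Multiset (ZMod p × ZMod p)) :
    (U.map sh).sum = (U.sum.1 - (Multiset.card U : ZMod p), U.sum.2) := by
  induction U using Multiset.induction_on with
  | empty => ext <;> simp
  | cons a s ih =>
    rw [Multiset.map_cons, Multiset.sum_cons, ih]
    ext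
    · simp [sh]; ring
    · simp [sh]

lemma le_map_sh {T M : Multiset (ZMod p × ZMod p)} (h : T ≤ M.map sh) :
    ∃ U ≤ M, T = U.map sh := by
  have h2 := Multiset.map_le_map (f := fun z : ZMod p × ZMod p => (z.1 + 1, z.2)) h
  refine ⟨T.map (fun z : ZMod p × ZMod p => (z.1 + 1, z.2)), ?_, ?_⟩
  · rw [Multiset.map_map] at h2
    convert h2
    conv_lhs => rw [← Multiset.map_id M]
    apply Multiset.map_congr rfl
    intro z _
    simp [sh]
  · rw [Multiset.map_map]
    conv_lhs => rw [← Multiset.map_id T]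
    apply Multiset.map_congr rfl
    intro z _
    simp [sh]

lemma rep_sum (m : ℕ) :
    (Multiset.replicate m ((1, 0) : ZMod p × ZMod p)).sum = ((m : ZMod p), 0) := by
  rw [Multiset.sum_replicate]; ext <;> simp

lemma step1 {k : ℕ} (hk1 : 2 ≤ k) (hk2 : k + 2 ≤ p) (M : Multiset (ZMod p × ZMod p))
    (hM : Multiset.card M = p - 1 + k)
    (hzs : ∀ T ≤ Multiset.replicate (p - 1) ((1, 0) : ZMod p × ZMod p) + M, T ≠ 0 →
      Multiset.card T ≤ 2 * p - 1 - k → T.sum ≠ 0) :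
    Zsf (Multiset.replicate (p - k - 1) ((1, 0) : ZMod p × ZMod p) + M.map sh) := by
  intro T hT hT0 hs
  obtain ⟨T1, T2, hT1, hT2, rfl⟩ := le_add_split hT
  obtain ⟨i, hi, rfl⟩ := Multiset.le_replicate_iff.1 hT1
  obtain ⟨U, hU, rfl⟩ := le_map_sh hT2
  rw [Multiset.sum_add, rep_sum, sh_sum] at hs
  have hs1 : (i : ZMod p) + (U.sum.1 - (Multiset.card U : ZMod p)) = 0 := congrArg Prod.fst hs
  have hs2 : (0 : ZMod p) + U.sum.2 = 0 := congrArg Prod.snd hs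
  have hU0 : U ≠ 0 := by
    rintro rfl
    simp at hs1
    rw [ZMod.natCast_eq_zero_iff] at hs1
    have : i = 0 := Nat.eq_zero_of_dvd_of_lt hs1 (by omega)
    subst this
    simp at hT0
  have hUc : 0 < Multiset.card U := Multiset.card_pos.2 hU0
  have hUc2 := Multiset.card_le_card hU
  set m := (-U.sum.1).val with hm
  have hmp : m < p := ZMod.val_lt _
  have hmc : (m : ZMod p) = -U.sum.1 := ZMod.natCast_zmod_val _
  set Z := Multiset.replicate m ((1, 0) : ZMod p × ZMod p) + U with hZ
  have hZle : Z ≤ Multiset.replicate (p - 1) ((1, 0) : ZMod p × ZMod p) + M :=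
    add_le_add ((Multiset.replicate_le_replicate _).2 (by omega)) hU
  have hZs : Z.sum = 0 := by
    rw [hZ, Multiset.sum_add, rep_sum, hmc]
    ext
    · simp
    · simpa using hs2
  have hZc : Multiset.card Z = m + Multiset.card U := by simp [hZ]
  have hmod : ((Multiset.card Z : ℕ) : ZMod p) = (i : ZMod p) := by
    rw [hZc]; push_cast; rw [hmc]; linear_combination -hs1
  rw [ZMod.natCast_eq_natCast_iff', Nat.mod_eq_of_lt (show i < p by omega)] at hmod
  have hdm := Nat.div_add_mod (Multiset.card Z) p
  rw [hmod] at hdm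
  have hZ0 : Z ≠ 0 := by
    rw [← Multiset.card_pos]; omega
  by_cases hsmall : Multiset.card Z ≤ 2 * p - 1 - k
  · exact hzs Z hZle hZ0 hsmall hZs
  have hbig : Multiset.card Z = 2 * p + i := by
    have hd : Multiset.card Z / p < 3 := by
      rw [Nat.div_lt_iff_lt_mul (by omega)]; omega
    generalize Multiset.card Z / p = d at *
    interval_cases d <;> omega
  obtain ⟨z, hz⟩ := Multiset.exists_mem_of_ne_zero hZ0
  obtain ⟨R, hR⟩ := Multiset.exists_cons_of_mem hz
  have hRc : Multiset.card Z = Multiset.card R + 1 := by rw [hR]; simp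
  obtain ⟨V, hV, hV0, hVs⟩ := davenport R (by omega)
  obtain ⟨V', rfl⟩ := Multiset.le_iff_exists_add.1 hV
  have hR' : Z = V + (z ::ₘ V') := by rw [hR, Multiset.add_cons]
  have hVs' : (z ::ₘ V').sum = 0 := by
    rw [hR', Multiset.sum_add, hVs, zero_add] at hZs
    exact hZs
  have hcc : Multiset.card Z = Multiset.card V + Multiset.card (z ::ₘ V') := by
    rw [hR', Multiset.card_add]
  have l1 : V ≤ Z := by rw [hR']; exact Multiset.le_add_right _ _
  have l2 : (z ::ₘ V') ≤ Z := by rw [hR']; exact Multiset.le_add_left _ _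
  by_cases hv : Multiset.card V ≤ 2 * p - 1 - k
  · exact hzs V (l1.trans hZle) hV0 hv hVs
  · exact hzs _ (l2.trans hZle) Multiset.cons_ne_zero (by omega) hVs'

lemma step2 (hp5 : 5 ≤ p) (Z : Multiset (ZMod p × ZMod p)) (hc : Multiset.card Z = 2 * p - 2)
    (hz : Zsf Z) (α α' : ZMod p)
    (hle : ({(α, 1), (α', 1), (1, 0)} : Multiset (ZMod p × ZMod p)) ≤ Z)
    (h0 : Z.sum.2 ≠ 0) (h1 : Z.sum.2 ≠ -1) :
    α = α' ∨ α = α' + 1 ∨ α' = α + 1 := by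
  obtain ⟨Y, rfl⟩ := Multiset.le_iff_exists_add.1 hle
  apply lemM hp5 Y.toList _ α α' _ _ _ h0 h1
  · simp at hc ⊢
    omega
  · rw [Multiset.coe_toList]; exact hz
  · simp; ring

lemma swap (f : ZMod p × ZMod p) (R : Multiset (ZMod p × ZMod p)) (h : Zsf (f ::ₘ R)) :
    Zsf ((-(f + R.sum)) ::ₘ R) := by
  intro T hT hT0 hs
  by_cases hm : -(f + R.sum) ∈ T
  · obtain ⟨T', rfl⟩ := Multiset.exists_cons_of_mem hm
    rw [Multiset.cons_le_cons_iff] at hT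
    obtain ⟨V, rfl⟩ := Multiset.le_iff_exists_add.1 hT
    refine h (f ::ₘ V) (Multiset.cons_le_cons _ (Multiset.le_add_left _ _))
      Multiset.cons_ne_zero ?_
    rw [Multiset.sum_cons, Multiset.sum_add] at hs
    rw [Multiset.sum_cons]
    rw [← neg_eq_zero, ← hs]; abel
  · exact h T (((Multiset.le_cons_of_notMem hm).1 hT).trans (Multiset.le_cons_self _ _)) hT0 hs

lemma small_ne (hp5 : 5 ≤ p) (n : ℕ) (hn0 : 0 < n) (hn : n < p) : (n : ZMod p) ≠ 0 := by
  intro h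
  rw [ZMod.natCast_eq_zero_iff] at h
  have := Nat.le_of_dvd hn0 h
  omega

lemma two_vals (hp5 : 5 ≤ p) {ι : Type*} (a : ι → ZMod p) (i0 : ι)
    (hd : ∀ i i', a i = a i' ∨ a i = a i' + 1 ∨ a i' = a i + 1) :
    ∃ u, ∀ i, a i = u ∨ a i = u + 1 := by
  have t1 := small_ne hp5 1 (by omega) (by omega)
  have t2 := small_ne hp5 2 (by omega) (by omega)
  have t3 := small_ne hp5 3 (by omega) (by omega)
  push_cast at t1 t2 t3
  by_cases h : ∃ i1, a i0 = a i1 + 1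
  · obtain ⟨i1, h1⟩ := h
    refine ⟨a i1, fun i => ?_⟩
    rcases hd i i1 with h2 | h2 | h2
    · exact Or.inl h2
    · exact Or.inr h2
    · exfalso
      rcases hd i i0 with h3 | h3 | h3
      · apply t2; linear_combination -h3 - h2 - h1
      · apply t3; linear_combination -h3 - h2 - h1
      · apply t1; linear_combination h3 - h2 - h1
  · refine ⟨a i0, fun i => ?_⟩
    rcases hd i i0 with h2 | h2 | h2
    · exact Or.inl h2
    · exact Or.inr h2
    · exact absurd ⟨i, h2⟩ h

lemma step3 (hp5 : 5 ≤ p) {ℓ : ℕ} (hℓ : p ≤ ℓ) (a : Fin ℓ → ZMod p)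
    (ha : ∑ i ∈ Finset.univ.filter (fun i : Fin ℓ => (i : ℕ) < p), a i = 1)
    (hd : ∀ i i', a i = a i' ∨ a i = a i' + 1 ∨ a i' = a i + 1) :
    ∃ c : ZMod p, p - 1 ≤ (Finset.univ.filter (fun i : Fin ℓ => a i = c)).card := by
  obtain ⟨u, hu⟩ := two_vals hp5 a ⟨0, by omega⟩ hd
  refine ⟨u, ?_⟩
  set F := Finset.univ.filter (fun i : Fin ℓ => (i : ℕ) < p) with hF
  have hFc : F.card = p := by
    rw [hF, Fin.card_filter_val_lt]; omega
  have e1 : ∀ i ∈ F, a i = u + (if a i = u + 1 then 1 else 0) := by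
    intro i _
    rcases hu i with h | h
    · rw [if_neg, add_zero, h]
      rw [h]; simp
    · rw [if_pos h, h]
  rw [Finset.sum_congr rfl e1, Finset.sum_add_distrib, Finset.sum_const, hFc, Finset.sum_boole]
    at ha
  simp only [nsmul_eq_mul, CharP.cast_eq_zero, zero_mul, zero_add] at ha
  have hsp := Finset.card_filter_add_card_filter_not (s := F) (fun i => a i = u + 1)
  have hR : (F.filter (fun i => a i = u + 1)).card = 1 := by
    have h1 : (((F.filter (fun i => a i = u + 1)).card : ℕ) : ZMod p) = ((1 : ℕ) : ZMod p) := by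
      rw [ha]; simp
    rw [ZMod.natCast_eq_natCast_iff', Nat.mod_eq_of_lt (show 1 < p by omega)] at h1
    generalize (F.filter (fun i => a i = u + 1)).card = r at *
    rcases Nat.lt_or_ge r p with h | h
    · rwa [Nat.mod_eq_of_lt h] at h1
    · have : r = p := by omega
      subst this
      simp at h1
  have hsub : F.filter (fun i => ¬ a i = u + 1) ⊆
      Finset.univ.filter (fun i : Fin ℓ => a i = u) := by
    intro i hi
    simp only [Finset.mem_filter, Finset.mem_univ, true_and] at hi ⊢
    exact (hu i).resolve_right hi.2
  have := Finset.card_le_card hsub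
  omega

lemma pair_le {ℓ : ℕ} {X : Type*} (F : Fin ℓ → X) {i i' : Fin ℓ} (h : i ≠ i') :
    ({F i, F i'} : Multiset X) ≤ (Finset.univ : Finset (Fin ℓ)).val.map F := by
  have h1 : ({i, i'} : Multiset (Fin ℓ)) ≤ (Finset.univ : Finset (Fin ℓ)).val := by
    rw [Multiset.le_iff_subset]
    · intro j _; exact Finset.mem_univ j
    · simp [h]
  simpa using Multiset.map_le_map (f := F) h1

lemma final {k : ℕ} (hk1 : 2 ≤ k) (hk2 : k + 2 ≤ p) (hp5 : 5 ≤ p)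
    {ℓ v : ℕ} (hℓ : p ≤ ℓ) (hlen : ℓ + v = p - 1 + k) (a : Fin ℓ → ZMod p)
    (ha : ∑ i ∈ Finset.univ.filter (fun i : Fin ℓ => (i : ℕ) < p), a i = 1)
    (b x : Fin v → ZMod p) (hx : ∀ i, x i ≠ 0 ∧ x i ≠ 1)
    (hzs : ∀ T ≤ Multiset.replicate (p - 1) ((1, 0) : ZMod p × ZMod p) +
      ((Finset.univ : Finset (Fin ℓ)).val.map (fun i => (a i, (1 : ZMod p))) +
        (Finset.univ : Finset (Fin v)).val.map (fun i => (b i, x i))), T ≠ 0 →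
      Multiset.card T ≤ 2 * p - 1 - k → T.sum ≠ 0) :
    (∃ c : ZMod p, (Finset.univ.filter (fun i : Fin ℓ => a i = c)).card = p - 1) ∧
    (∀ c : ZMod p, (Finset.univ.filter (fun i : Fin ℓ => a i = c)).card ≤ p - 1) := by
  have hZ := step1 hk1 hk2 _ (by simp; omega) hzs
  rw [Multiset.map_add, Multiset.map_map, Multiset.map_map] at hZ
  set E := Multiset.replicate (p - k - 1) ((1, 0) : ZMod p × ZMod p) with hE
  set A := (Finset.univ : Finset (Fin ℓ)).val.map (sh ∘ fun i => (a i, (1 : ZMod p))) with hA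
  set B := (Finset.univ : Finset (Fin v)).val.map (sh ∘ fun i => (b i, x i)) with hB
  have hEc : Multiset.card E = p - k - 1 := by simp [hE]
  have hAc : Multiset.card A = ℓ := by simp [hA]
  have hBc : Multiset.card B = v := by simp [hB]
  have key : ∃ Y : Multiset (ZMod p × ZMod p), Zsf (E + A + Y) ∧
      Multiset.card (E + A + Y) = 2 * p - 2 ∧ (E + A + Y).sum.2 ≠ 0 ∧
      (E + A + Y).sum.2 ≠ -1 := by
    rcases Nat.eq_zero_or_pos v with hv | hv
    · have hB0 : B = 0 := by rw [← Multiset.card_eq_zero, hBc, hv]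
      have hsum : (E + A + 0).sum.2 = ((k - 1 : ℕ) : ZMod p) := by
        have hA2 : A.sum.2 = (ℓ : ZMod p) := by
          have : A.sum = ∑ i, (sh ∘ fun i => (a i, (1 : ZMod p))) i := rfl
          rw [this, Prod.snd_sum]; simp [sh]
        rw [add_zero, Multiset.sum_add, Prod.snd_add, hA2, hE, rep_sum,
          show ℓ = p + (k - 1) by omega]
        simp
      refine ⟨0, ?_, ?_, ?_, ?_⟩
      · rw [hB0, ← add_assoc] at hZ; exact hZ
      · simp only [Multiset.card_add, hEc, hAc, Multiset.card_zero]; omega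
      · rw [hsum]; exact small_ne hp5 _ (by omega) (by omega)
      · rw [hsum]
        intro h
        apply small_ne hp5 k (by omega) (by omega)
        have : ((k - 1 + 1 : ℕ) : ZMod p) = 0 := by push_cast; rw [h]; ring
        rwa [show k - 1 + 1 = k by omega] at this
    · have hmem : (b ⟨0, hv⟩ - 1, x ⟨0, hv⟩) ∈ B := by
        rw [hB, Multiset.mem_map]
        exact ⟨⟨0, hv⟩, Finset.mem_univ (⟨0, hv⟩ : Fin v), rfl⟩
      obtain ⟨R, hR⟩ := Multiset.exists_cons_of_mem hmem
      rw [hR] at hBc hZ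
      rw [Multiset.card_cons] at hBc
      rw [← add_assoc, Multiset.add_cons] at hZ
      have hsw := swap _ _ hZ
      rw [← Multiset.add_cons] at hsw
      refine ⟨_, hsw, ?_, ?_, ?_⟩
      · simp only [Multiset.card_add, hEc, hAc, Multiset.card_cons]; omega
      · rw [Multiset.add_cons, Multiset.sum_cons]
        intro h
        apply (hx ⟨0, hv⟩).1
        simp only [Prod.snd_add, Prod.snd_neg] at h
        linear_combination -h
      · rw [Multiset.add_cons, Multiset.sum_cons]
        intro h
        apply (hx ⟨0, hv⟩).2
        simp only [Prod.snd_add, Prod.snd_neg] at h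
        linear_combination -h
  obtain ⟨Y, hY, hYc, hY0, hY1⟩ := key
  have hd : ∀ i i', a i = a i' ∨ a i = a i' + 1 ∨ a i' = a i + 1 := by
    intro i i'
    by_cases hii : i = i'
    · left; rw [hii]
    have hle : ({(a i - 1, 1), (a i' - 1, 1), (1, 0)} : Multiset (ZMod p × ZMod p))
        ≤ E + A + Y := by
      have l1 := pair_le (sh ∘ fun i => (a i, (1 : ZMod p))) hii
      have l2 : ({(1, 0)} : Multiset (ZMod p × ZMod p)) ≤ E := by
        rw [Multiset.singleton_le, hE]
        exact Multiset.mem_replicate.2 ⟨by omega, rfl⟩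
      have l3 := (add_le_add l1 l2).trans_eq (add_comm A E)
      exact l3.trans (Multiset.le_add_right _ _)
    rcases step2 hp5 _ hYc hY _ _ hle hY0 hY1 with h | h | h
    · left; linear_combination h
    · right; left; linear_combination h
    · right; right; linear_combination h
  have hub : ∀ c : ZMod p, (Finset.univ.filter (fun i : Fin ℓ => a i = c)).card ≤ p - 1 := by
    intro c
    by_contra hlt
    obtain ⟨I, hI, hIc⟩ := Finset.exists_subset_card_eq
      (s := Finset.univ.filter (fun i : Fin ℓ => a i = c)) (n := p) (by omega)
    have hle : I.val.map (sh ∘ fun i => (a i, (1 : ZMod p))) ≤ E + (A + B) := by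
      refine le_trans (Multiset.map_le_map (Finset.val_le_iff.2 (Finset.subset_univ I))) ?_
      rw [add_left_comm]
      exact Multiset.le_add_right _ _
    refine hZ _ hle ?_ ?_
    · rw [← Multiset.card_pos, Multiset.card_map, Finset.card_val, hIc]; omega
    · have : (I.val.map (sh ∘ fun i => (a i, (1 : ZMod p)))).sum
          = ∑ i ∈ I, ((c - 1, 1) : ZMod p × ZMod p) := by
        apply Finset.sum_congr rfl
        intro i hi
        have := hI hi
        simp only [Finset.mem_filter, Finset.mem_univ, true_and] at this
        simp [sh, this]
      rw [this, Finset.sum_const, hIc]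
      ext <;> simp
  refine ⟨?_, hub⟩
  obtain ⟨c, hc⟩ := step3 hp5 hℓ a ha hd
  exact ⟨c, le_antisymm (hub c) hc⟩

end ZS

/-- Lemma: if `S = e₁^[p-1] · ∏(aᵢe₁+e₂) · ∏(bᵢe₁+xᵢe₂)` (with `xᵢ ∉ {0,1}`, `ℓ ≥ p`,
`∑_{i=1}^p aᵢ = 1`) has no nonempty zero-sum subsequence of length at most `2p-1-k`, then
the maximum multiplicity of `∏(aᵢe₁+e₂)` is `p-1`: some value `a` is taken by exactly
`p-1` of the `aᵢ`, and no value is taken by more. -/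
theorem stmt_8 (p : ℕ) (hp : p.Prime) (k : ℕ) (hk1 : 2 ≤ k) (hk2 : k ≤ p - 2)
    (e₁ e₂ : ZMod p × ZMod p)
    (hbasis : Function.Bijective (fun ab : ZMod p × ZMod p => ab.1 • e₁ + ab.2 • e₂))
    (ℓ v : ℕ) (hℓ : p ≤ ℓ) (hlen : (p - 1) + ℓ + v = 2 * p - 2 + k)
    (a : Fin ℓ → ZMod p)
    (ha : ∑ i ∈ Finset.univ.filter (fun i : Fin ℓ => (i : ℕ) < p), a i = 1)
    (b x : Fin v → ZMod p) (hx : ∀ i, x i ≠ 0 ∧ x i ≠ 1)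
    (S : Multiset (ZMod p × ZMod p))
    (hS : S = Multiset.replicate (p - 1) e₁ +
        Multiset.map (fun i => a i • e₁ + e₂) (Finset.univ : Finset (Fin ℓ)).val +
        Multiset.map (fun i => b i • e₁ + x i • e₂) (Finset.univ : Finset (Fin v)).val)
    (hzs : ∀ T ≤ S, T ≠ 0 → Multiset.card T ≤ 2 * p - 1 - k → T.sum ≠ 0) :
    (∃ c : ZMod p, (Finset.univ.filter (fun i : Fin ℓ => a i = c)).card = p - 1) ∧
    (∀ c : ZMod p, (Finset.univ.filter (fun i : Fin ℓ => a i = c)).card ≤ p - 1) := by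
  haveI : Fact p.Prime := ⟨hp⟩
  have hp5 : 5 ≤ p := by
    rcases Nat.lt_or_ge p 5 with h | h
    · have : p = 4 := by omega
      subst this
      norm_num at hp
    · exact h
  refine ZS.final hk1 (by omega) hp5 hℓ (by omega) a ha b x hx ?_
  intro T hT hT0 hTc hTs
  let φ : (ZMod p × ZMod p) →+ (ZMod p × ZMod p) :=
    { toFun := fun z => z.1 • e₁ + z.2 • e₂
      map_zero' := by simp
      map_add' := by
        intro z w
        simp only [Prod.fst_add, Prod.snd_add, add_smul]
        abel }
  refine hzs (T.map φ) ?_ (by simpa using hT0) (by simpa using hTc) ?_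
  · have h1 := Multiset.map_le_map (f := φ) hT
    rw [Multiset.map_add, Multiset.map_add, Multiset.map_replicate, Multiset.map_map,
      Multiset.map_map, ← add_assoc] at h1
    rw [hS]
    have f1 : φ (1, 0) = e₁ := by simp [φ]
    have f2 : (φ ∘ fun i => (a i, (1 : ZMod p))) = fun i => a i • e₁ + e₂ := by
      funext i; simp [φ]
    have f3 : (φ ∘ fun i => (b i, x i)) = fun i => b i • e₁ + x i • e₂ := by
      funext i; simp [φ]
    rw [f1, f2, f3] at h1
    exact h1
  · rw [← map_multiset_sum, hTs, map_zero]
end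

section
/- Let p be a prime, let k be an integer with 2 ≤ k ≤ p−2, and let S be a sequence over (ℤ/pℤ)² of length |S| = 2p−2+k having no nonempty zero-sum subsequence of length at most 2p−1−k. In G' = (ℤ/pℤ)³, identify each g = (g₁,g₂) ∈ (ℤ/pℤ)² with (g₁,g₂,0) ∈ G', let e₃ = (0,0,1), and define the sequence S' over G' as S' = ∏_{g∈S}(g + e₃) · (−e₃)^[p−k−1] · (−σ(S) − (2k−1)·e₃), where σ(S) is the sum of the terms of S and the last factor is a single term. Then S' is a minimal zero-sum sequence over G' of length 3p−2. -/
open Finset MvPolynomial in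
theorem dav_finset {ι : Type*} {p : ℕ} [Fact p.Prime] {s : Finset ι} (a b : ι → ZMod p)
    (hs : 2 * p - 1 ≤ #s) :
    ∃ t ⊆ s, t.Nonempty ∧ ∑ i ∈ t, a i = 0 ∧ ∑ i ∈ t, b i = 0 := by
  classical
  have hp2 := (Fact.out : p.Prime).two_le
  let F : (ι → ZMod p) → MvPolynomial s (ZMod p) := fun a => ∑ i : s, a i • X i ^ (p - 1)
  have hF : ∀ a, (F a).totalDegree ≤ p - 1 := by
    intro a
    apply totalDegree_finsetSum_le
    rintro i _
    exact (totalDegree_smul_le ..).trans (totalDegree_X_pow ..).le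
  set N := Fintype.card {x // eval x (F a) = 0 ∧ eval x (F b) = 0}
  let zero_sol : {x // eval x (F a) = 0 ∧ eval x (F b) = 0} :=
    ⟨0, by simp [F, map_sum, (Fact.out : p.Prime).one_lt, tsub_eq_zero_iff_le]⟩
  have hN₀ : 0 < N := @Fintype.card_pos _ _ ⟨zero_sol⟩
  have hpN : p ∣ N := char_dvd_card_solutions_of_add_lt p (by
    have := hF a
    have := hF b
    rw [Fintype.card_coe]
    omega)
  obtain ⟨x, hx⟩ := Fintype.exists_ne_of_one_lt_card ((Fact.out : p.Prime).one_lt.trans_le <|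
    Nat.le_of_dvd hN₀ hpN) zero_sol
  refine ⟨({a | x.1 a ≠ 0} : Finset _).map ⟨(↑), Subtype.val_injective⟩, ?_, ?_, ?_, ?_⟩
  · simp +contextual [subset_iff]
  · rw [Finset.map_nonempty]
    rw [← Subtype.coe_ne_coe, Function.ne_iff] at hx
    exact hx.imp (fun a ha ↦ mem_filter.2 ⟨Finset.mem_attach _ _, ha⟩)
  · simpa [F, ZMod.pow_card_sub_one, Finset.sum_filter] using x.2.1
  · simpa [F, ZMod.pow_card_sub_one, Finset.sum_filter] using x.2.2

theorem dav_multiset {p : ℕ} [Fact p.Prime] (s : Multiset (ZMod p × ZMod p))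
    (hs : 2 * p - 1 ≤ Multiset.card s) : ∃ t ≤ s, t ≠ 0 ∧ t.sum = 0 := by
  obtain ⟨t, hts, hne, h1, h2⟩ := dav_finset (s := s.toEnumFinset)
    (fun x => x.1.1) (fun x => x.1.2) (by simpa using hs)
  refine ⟨t.1.map Prod.fst, Multiset.map_fst_le_of_subset_toEnumFinset hts, ?_, ?_⟩
  · simpa using hne.ne_empty
  · change ∑ i ∈ t, i.1 = 0
    ext
    · simpa [Prod.fst_sum] using h1
    · simpa [Prod.snd_sum] using h2

theorem le_add_decomp {α : Type*} {T X Y : Multiset α} (h : T ≤ X + Y) :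
    ∃ X' ≤ X, ∃ Y' ≤ Y, T = X' + Y' := by
  classical
  refine ⟨T ∩ X, Multiset.inter_le_right, T - X, Multiset.sub_le_iff_le_add'.2 h, ?_⟩
  rw [← Multiset.sub_inter, add_tsub_cancel_of_le Multiset.inter_le_left]

theorem key {p : ℕ} (hp : p.Prime) (k : ℕ) (hk1 : 2 ≤ k) (hk2 : k ≤ p - 2)
    (S : Multiset (ZMod p × ZMod p)) (hlen : Multiset.card S = 2 * p - 2 + k)
    (hzs : ∀ T ≤ S, T ≠ 0 → Multiset.card T ≤ 2 * p - 1 - k → T.sum ≠ 0)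
    (W : Multiset (ZMod p × ZMod p × ZMod p))
    (hW : W ≤ Multiset.map (fun g : ZMod p × ZMod p => (g.1, g.2, (1 : ZMod p))) S +
        Multiset.replicate (p - k - 1) ((0, 0, -1) : ZMod p × ZMod p × ZMod p))
    (h0 : W.sum = 0) : W = 0 := by
  have : Fact p.Prime := ⟨hp⟩
  have hp2 := hp.two_le
  obtain ⟨A, hA, R, hR, rfl⟩ := le_add_decomp hW
  obtain ⟨j, hj, rfl⟩ := Multiset.le_replicate_iff.1 hR
  obtain ⟨U, hU, rfl⟩ : ∃ U ≤ S, A =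
      Multiset.map (fun g : ZMod p × ZMod p => (g.1, g.2, (1 : ZMod p))) U := by
    refine ⟨A.map (fun x => (x.1, x.2.1)), ?_, ?_⟩
    · have := Multiset.map_le_map (f := fun x : ZMod p × ZMod p × ZMod p => (x.1, x.2.1)) hA
      simpa [Multiset.map_map, Function.comp_def] using this
    · rw [Multiset.map_map]
      conv_lhs => rw [← Multiset.map_id A]
      apply Multiset.map_congr rfl
      intro x hx
      have := Multiset.mem_of_le hA hx
      rw [Multiset.mem_map] at this
      obtain ⟨g, -, rfl⟩ := this
      rfl
  have hsum : ∀ V : Multiset (ZMod p × ZMod p),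
      (Multiset.map (fun g : ZMod p × ZMod p => (g.1, g.2, (1 : ZMod p))) V).sum
        = (V.sum.1, V.sum.2, (Multiset.card V : ZMod p)) := by
    intro V
    induction V using Multiset.induction_on with
    | empty => simp; rfl
    | cons a s ih => simp [ih, add_comm]
  rw [Multiset.sum_add, hsum, Multiset.sum_replicate] at h0
  simp only [Prod.smul_mk, Prod.mk_add_mk, Prod.mk_eq_zero, smul_zero, add_zero] at h0
  obtain ⟨h1, h2, h3⟩ := h0
  have hU0 : U.sum = 0 := Prod.ext h1 h2
  have h4 : ((Multiset.card U : ℕ) : ZMod p) = (j : ℕ) := by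
    simp only [smul_neg, nsmul_eq_mul, mul_one] at h3
    exact add_neg_eq_zero.1 h3
  rw [ZMod.natCast_eq_natCast_iff] at h4
  have hjp : j % p = j := Nat.mod_eq_of_lt (by omega)
  unfold Nat.ModEq at h4
  rw [hjp] at h4
  by_cases hne : U = 0
  · subst hne
    simp at h4
    simp [← h4]
  exfalso
  have hbig : ∀ V ≤ S, V ≠ 0 → V.sum = 0 → 2 * p - k ≤ Multiset.card V := by
    intro V hV hV0 hVs
    by_contra hc
    exact hzs V hV hV0 (by omega) hVs
  have hc1 := hbig U hU hne hU0
  have hc2 := Multiset.card_le_card hU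
  have hdiv := Nat.div_add_mod (Multiset.card U) p
  rw [h4] at hdiv
  have hq : Multiset.card U / p = 2 := by
    have h5 : 1 < Multiset.card U / p := by
      by_contra hc
      have : p * (Multiset.card U / p) ≤ p * 1 := Nat.mul_le_mul_left _ (by omega)
      omega
    have h6 : Multiset.card U / p < 3 := by
      rw [Nat.div_lt_iff_lt_mul hp.pos]; omega
    omega
  rw [hq] at hdiv
  obtain ⟨a, ha⟩ := Multiset.exists_mem_of_ne_zero hne
  obtain ⟨U', rfl⟩ := Multiset.exists_cons_of_mem ha
  rw [Multiset.card_cons] at *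
  obtain ⟨V, hV, hV0, hVs⟩ := dav_multiset U' (by omega)
  obtain ⟨V', rfl⟩ := Multiset.le_iff_exists_add.1 hV
  have e : a ::ₘ (V + V') = V + (a ::ₘ V') := by simp
  rw [e] at hU hU0
  rw [Multiset.sum_add, hVs, zero_add] at hU0
  have b1 := hbig V ((Multiset.le_add_right _ _).trans hU) hV0 hVs
  have b2 := hbig _ ((Multiset.le_add_left _ _).trans hU) (Multiset.cons_ne_zero) hU0
  rw [Multiset.card_cons] at b2
  rw [Multiset.card_add] at *
  omega


/-- Claim A: lifting `S` over `(ℤ/pℤ)²` to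
`S' = ∏_{g∈S}(g+e₃) · (-e₃)^[p-k-1] · (-σ(S)-(2k-1)e₃)` in `(ℤ/pℤ)³` produces a minimal
zero-sum sequence of length `3p-2`. -/
theorem stmt_9 (p : ℕ) (hp : p.Prime) (k : ℕ) (hk1 : 2 ≤ k) (hk2 : k ≤ p - 2)
    (S : Multiset (ZMod p × ZMod p)) (hlen : Multiset.card S = 2 * p - 2 + k)
    (hzs : ∀ T ≤ S, T ≠ 0 → Multiset.card T ≤ 2 * p - 1 - k → T.sum ≠ 0)
    (S' : Multiset (ZMod p × ZMod p × ZMod p))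
    (hS' : S' = Multiset.map (fun g : ZMod p × ZMod p => (g.1, g.2, (1 : ZMod p))) S +
        Multiset.replicate (p - k - 1) ((0, 0, -1) : ZMod p × ZMod p × ZMod p) +
        {(-(S.sum.1), -(S.sum.2), -((2 * k - 1 : ℕ) : ZMod p))}) :
    Multiset.card S' = 3 * p - 2 ∧ S' ≠ 0 ∧ S'.sum = 0 ∧
      ∀ T < S', T ≠ 0 → T.sum ≠ 0 := by
  have hp2 := hp.two_le
  have hsum : ∀ V : Multiset (ZMod p × ZMod p),
      (Multiset.map (fun g : ZMod p × ZMod p => (g.1, g.2, (1 : ZMod p))) V).sum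
        = (V.sum.1, V.sum.2, (Multiset.card V : ZMod p)) := by
    intro V
    induction V using Multiset.induction_on with
    | empty => simp; rfl
    | cons a s ih => simp [ih, add_comm]
  have hS0 : S'.sum = 0 := by
    rw [hS', Multiset.sum_add, Multiset.sum_add, hsum, Multiset.sum_replicate,
      Multiset.sum_singleton, hlen]
    have h : ((2 * p - 2 + k : ℕ) : ZMod p) =
        ((p - k - 1 : ℕ) : ZMod p) + ((2 * k - 1 : ℕ) : ZMod p) := by
      rw [← Nat.cast_add, show 2 * p - 2 + k = p + (p - k - 1 + (2 * k - 1)) by omega,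
        Nat.cast_add p, CharP.cast_eq_zero, zero_add]
    simp only [Prod.smul_mk, Prod.mk_add_mk, Prod.mk_eq_zero, smul_zero, add_zero, h]
    refine ⟨by ring, by ring, ?_⟩
    rw [nsmul_eq_mul]
    ring
  refine ⟨?_, ?_, hS0, ?_⟩
  · subst hS'
    simp [hlen]
    omega
  · subst hS'
    simp
  · intro T hT hT0 hTs
    have hle := hT.le
    rw [hS'] at hle
    obtain ⟨X, hX, Y, hY, rfl⟩ := le_add_decomp hle
    rcases Multiset.le_singleton.1 hY with rfl | rfl
    · rw [add_zero] at hTs hT0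
      exact hT0 (key hp k hk1 hk2 S hlen hzs X hX hTs)
    · obtain ⟨Z, hZ⟩ := Multiset.le_iff_exists_add.1 hX
      have e : S' = (X + {(-(S.sum.1), -(S.sum.2), -((2 * k - 1 : ℕ) : ZMod p))}) + Z := by
        rw [hS', hZ, add_right_comm]
      have hZs : Z.sum = 0 := by
        rw [e, Multiset.sum_add, hTs, zero_add] at hS0
        exact hS0
      have hZ0 := key hp k hk1 hk2 S hlen hzs Z (hZ ▸ Multiset.le_add_left _ _) hZs
      rw [hZ0, add_zero] at e
      exact hT.ne e.symm
end

section
/- Let p be a prime, let G be a finite abelian p-group, let ℓ ≥ 1, and let g : Fin ℓ → G be a sequence over G. Suppose that every sequence over G of length ℓ contains a nonempty zero-sum subsequence (i.e., ℓ ≥ D(G), the Davenport constant of G). For each i ∈ [0, ℓ], let N^i(g) denote the number of subsets I ⊆ Fin ℓ with |I| = i and ∑_{j∈I} g(j) = 0 (so N^0(g) = 1). Then ∑_{i=0}^{ℓ} (−1)^i · N^i(g) ≡ 0 (mod p). -/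
theorem aux_nil {S ι : Type*} [CommSemiring S] (J : ι → S) (q : ι → ℕ) (hq : ∀ i, 1 ≤ q i)
    (h : ∀ i, J i ^ q i = 0) (s : Finset ι) :
    (∑ i ∈ s, J i) ^ (∑ i ∈ s, (q i - 1) + 1) = 0 := by
  classical
  induction s using Finset.induction_on with
  | empty => simp
  | insert a s ha ih =>
    rw [Finset.sum_insert ha, Finset.sum_insert ha]
    refine (Commute.all _ _).add_pow_eq_zero_of_add_le_succ_of_pow_eq_zero (h a) ih ?_
    have := hq a
    omega

theorem aux_len {ι : Type*} [Fintype ι] [DecidableEq ι] (n : ι → ℕ)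
    (ℓ : ℕ)
    (hD : ∀ h : Fin ℓ → (∀ i, ZMod (n i)), ∃ I : Finset (Fin ℓ), I.Nonempty ∧ ∑ j ∈ I, h j = 0) :
    ∑ i, (n i - 1) + 1 ≤ ℓ := by
  by_contra hlt
  have hc : Fintype.card (Fin ℓ) ≤ Fintype.card (Σ i, Fin (n i - 1)) := by
    simp; omega
  obtain ⟨f⟩ := Function.Embedding.nonempty_of_card_le hc
  obtain ⟨I, ⟨j0, hj0⟩, hI⟩ := hD (fun j => Pi.single (f j).1 1)
  have h1 := congrFun hI (f j0).1
  rw [Finset.sum_apply] at h1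
  have h2 : ∑ j ∈ I, (Pi.single (f j).1 1 : ∀ i, ZMod (n i)) (f j0).1 =
      ((I.filter (fun j => (f j).1 = (f j0).1)).card : ZMod (n (f j0).1)) := by
    rw [Finset.card_filter, Nat.cast_sum]
    refine Finset.sum_congr rfl fun j _ => ?_
    generalize (f j).1 = a
    generalize (f j0).1 = b
    by_cases hab : a = b
    · subst hab; simp
    · simp [hab, Pi.single_apply, Ne.symm hab]
  rw [h2, Pi.zero_apply, ZMod.natCast_eq_zero_iff] at h1
  have hpos : 0 < (I.filter (fun j => (f j).1 = (f j0).1)).card :=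
    Finset.card_pos.2 ⟨j0, by simp [hj0]⟩
  have hle : (I.filter (fun j => (f j).1 = (f j0).1)).card ≤ n (f j0).1 - 1 := by
    calc _ = ((I.filter (fun j => (f j).1 = (f j0).1)).map f).card := by simp
      _ ≤ ((Finset.univ : Finset (Fin (n (f j0).1 - 1))).image
            (fun x => (⟨(f j0).1, x⟩ : Σ i, Fin (n i - 1)))).card := by
          apply Finset.card_le_card
          intro y hy
          simp only [Finset.mem_map, Finset.mem_filter] at hy
          obtain ⟨j, ⟨_, hj⟩, rfl⟩ := hy
          generalize f j = z at *
          obtain ⟨a, x⟩ := z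
          dsimp only at hj
          subst hj
          simp
      _ ≤ _ := Finset.card_image_le.trans (by simp)
  have := Nat.le_of_dvd hpos h1
  omega

theorem aux_coeff (p : ℕ) (G : Type*) [AddCommGroup G] [DecidableEq G]
    (ℓ : ℕ) (g : Fin ℓ → G)
    (hz : ∏ j, (AddMonoidAlgebra.single (g j) (1 : ZMod p) - 1) = 0) :
    (p : ℤ) ∣ ∑ i ∈ Finset.range (ℓ + 1), (-1 : ℤ) ^ i *
      ((Finset.univ.filter (fun I : Finset (Fin ℓ) =>
        I.card = i ∧ ∑ j ∈ I, g j = 0)).card : ℤ) := by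
  have h1 : ∏ j, (1 + AddMonoidAlgebra.single (g j) (-1 : ZMod p)) = 0 := by
    have : ∀ j, (1 + AddMonoidAlgebra.single (g j) (-1 : ZMod p)) =
        (-1) * (AddMonoidAlgebra.single (g j) (1 : ZMod p) - 1) := by
      intro j
      rw [AddMonoidAlgebra.single_neg]; ring
    simp_rw [this]
    rw [Finset.prod_mul_distrib, hz, mul_zero]
  rw [Finset.prod_one_add] at h1
  simp only [AddMonoidAlgebra.prod_single] at h1
  have h2 := congrArg (fun x => x.coeff 0) h1
  simp only [AddMonoidAlgebra.coeff_sum, AddMonoidAlgebra.coeff_single, Finset.prod_const,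
    Finsupp.coe_finset_sum, Finset.sum_apply, Finsupp.single_apply, AddMonoidAlgebra.coeff_zero,
    Finsupp.coe_zero, Pi.zero_apply, Finset.powerset_univ] at h2
  rw [← CharP.intCast_eq_zero_iff (ZMod p), ← h2]
  push_cast
  rw [← Finset.sum_fiberwise_of_maps_to (s := Finset.univ) (t := Finset.range (ℓ + 1))
    (g := Finset.card)]
  · refine Finset.sum_congr rfl fun i _ => ?_
    rw [← Finset.filter_filter, Finset.card_filter, Nat.cast_sum, Finset.mul_sum]
    refine Finset.sum_congr rfl fun I hI => ?_
    rw [← (Finset.mem_filter.1 hI).2]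
    split_ifs <;> simp
  · intro I _
    have := Finset.card_le_univ I
    simp at this ⊢; omega


/-- Proposition 5.5.8: for a finite abelian `p`-group `G` and a sequence `g` of length
`ℓ ≥ D(G)`, the alternating sum `∑ (-1)^i N^i(g)` of the counts of zero-sum subsets of
each size is divisible by `p`. -/
theorem stmt_11 (p : ℕ) (hp : p.Prime) (G : Type*) [AddCommGroup G] [Fintype G]
    [DecidableEq G] (hpG : ∃ n : ℕ, Fintype.card G = p ^ n)
    (ℓ : ℕ) (hℓ : 1 ≤ ℓ) (g : Fin ℓ → G)
    (hD : ∀ h : Fin ℓ → G, ∃ I : Finset (Fin ℓ), I.Nonempty ∧ ∑ j ∈ I, h j = 0) :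
    (p : ℤ) ∣ ∑ i ∈ Finset.range (ℓ + 1), (-1 : ℤ) ^ i *
      ((Finset.univ.filter (fun I : Finset (Fin ℓ) =>
        I.card = i ∧ ∑ j ∈ I, g j = 0)).card : ℤ) := by
  classical
  obtain ⟨m, hm⟩ := hpG
  obtain ⟨ι, _, n, hn, ⟨e0⟩⟩ := AddCommGroup.equiv_directSum_zmod_of_finite' G
  let e : G ≃+ (∀ i, ZMod (n i)) := e0.trans (DirectSum.addEquivProd _)
  haveI : Fact p.Prime := ⟨hp⟩
  have hlen : ∑ i, (n i - 1) + 1 ≤ ℓ := by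
    refine aux_len n ℓ fun h => ?_
    obtain ⟨I, hI, hs⟩ := hD (fun j => e.symm (h j))
    refine ⟨I, hI, ?_⟩
    rw [← map_sum] at hs
    exact e.symm.map_eq_zero_iff.1 hs
  haveI : ∀ i, NeZero (n i) := fun i => ⟨by have := hn i; omega⟩
  have hnp : ∀ i, ∃ k, n i = p ^ k := by
    intro i
    have hc : Fintype.card G = ∏ i, n i := by
      rw [Fintype.card_congr e.toEquiv]; simp [ZMod.card]
    have : n i ∣ p ^ m := by
      rw [← hm, hc]; exact Finset.dvd_prod_of_mem _ (Finset.mem_univ i)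
    obtain ⟨k, _, hk⟩ := (Nat.dvd_prime_pow hp).1 this
    exact ⟨k, hk⟩
  apply aux_coeff p G ℓ g
  let u : ι → G := fun i => e.symm (Pi.single i 1)
  let y : ι → AddMonoidAlgebra (ZMod p) G := fun i => AddMonoidAlgebra.single (u i) 1 - 1
  have hu : ∀ i, n i • u i = 0 := by
    intro i
    change n i • e.symm (Pi.single i 1) = 0
    rw [← map_nsmul, ← Pi.single_smul]
    simp
  haveI : CharP (AddMonoidAlgebra (ZMod p) G) p := by
    exact charP_of_injective_algebraMap (FaithfulSMul.algebraMap_injective (ZMod p) _) p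
  have hy : ∀ i, y i ^ n i = 0 := by
    intro i
    obtain ⟨k, hk⟩ := hnp i
    have h0 := hu i
    rw [hk] at h0 ⊢
    change (AddMonoidAlgebra.single (u i) 1 - 1) ^ p ^ k = 0
    rw [sub_pow_char_pow, AddMonoidAlgebra.single_pow, h0, one_pow, one_pow,
      AddMonoidAlgebra.one_def, sub_self]
  let J : Ideal (AddMonoidAlgebra (ZMod p) G) := ∑ i, Ideal.span {y i}
  have hJ : J ^ ℓ = 0 := by
    refine pow_eq_zero_of_le hlen (aux_nil _ n (fun i => (hn i).le) (fun i => ?_) _)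
    rw [Ideal.span_singleton_pow, hy]
    simp
  have hmem : ∀ a : G, AddMonoidAlgebra.single a (1 : ZMod p) - 1 ∈ J := by
    let M : AddSubmonoid G :=
      { carrier := {a | AddMonoidAlgebra.single a (1 : ZMod p) - 1 ∈ J}
        zero_mem' := by simp [← AddMonoidAlgebra.one_def]
        add_mem' := by
          intro a b ha hb
          have : AddMonoidAlgebra.single (a + b) (1 : ZMod p) - 1 =
            AddMonoidAlgebra.single a 1 * (AddMonoidAlgebra.single b (1 : ZMod p) - 1) +
              (AddMonoidAlgebra.single a (1 : ZMod p) - 1) := by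
            rw [mul_sub, AddMonoidAlgebra.single_mul_single]; simp
          rw [Set.mem_setOf_eq, this]
          exact J.add_mem (J.mul_mem_left _ hb) ha }
    intro a
    change a ∈ M
    have ha : a = ∑ i, (e a i).val • u i := by
      apply e.injective
      rw [map_sum]
      conv_lhs => rw [← Finset.univ_sum_single (e a)]
      refine Finset.sum_congr rfl fun i _ => ?_
      rw [map_nsmul]
      change _ = _ • e (e.symm _)
      rw [e.apply_symm_apply, ← Pi.single_smul]
      simp
    rw [ha]
    refine M.sum_mem fun i _ => M.nsmul_mem ?_ _
    change y i ∈ J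
    have hle : Ideal.span {y i} ≤ J := by
      change _ ≤ ∑ i, Ideal.span {y i}
      rw [Ideal.sum_eq_sup]
      exact Finset.le_sup (f := fun i => Ideal.span {y i}) (Finset.mem_univ i)
    exact hle (Ideal.mem_span_singleton_self _)
  have hprod := Ideal.prod_mem_prod (s := Finset.univ) (I := fun _ : Fin ℓ => J)
    (x := fun j => AddMonoidAlgebra.single (g j) (1 : ZMod p) - 1) (fun j _ => hmem (g j))
  rw [Finset.prod_const, Finset.card_univ, Fintype.card_fin, hJ] at hprod
  simpa using hprod
end

section
/- Let G be an abelian group and let S be a zero-sum free sequence over G, i.e., no nonempty sub-multiset of S has sum 0. Then |Σ(S)| ≥ |S| + |supp(S)| − 1, where Σ(S) is the set of all sums of nonempty sub-multisets of S and supp(S) is the set of distinct elements occurring in S. -/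
/-- All subsums, including the empty one. -/
def subsums {G : Type*} [AddCommGroup G] [DecidableEq G] (S : Multiset G) : Finset G :=
  (S.powerset.map Multiset.sum).toFinset

theorem mem_subsums {G : Type*} [AddCommGroup G] [DecidableEq G] {S : Multiset G} {x : G} :
    x ∈ subsums S ↔ ∃ T ≤ S, T.sum = x := by
  simp [subsums]

theorem sum_notMem_sub {G : Type*} [AddCommGroup G] [DecidableEq G] {T : Multiset G} {a : G}
    (h : ∀ U ≤ a ::ₘ T, U ≠ 0 → U.sum ≠ 0) : (a ::ₘ T).sum ∉ subsums T := by
  rw [mem_subsums]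
  rintro ⟨U, hU, hs⟩
  refine h (a ::ₘ (T - U)) ?_ (by simp) ?_
  · exact Multiset.cons_le_cons a (Multiset.sub_le_self T U)
  · have h1 : (T - U).sum + U.sum = T.sum := by
      rw [← Multiset.sum_add, Multiset.sub_add_cancel hU]
    rw [Multiset.sum_cons] at hs ⊢
    rw [hs, ← sub_eq_zero] at h1
    rw [← h1]
    abel

theorem subsums_mono {G : Type*} [AddCommGroup G] [DecidableEq G] {T S : Multiset G}
    (h : T ≤ S) : subsums T ⊆ subsums S := by
  intro x hx
  rw [mem_subsums] at hx ⊢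
  obtain ⟨U, hU, rfl⟩ := hx
  exact ⟨U, hU.trans h, rfl⟩

theorem subsums_erase {G : Type*} [AddCommGroup G] [DecidableEq G] {T : Multiset G} {a : G}
    (h : ∀ U ≤ a ::ₘ T, U ≠ 0 → U.sum ≠ 0) :
    subsums T ⊆ (subsums (a ::ₘ T)).erase (a ::ₘ T).sum := by
  intro x hx
  rw [Finset.mem_erase]
  refine ⟨?_, subsums_mono (Multiset.le_cons_self T a) hx⟩
  rintro rfl
  exact sum_notMem_sub h hx

theorem card_step {G : Type*} [AddCommGroup G] [DecidableEq G] {T : Multiset G} {a : G}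
    (h : ∀ U ≤ a ::ₘ T, U ≠ 0 → U.sum ≠ 0) :
    (subsums T).card + 1 ≤ (subsums (a ::ₘ T)).card := by
  have h1 := Finset.card_le_card (subsums_erase h)
  have h2 : (a ::ₘ T).sum ∈ subsums (a ::ₘ T) := mem_subsums.2 ⟨_, le_rfl, rfl⟩
  have := Finset.card_erase_add_one h2
  omega

theorem fail_step {G : Type*} [AddCommGroup G] [DecidableEq G] {S T : Multiset G} {a : G}
    (hS : S = a ::ₘ T) (h : ∀ U ≤ S, U ≠ 0 → U.sum ≠ 0)
    (hc : (subsums S).card < (subsums T).card + 2) (x : G) :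
    x ∈ (subsums S).erase S.sum ↔ x + a ∈ (subsums S).erase 0 := by
  subst hS
  have h2 : (a ::ₘ T).sum ∈ subsums (a ::ₘ T) := mem_subsums.2 ⟨_, le_rfl, rfl⟩
  have h0 : (0 : G) ∈ subsums (a ::ₘ T) := mem_subsums.2 ⟨0, by simp, rfl⟩
  have e2 := Finset.card_erase_add_one h2
  have e0 := Finset.card_erase_add_one h0
  have hT : subsums T = (subsums (a ::ₘ T)).erase (a ::ₘ T).sum :=
    Finset.eq_of_subset_of_card_le (subsums_erase h) (by omega)
  have hI : (subsums T).image (· + a) = (subsums (a ::ₘ T)).erase 0 := by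
    apply Finset.eq_of_subset_of_card_le
    · intro y hy
      obtain ⟨z, hz, rfl⟩ := Finset.mem_image.1 hy
      obtain ⟨U, hU, rfl⟩ := mem_subsums.1 hz
      have hle := Multiset.cons_le_cons a hU
      have hs : (a ::ₘ U).sum = U.sum + a := by rw [Multiset.sum_cons, add_comm]
      rw [Finset.mem_erase]
      refine ⟨?_, mem_subsums.2 ⟨_, hle, hs⟩⟩
      have := h _ hle (by simp)
      rwa [hs] at this
    · rw [Finset.card_image_of_injective _ (add_left_injective a)]
      omega
  rw [← hT, ← hI]
  simp

theorem main_bound {G : Type*} [AddCommGroup G] [DecidableEq G] (n : ℕ) :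
    ∀ S : Multiset G, Multiset.card S = n → (∀ T ≤ S, T ≠ 0 → T.sum ≠ 0) →
    Multiset.card S + S.toFinset.card ≤ (subsums S).card := by
  induction n with
  | zero =>
    intro S hS _
    rw [Multiset.card_eq_zero] at hS
    subst hS
    simp
  | succ n ih =>
    intro S hS h
    have step : ∀ a T, S = a ::ₘ T → Multiset.card T + T.toFinset.card ≤ (subsums T).card := by
      intro a T hT
      refine ih T ?_ ?_
      · rw [hT, Multiset.card_cons] at hS; omega
      · intro U hU
        exact h U (hU.trans (hT ▸ Multiset.le_cons_self T a))
    by_cases hrep : ∃ a T, S = a ::ₘ T ∧ a ∈ T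
    · obtain ⟨a, T, rfl, ha⟩ := hrep
      have h1 := step a T rfl
      have h2 := card_step h
      have h3 : (a ::ₘ T).toFinset = T.toFinset := by
        rw [Multiset.toFinset_cons, Finset.insert_eq_self]; simpa using ha
      rw [h3, Multiset.card_cons]
      omega
    · have tf : ∀ a T, S = a ::ₘ T → S.toFinset.card ≤ T.toFinset.card + 1 := by
        rintro a T rfl
        rw [Multiset.toFinset_cons]
        exact Finset.card_insert_le _ _
      obtain ⟨a, ha⟩ := Multiset.card_pos_iff_exists_mem.1 (show 0 < Multiset.card S by omega)
      obtain ⟨T, hT⟩ := Multiset.exists_cons_of_mem ha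
      rcases Multiset.empty_or_exists_mem T with hT0 | ⟨b, hb⟩
      · subst hT0
        have h1 := card_step (T := 0) (a := a) (by rw [← hT]; exact h)
        rw [← hT] at h1
        have h2 := tf a 0 hT
        have h3 : (subsums (0 : Multiset G)).card = 1 := by simp [subsums]
        have h4 : Multiset.card S = 1 := by rw [hT]; simp
        simp at h2
        omega
      · have hbS : b ∈ S := by rw [hT]; exact Multiset.mem_cons_of_mem hb
        obtain ⟨T', hT'⟩ := Multiset.exists_cons_of_mem hbS
        have hab : a ≠ b := by
          rintro rfl
          exact hrep ⟨a, T, hT, hb⟩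
        have c1 : Multiset.card S = Multiset.card T + 1 := by rw [hT]; simp
        have c2 : Multiset.card S = Multiset.card T' + 1 := by rw [hT']; simp
        have s1 := step a T hT
        have s2 := step b T' hT'
        have t1 := tf a T hT
        have t2 := tf b T' hT'
        by_contra hlt
        have fa := fail_step hT h (by omega)
        have fb := fail_step hT' h (by omega)
        have h0 : (0 : G) ∈ (subsums S).erase S.sum := by
          rw [Finset.mem_erase]
          refine ⟨(h S le_rfl ?_).symm, mem_subsums.2 ⟨0, by simp, rfl⟩⟩
          rw [hT]; simp
        have k1 := (fa 0).1 h0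
        have k2 : a - b ∈ (subsums S).erase S.sum := by
          rw [fb]; simpa using k1
        have k3 : a - b ∈ (subsums S).erase 0 :=
          Finset.mem_erase.2 ⟨sub_ne_zero.2 hab, Finset.mem_of_mem_erase k2⟩
        have k4 : -b ∈ (subsums S).erase S.sum := by
          rw [fa, neg_add_eq_sub]; exact k3
        have k5 := (fb _).1 k4
        simp at k5

/-- Lemma: for a zero-sum free sequence `S` over an abelian group `G`,
`|Σ(S)| ≥ |S| + |supp(S)| - 1`. -/
theorem stmt_12 (G : Type*) [AddCommGroup G] [DecidableEq G]
    (S : Multiset G) (hzsf : ∀ T ≤ S, T ≠ 0 → T.sum ≠ 0) :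
    Multiset.card S + S.toFinset.card - 1 ≤
      Set.ncard {x : G | ∃ T ≤ S, T ≠ 0 ∧ T.sum = x} := by
  have hset : {x : G | ∃ T ≤ S, T ≠ 0 ∧ T.sum = x} = ((subsums S).erase 0 : Finset G) := by
    ext x
    rw [Finset.mem_coe, Finset.mem_erase, mem_subsums, Set.mem_setOf_eq]
    constructor
    · rintro ⟨T, hT, h0, rfl⟩
      exact ⟨hzsf T hT h0, T, hT, rfl⟩
    · rintro ⟨hx, T, hT, rfl⟩
      refine ⟨T, hT, ?_, rfl⟩
      rintro rfl
      simp at hx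
  have h0 : (0 : G) ∈ subsums S := mem_subsums.2 ⟨0, by simp, rfl⟩
  rw [hset, Set.ncard_coe_finset]
  have := Finset.card_erase_add_one h0
  have := main_bound _ S rfl hzsf
  omega
end
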